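/- For every q ≥ 2 there exists a constant C(q) > 0 such that for every p ∈ [2, ∞], every dimension d ∈ ℕ and every f ∈ ℓ^p(ℤ^d), one has ‖ sup_{t ∈ 𝔻} |𝓜_t^q f| ‖_{ℓ^p(ℤ^d)} ≤ C(q) ‖f‖_{ℓ^p(ℤ^d)}, where the supremum is over all dyadic t. -/

import Mathlib

open scoped ENNReal NNReal

open Classical in
noncomputable def latticeBall (q : ℝ) (d : ℕ) (t : ℝ) : Finset (Fin d → ℤ) :=
  (Finset.Icc (fun _ => -(⌈t⌉₊ : ℤ)) (fun _ => (⌈t⌉₊ : ℤ))).filter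
    (fun x => ∑ i, |(x i : ℝ)| ^ q ≤ t ^ q)

noncomputable def avgOp (q : ℝ) (d : ℕ) (t : ℝ) (f : (Fin d → ℤ) → ℂ) (x : Fin d → ℤ) : ℂ :=
  ((latticeBall q d t).card : ℂ)⁻¹ * ∑ y ∈ latticeBall q d t, f (x - y)

noncomputable def lpNorm (p : ℝ≥0∞) {d : ℕ} (g : (Fin d → ℤ) → ℝ≥0∞) : ℝ≥0∞ :=
  if p = ∞ then ⨆ x, g x else (∑' x, g x ^ p.toReal) ^ (1 / p.toReal)

section Aux

open Finset



/-- Lattice points `x ∈ ℤ^m` with `∑ |x_i|^q ≤ M`. -/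
noncomputable def Bl (q : ℝ) (m : ℕ) (M : ℝ) : Finset (Fin m → ℤ) :=
  open Classical in
  (Finset.Icc (fun _ => -(⌈M⌉₊ : ℤ)) (fun _ => (⌈M⌉₊ : ℤ))).filter
    (fun x => ∑ i, |(x i : ℝ)| ^ q ≤ M)

lemma rpow_q_nonneg (q : ℝ) (a : ℤ) : 0 ≤ |(a : ℝ)| ^ q := Real.rpow_nonneg (abs_nonneg _) _

lemma abs_le_rpow_q {q : ℝ} (hq : 2 ≤ q) (a : ℤ) : |(a : ℝ)| ≤ |(a : ℝ)| ^ q := by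
  rcases eq_or_ne a 0 with rfl | h
  · simp; rw [Real.zero_rpow]; linarith
  · have h1 : (1 : ℝ) ≤ |(a : ℝ)| := by exact_mod_cast Int.one_le_abs h
    calc |(a : ℝ)| = |(a : ℝ)| ^ (1 : ℝ) := by simp
      _ ≤ _ := Real.rpow_le_rpow_of_exponent_le h1 (by linarith)

lemma sq_le_rpow_q {q : ℝ} (hq : 2 ≤ q) (a : ℤ) : (a : ℝ) ^ 2 ≤ |(a : ℝ)| ^ q := by
  rcases eq_or_ne a 0 with rfl | h
  · simp; rw [Real.zero_rpow]; linarith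
  · have h1 : (1 : ℝ) ≤ |(a : ℝ)| := by exact_mod_cast Int.one_le_abs h
    calc (a : ℝ) ^ 2 = |(a : ℝ)| ^ (2 : ℝ) := by simp
      _ ≤ _ := Real.rpow_le_rpow_of_exponent_le h1 (by linarith)

lemma one_le_rpow_q {q : ℝ} (hq : 2 ≤ q) {a : ℤ} (h : a ≠ 0) : 1 ≤ |(a : ℝ)| ^ q := by
  have h1 : (1 : ℝ) ≤ |(a : ℝ)| := by exact_mod_cast Int.one_le_abs h
  exact h1.trans (abs_le_rpow_q hq a)

lemma mem_Bl {q : ℝ} (hq : 2 ≤ q) {m : ℕ} {M : ℝ} {x : Fin m → ℤ} :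
    x ∈ Bl q m M ↔ ∑ i, |(x i : ℝ)| ^ q ≤ M := by
  classical
  unfold Bl
  rw [Finset.mem_filter, and_iff_right_iff_imp]
  intro h
  have key : ∀ i, |x i| ≤ (⌈M⌉₊ : ℤ) := by
    intro i
    have h1 : |(x i : ℝ)| ≤ M := (abs_le_rpow_q hq _).trans
      ((Finset.single_le_sum (f := fun i => |(x i : ℝ)| ^ q)
        (fun j _ => rpow_q_nonneg q _) (mem_univ i)).trans h)
    have h2 : |(x i : ℝ)| ≤ ((⌈M⌉₊ : ℤ) : ℝ) := h1.trans (by exact_mod_cast Nat.le_ceil M)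
    exact_mod_cast h2
  rw [Finset.mem_Icc]
  exact ⟨fun i => (abs_le.1 (key i)).1, fun i => (abs_le.1 (key i)).2⟩

lemma Bl_mono {q : ℝ} (hq : 2 ≤ q) {m : ℕ} {M M' : ℝ} (h : M ≤ M') : Bl q m M ⊆ Bl q m M' := by
  intro x hx
  rw [mem_Bl hq] at *
  exact hx.trans h

lemma zero_mem_Bl {q : ℝ} (hq : 2 ≤ q) {m : ℕ} {M : ℝ} (h : 0 ≤ M) : (0 : Fin m → ℤ) ∈ Bl q m M := by
  rw [mem_Bl hq]
  simp [Real.zero_rpow (by linarith : q ≠ 0), h]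

lemma Bl_card_pos {q : ℝ} (hq : 2 ≤ q) {m : ℕ} {M : ℝ} (h : 0 ≤ M) : 0 < (Bl q m M).card :=
  Finset.card_pos.2 ⟨0, zero_mem_Bl hq h⟩

lemma sum_update {q : ℝ} {m : ℕ} (y : Fin m → ℤ) (i : Fin m) (a : ℤ) :
    ∑ j, |((Function.update y i a) j : ℝ)| ^ q
      = ∑ j, |(y j : ℝ)| ^ q - |(y i : ℝ)| ^ q + |(a : ℝ)| ^ q := by
  rw [← Finset.add_sum_erase _ _ (mem_univ i), ← Finset.add_sum_erase univ (fun j => |(y j : ℝ)| ^ q) (mem_univ i)]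
  have : ∑ x ∈ univ.erase i, |((Function.update y i a) x : ℝ)| ^ q = ∑ x ∈ univ.erase i, |(y x : ℝ)| ^ q := by
    apply Finset.sum_congr rfl
    intro j hj
    rw [Function.update_of_ne (Finset.ne_of_mem_erase hj)]
  rw [this]; simp; ring

/-- Slices: card of the slice at a versus the slice at zero. -/
lemma card_slice_le {q : ℝ} (hq : 2 ≤ q) {m : ℕ} (M : ℝ) (i : Fin m) (a : ℤ) :
    ((Bl q m M).filter (fun y => y i = a)).card
      ≤ ((Bl q m (M - |(a : ℝ)| ^ q)).filter (fun y => y i = 0)).card := by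
  apply Finset.card_le_card_of_injOn (fun y => Function.update y i 0)
  · intro y hy
    simp only [coe_filter, Set.mem_ofPred_eq, mem_Bl hq] at hy ⊢
    rw [sum_update, hy.2]
    simp [Real.zero_rpow (by linarith : q ≠ 0)]
    linarith
  · intro y hy y' hy' h
    simp only [coe_filter, Set.mem_ofPred_eq] at hy hy'
    have := congrArg (fun z => Function.update z i a) h
    simp only [Function.update_idem] at this
    rw [← hy.2] at this
    rw [Function.update_eq_self] at this
    rw [this, hy.2, ← hy'.2, Function.update_eq_self]

/-- Number of nonzero coordinates. -/
lemma card_ne_zero_le {q : ℝ} (hq : 2 ≤ q) {m : ℕ} {M : ℝ} {y : Fin m → ℤ} (hy : y ∈ Bl q m M) :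
    (((univ.filter (fun i => y i ≠ 0)).card : ℕ) : ℝ) ≤ M := by
  rw [mem_Bl hq] at hy
  refine le_trans ?_ hy
  rw [Finset.card_eq_sum_ones, Nat.cast_sum, Finset.sum_filter]
  apply Finset.sum_le_sum
  intro i _
  split_ifs with h
  · simpa using one_le_rpow_q hq h
  · exact rpow_q_nonneg _ _

lemma small_step {q : ℝ} (hq : 2 ≤ q) {m : ℕ} (M : ℝ) :
    ((Bl q m (M - 1)).card : ℝ) * (2 * (m - M)) ≤ M * (Bl q m M).card := by
  classical
  set P := ((Bl q m (M - 1)) ×ˢ ((univ : Finset (Fin m)) ×ˢ ({1, -1} : Finset ℤ))).filter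
    (fun p => p.1 p.2.1 = 0)
  set Q := ((Bl q m M) ×ˢ (univ : Finset (Fin m))).filter (fun p => p.1 p.2 ≠ 0)
  have hPQ : P.card ≤ Q.card := by
    apply Finset.card_le_card_of_injOn (fun p => (Function.update p.1 p.2.1 p.2.2, p.2.1))
    · rintro ⟨y, i, s⟩ hp
      simp only [P, Q, coe_filter, Set.mem_ofPred_eq, mem_product, mem_univ, true_and, and_true, mem_Bl hq,
        mem_insert, mem_singleton] at hp ⊢
      obtain ⟨⟨h1, h2⟩, h3⟩ := hp
      rw [sum_update, h3]
      have : |(s : ℝ)| = 1 := by rcases h2 with rfl | rfl <;> simp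
      rw [this]
      simp [Real.zero_rpow (by linarith : q ≠ 0)]
      refine ⟨by linarith, ?_⟩
      rcases h2 with rfl | rfl <;> simp
    · rintro ⟨y, i, s⟩ hp ⟨y', i', s'⟩ hp' h
      simp only [P, coe_filter, Set.mem_ofPred_eq, mem_product, mem_univ, true_and] at hp hp'
      simp only [Prod.mk.injEq] at h
      obtain ⟨h, rfl⟩ := h
      have hs := congrFun h i
      simp at hs
      have := congrArg (fun z => Function.update z i 0) h
      simp only [Function.update_idem] at this
      rw [← hp.2] at this
      rw [Function.update_eq_self] at this
      rw [this, hp.2, ← hp'.2, Function.update_eq_self, hs]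
  have hP : (P.card : ℝ) = ∑ y ∈ Bl q m (M - 1), 2 * ((univ.filter (fun i => y i = 0)).card : ℝ) := by
    simp only [P]
    rw [Finset.card_filter, Finset.sum_product, Nat.cast_sum]
    apply Finset.sum_congr rfl
    intro y _
    rw [Finset.sum_product_right]
    rw [Finset.sum_pair (by norm_num)]
    rw [Finset.card_filter]; push_cast; ring
  have hQ : (Q.card : ℝ) = ∑ y ∈ Bl q m M, ((univ.filter (fun i => y i ≠ 0)).card : ℝ) := by
    simp only [Q]
    rw [Finset.card_filter, Finset.sum_product, Nat.cast_sum]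
    apply Finset.sum_congr rfl
    intro y _
    rw [Finset.card_filter]
  have h1 : ((Bl q m (M - 1)).card : ℝ) * (2 * (m - M)) ≤ P.card := by
    rw [hP, ← nsmul_eq_mul]
    apply Finset.card_nsmul_le_sum
    intro y hy
    have h := card_ne_zero_le hq hy
    have h2 := Finset.card_filter_add_card_filter_not (s := (univ : Finset (Fin m))) (fun i => y i = 0)
    rw [card_univ, Fintype.card_fin] at h2
    have h3 : (((univ.filter (fun i => y i = 0)).card : ℕ) : ℝ) + ((univ.filter (fun i => y i ≠ 0)).card : ℕ) = m := by
      exact_mod_cast h2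
    linarith
  have h2 : (Q.card : ℝ) ≤ M * (Bl q m M).card := by
    rw [hQ, mul_comm, ← nsmul_eq_mul]
    apply Finset.sum_le_card_nsmul
    intro y hy
    exact card_ne_zero_le hq hy
  have : (P.card : ℝ) ≤ Q.card := by exact_mod_cast hPQ
  linarith

lemma small_iter {q : ℝ} (hq : 2 ≤ q) {m : ℕ} {N : ℝ} (hm : 0 < m) (hN : 0 ≤ N) (hNm : N ≤ m / 2) (r : ℕ) :
    ((Bl q m (N - r)).card : ℝ) ≤ (N / m) ^ r * (Bl q m N).card := by
  induction r with
  | zero => simp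
  | succ r ih =>
    have h := small_step hq (m := m) (N - r)
    have e : N - ((r + 1 : ℕ) : ℝ) = N - r - 1 := by push_cast; ring
    rw [e]
    have hm' : (0 : ℝ) < m := by exact_mod_cast hm
    have hr : (0 : ℝ) ≤ r := by positivity
    have h3 : ((Bl q m (N - r - 1)).card : ℝ) * m ≤ N * (Bl q m (N - r)).card := by
      calc ((Bl q m (N - r - 1)).card : ℝ) * m ≤ ((Bl q m (N - r - 1)).card : ℝ) * (2 * (m - (N - r))) := by
            apply mul_le_mul_of_nonneg_left _ (by positivity); linarith
        _ ≤ _ := h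
        _ ≤ _ := by apply mul_le_mul_of_nonneg_right _ (by positivity); linarith
    have h4 : ((Bl q m (N - r - 1)).card : ℝ) ≤ (N / m) * (Bl q m (N - r)).card := by
      rw [div_mul_eq_mul_div, le_div_iff₀ hm']; exact h3
    refine h4.trans ?_
    rw [pow_succ, mul_comm _ (N / m), mul_assoc]
    exact mul_le_mul_of_nonneg_left ih (by positivity)


lemma small_val {θ x : ℝ} (hθ : 0 ≤ θ) (hθ2 : θ ≤ 1 / 2) (hx : 2 ≤ x) :
    x * θ ^ ⌊x⌋₊ ≤ 16 * θ ^ 2 / x := by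
  set k := ⌊x⌋₊ with hk
  have hk2 : 2 ≤ k := Nat.le_floor (by exact_mod_cast hx)
  have hxk : x ≤ k + 1 := (Nat.lt_floor_add_one x).le
  obtain ⟨j, hj⟩ := Nat.exists_eq_add_of_le hk2
  have h1 : θ ^ k ≤ θ ^ 2 * (1 / 2) ^ j := by
    rw [hj, pow_add]
    exact mul_le_mul_of_nonneg_left (pow_le_pow_left₀ hθ hθ2 _) (by positivity)
  have h2 : ∀ j : ℕ, ((j : ℝ) + 3) ^ 2 ≤ 16 * 2 ^ j := by
    intro j
    induction j with
    | zero => norm_num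
    | succ j ih => push_cast; rw [pow_succ (2 : ℝ)]; nlinarith [(Nat.cast_nonneg j : (0 : ℝ) ≤ j)]
  have h3 : x ^ 2 ≤ 16 * 2 ^ j := by
    refine le_trans ?_ (h2 j)
    apply pow_le_pow_left₀ (by linarith)
    rw [hj] at hxk; push_cast at hxk; linarith
  rw [le_div_iff₀ (by linarith)]
  calc x * θ ^ k * x = x ^ 2 * θ ^ k := by ring
    _ ≤ (16 * 2 ^ j) * (θ ^ 2 * (1 / 2) ^ j) := by gcongr
    _ = 16 * θ ^ 2 * (2 ^ j * (1 / 2) ^ j) := by ring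
    _ = 16 * θ ^ 2 := by rw [← mul_pow]; norm_num

lemma sum_big_le {q : ℝ} (hq : 2 ≤ q) : ∃ C : ℝ, 0 ≤ C ∧ ∀ (m : ℕ) (N : ℝ), 0 < m → 0 ≤ N → N ≤ m / 2 →
    ∀ i : Fin m, ∑ y ∈ Bl q m N, (if 2 ≤ |y i| then |(y i : ℝ)| ^ q else 0)
      ≤ C * (N / m) ^ 2 * (Bl q m N).card := by
  classical
  have hsum : Summable (fun a : ℤ => 1 / (a : ℝ) ^ 2) := Real.summable_one_div_int_pow.2 (by norm_num)
  refine ⟨16 * ∑' a : ℤ, 1 / (a : ℝ) ^ 2, by positivity, ?_⟩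
  intro m N hm hN hNm i
  have hm' : (0 : ℝ) < m := by exact_mod_cast hm
  have hθ : 0 ≤ N / m := by positivity
  have hθ2 : N / m ≤ 1 / 2 := by rw [div_le_iff₀ hm']; linarith
  set I := (Bl q m N).image (fun y => y i)
  rw [← Finset.sum_fiberwise_of_maps_to (s := Bl q m N) (t := I) (g := fun y => y i)
    (fun y hy => Finset.mem_image_of_mem _ hy)]
  have step : ∀ a ∈ I, ∑ y ∈ Bl q m N with y i = a, (if 2 ≤ |y i| then |(y i : ℝ)| ^ q else 0)
      ≤ (1 / (a : ℝ) ^ 2) * (16 * (N / m) ^ 2 * (Bl q m N).card) := by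
    intro a _
    have e : ∑ y ∈ Bl q m N with y i = a, (if 2 ≤ |y i| then |(y i : ℝ)| ^ q else 0)
        = ∑ y ∈ Bl q m N with y i = a, (if 2 ≤ |a| then |(a : ℝ)| ^ q else 0) := by
      apply Finset.sum_congr rfl
      intro y hy
      rw [(Finset.mem_filter.1 hy).2]
    rw [e, Finset.sum_const, nsmul_eq_mul]
    split_ifs with h
    · have h1 := card_slice_le hq N i a
      have h2 : ((Bl q m (N - |(a : ℝ)| ^ q)).filter (fun y => y i = 0)).card ≤ (Bl q m (N - ⌊|(a : ℝ)| ^ q⌋₊)).card := by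
        apply (Finset.card_filter_le _ _).trans
        apply Finset.card_le_card
        apply Bl_mono hq
        have := Nat.floor_le (rpow_q_nonneg q a)
        linarith
      have h3 := small_iter hq hm hN hNm ⌊|(a : ℝ)| ^ q⌋₊
      have h4 : (((Bl q m N).filter (fun y => y i = a)).card : ℝ) ≤ (N / m) ^ ⌊|(a : ℝ)| ^ q⌋₊ * (Bl q m N).card :=
        le_trans (by exact_mod_cast h1.trans h2) h3
      have ha : (2 : ℝ) ≤ |(a : ℝ)| := by exact_mod_cast h
      have h5 : (2 : ℝ) ≤ |(a : ℝ)| ^ q := ha.trans (abs_le_rpow_q hq a)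
      have h6 := small_val hθ hθ2 h5
      have h7 : 16 * (N / m) ^ 2 / |(a : ℝ)| ^ q ≤ 16 * (N / m) ^ 2 / (a : ℝ) ^ 2 := by
        apply div_le_div_of_nonneg_left (by positivity) _ (sq_le_rpow_q hq a)
        rw [← sq_abs]; positivity
      calc _ ≤ (N / m) ^ ⌊|(a : ℝ)| ^ q⌋₊ * (Bl q m N).card * |(a : ℝ)| ^ q := by gcongr
        _ = (|(a : ℝ)| ^ q * (N / m) ^ ⌊|(a : ℝ)| ^ q⌋₊) * (Bl q m N).card := by ring
        _ ≤ (16 * (N / m) ^ 2 / (a : ℝ) ^ 2) * (Bl q m N).card := by gcongr; exact h6.trans h7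
        _ = _ := by ring
    · rw [mul_zero]; positivity
  refine (Finset.sum_le_sum step).trans ?_
  rw [← Finset.sum_mul]
  have := hsum.sum_le_tsum I (fun a _ => by positivity)
  calc _ ≤ (∑' a : ℤ, 1 / (a : ℝ) ^ 2) * (16 * (N / m) ^ 2 * (Bl q m N).card) := by gcongr
    _ = _ := by ring

/-- In the small regime most points have at least `N/2` coordinates `±1`. -/
lemma small_bad {q : ℝ} (hq : 2 ≤ q) : ∃ C : ℝ, 0 ≤ C ∧ ∀ (m : ℕ) (N : ℝ), 0 < m → 4 ≤ N → N ≤ m / 2 →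
    (((Bl q m N).filter (fun y => ((univ.filter (fun i => |y i| = 1)).card : ℝ) < N / 2)).card : ℝ)
      ≤ C * (N / m) * (Bl q m N).card := by
  classical
  obtain ⟨C, hC, hbig⟩ := sum_big_le hq
  refine ⟨1 + 4 * C, by positivity, ?_⟩
  intro m N hm hN hNm
  have hm' : (0 : ℝ) < m := by exact_mod_cast hm
  set b : (Fin m → ℤ) → ℝ := fun y => ∑ i, (if 2 ≤ |y i| then |(y i : ℝ)| ^ q else 0) with hb
  have hb0 : ∀ y, 0 ≤ b y := fun y => Finset.sum_nonneg (fun i _ => by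
    split_ifs
    · exact rpow_q_nonneg _ _
    · exact le_rfl)
  have hsub : (Bl q m N).filter (fun y => ((univ.filter (fun i => |y i| = 1)).card : ℝ) < N / 2)
      ⊆ Bl q m (N - (1 : ℕ)) ∪ (Bl q m N).filter (fun y => N / 4 ≤ b y) := by
    intro y hy
    rw [mem_filter] at hy
    rw [mem_union, mem_filter]
    by_contra hcon
    push Not at hcon
    obtain ⟨h1, h2⟩ := hcon
    have h2 := h2 hy.1
    rw [mem_Bl hq] at h1
    push Not at h1
    have h3 : ∑ i, |(y i : ℝ)| ^ q = ((univ.filter (fun i => |y i| = 1)).card : ℝ) + b y := by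
      rw [Finset.card_filter, hb, Nat.cast_sum, ← Finset.sum_add_distrib]
      apply Finset.sum_congr rfl
      intro i _
      rcases eq_or_ne (y i) 0 with h | h
      · simp [h, Real.zero_rpow (by linarith : q ≠ 0)]
      · have h1 := Int.one_le_abs h
        by_cases h4 : |y i| = 1
        · have : |(y i : ℝ)| = 1 := by exact_mod_cast h4
          rw [this]; simp [h4]
        · have h5 : 2 ≤ |y i| := by omega
          simp [h4, h5]
    rw [h3] at h1
    push_cast at h1
    linarith [hy.2]
  have h1 : ((Bl q m (N - (1 : ℕ))).card : ℝ) ≤ (N / m) * (Bl q m N).card := by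
    simpa using small_iter hq hm (by linarith) hNm 1
  have h2 : (((Bl q m N).filter (fun y => N / 4 ≤ b y)).card : ℝ) * (N / 4) ≤ m * (C * (N / m) ^ 2 * (Bl q m N).card) := by
    calc (((Bl q m N).filter (fun y => N / 4 ≤ b y)).card : ℝ) * (N / 4)
        ≤ ∑ y ∈ (Bl q m N).filter (fun y => N / 4 ≤ b y), b y := by
          rw [← nsmul_eq_mul]
          exact Finset.card_nsmul_le_sum _ _ _ (fun y hy => (mem_filter.1 hy).2)
      _ ≤ ∑ y ∈ Bl q m N, b y := Finset.sum_le_sum_of_subset_of_nonneg (filter_subset _ _) (fun y _ _ => hb0 y)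
      _ = ∑ i, ∑ y ∈ Bl q m N, (if 2 ≤ |y i| then |(y i : ℝ)| ^ q else 0) := Finset.sum_comm
      _ ≤ ∑ i : Fin m, C * (N / m) ^ 2 * (Bl q m N).card :=
          Finset.sum_le_sum (fun i _ => hbig m N hm (by linarith) hNm i)
      _ = _ := by rw [Finset.sum_const, nsmul_eq_mul]; simp
  have h3 : (((Bl q m N).filter (fun y => N / 4 ≤ b y)).card : ℝ) ≤ 4 * C * (N / m) * (Bl q m N).card := by
    have hN4 : 0 < N / 4 := by linarith
    rw [← mul_le_mul_iff_left₀ hN4]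
    refine h2.trans (le_of_eq ?_)
    field_simp
  calc _ ≤ ((Bl q m (N - (1 : ℕ)) ∪ (Bl q m N).filter (fun y => N / 4 ≤ b y)).card : ℝ) := by
        exact_mod_cast Finset.card_le_card hsub
    _ ≤ (Bl q m (N - (1 : ℕ))).card + ((Bl q m N).filter (fun y => N / 4 ≤ b y)).card := by
        exact_mod_cast Finset.card_union_le _ _
    _ ≤ _ := by linarith


lemma sum_Icc_le (A : ℕ) (f : ℕ → ℝ) (hf : ∀ k, 0 ≤ f k) :
    ∑ a ∈ Icc (-(A : ℤ)) A, f a.natAbs ≤ 2 * ∑ k ∈ range (A + 1), f k := by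
  classical
  have hsub : Icc (-(A : ℤ)) A ⊆ (range (A + 1)).image (fun k : ℕ => (k : ℤ)) ∪ (range (A + 1)).image (fun k : ℕ => -(k : ℤ)) := by
    intro a ha
    rw [mem_Icc] at ha
    rw [mem_union, mem_image, mem_image]
    rcases le_total 0 a with h | h
    · exact Or.inl ⟨a.natAbs, by rw [mem_range]; omega, by omega⟩
    · exact Or.inr ⟨a.natAbs, by rw [mem_range]; omega, by omega⟩
  have h1 : ∑ a ∈ Icc (-(A : ℤ)) A, f a.natAbs ≤ ∑ a ∈ (range (A + 1)).image (fun k : ℕ => (k : ℤ)) ∪ (range (A + 1)).image (fun k : ℕ => -(k : ℤ)), f a.natAbs :=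
    Finset.sum_le_sum_of_subset_of_nonneg hsub (fun _ _ _ => hf _)
  have h2 := Finset.sum_union_inter (s₁ := (range (A + 1)).image (fun k : ℕ => (k : ℤ)))
    (s₂ := (range (A + 1)).image (fun k : ℕ => -(k : ℤ))) (f := fun a : ℤ => f a.natAbs)
  have h3 : 0 ≤ ∑ a ∈ (range (A + 1)).image (fun k : ℕ => (k : ℤ)) ∩ (range (A + 1)).image (fun k : ℕ => -(k : ℤ)), f a.natAbs :=
    Finset.sum_nonneg (fun _ _ => hf _)
  have h4 : ∑ a ∈ (range (A + 1)).image (fun k : ℕ => (k : ℤ)), f a.natAbs = ∑ k ∈ range (A + 1), f k := by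
    rw [Finset.sum_image (by intro a _ b _ h; simpa using h)]; simp
  have h5 : ∑ a ∈ (range (A + 1)).image (fun k : ℕ => -(k : ℤ)), f a.natAbs = ∑ k ∈ range (A + 1), f k := by
    rw [Finset.sum_image (by intro a _ b _ h; simpa using h)]; simp
  linarith

lemma sum_exp_le (A : ℕ) {κ : ℝ} (hκ : 2 ≤ κ) :
    ∑ a ∈ Icc (-(A : ℤ)) A, Real.exp (-(|(a : ℝ)| / κ)) ≤ 3 * κ := by
  set r := Real.exp (-(1 / κ)) with hr
  have hκ0 : 0 < κ := by linarith
  have hr1 : r < 1 := by rw [hr, Real.exp_lt_one_iff]; simp; positivity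
  have hr0 : 0 ≤ r := (Real.exp_pos _).le
  have h1 := sum_Icc_le A (fun k => r ^ k) (fun k => by positivity)
  have h2 : ∑ a ∈ Icc (-(A : ℤ)) A, Real.exp (-(|(a : ℝ)| / κ)) = ∑ a ∈ Icc (-(A : ℤ)) A, r ^ a.natAbs := by
    apply Finset.sum_congr rfl
    intro a _
    rw [hr, ← Real.exp_nat_mul]
    congr 1
    rw [Nat.cast_natAbs]; push_cast; ring
  rw [h2]
  refine h1.trans ?_
  have h3 : ∑ k ∈ range (A + 1), r ^ k ≤ (1 - r)⁻¹ := by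
    rw [← tsum_geometric_of_lt_one hr0 hr1]
    exact (summable_geometric_of_lt_one hr0 hr1).sum_le_tsum _ (fun k _ => by positivity)
  have h4 : r ≤ κ / (κ + 1) := by
    rw [hr, Real.exp_neg, inv_le_comm₀ (Real.exp_pos _) (by positivity)]
    have := Real.add_one_le_exp (1 / κ)
    calc (κ / (κ + 1))⁻¹ = 1 / κ + 1 := by field_simp; ring
      _ ≤ _ := this
  have h5 : (1 - r)⁻¹ ≤ κ + 1 := by
    rw [inv_le_comm₀ (by linarith) (by positivity)]
    have : (κ + 1)⁻¹ = 1 - κ / (κ + 1) := by field_simp; ring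
    linarith
  linarith

lemma Bl_card_ge {q : ℝ} (hq : 2 ≤ q) {m : ℕ} {κ : ℝ} (hκ : 0 ≤ κ) :
    κ ^ m ≤ ((Bl q m (m * κ ^ q)).card : ℝ) := by
  classical
  set A := ⌊κ⌋₊
  have hsub : Fintype.piFinset (fun _ : Fin m => Icc (-(A : ℤ)) A) ⊆ Bl q m (m * κ ^ q) := by
    intro y hy
    rw [Fintype.mem_piFinset] at hy
    rw [mem_Bl hq]
    calc ∑ i, |(y i : ℝ)| ^ q ≤ ∑ i : Fin m, κ ^ q := by
          apply Finset.sum_le_sum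
          intro i _
          apply Real.rpow_le_rpow (abs_nonneg _) _ (by linarith)
          have := abs_le.2 (mem_Icc.1 (hy i))
          have h2 : |(y i : ℝ)| ≤ (A : ℝ) := by exact_mod_cast this
          exact h2.trans (Nat.floor_le hκ)
      _ = _ := by simp
  have h := Finset.card_le_card hsub
  rw [Fintype.card_piFinset] at h
  simp only [Int.card_Icc, prod_const, card_univ, Fintype.card_fin] at h
  calc κ ^ m ≤ ((2 * A + 1 : ℕ) : ℝ) ^ m := by
        apply pow_le_pow_left₀ hκ
        have := (Nat.lt_floor_add_one κ).le
        push_cast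
        have h0 : (0 : ℝ) ≤ A := by positivity
        have h1 : κ ≤ (A : ℝ) + 1 := this
        linarith
    _ ≤ _ := by
      have e : ((A : ℤ) + 1 - -(A : ℤ)).toNat = 2 * A + 1 := by omega
      rw [e] at h
      exact_mod_cast h

lemma x_le_one_add_rpow {q x : ℝ} (hq : 2 ≤ q) (hx : 0 ≤ x) : x ≤ 1 + x ^ q := by
  rcases le_total x 1 with h | h
  · linarith [Real.rpow_nonneg hx q]
  · calc x = x ^ (1 : ℝ) := by simp
      _ ≤ x ^ q := Real.rpow_le_rpow_of_exponent_le h (by linarith)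
      _ ≤ _ := by linarith

lemma large_deg {q : ℝ} (hq : 2 ≤ q) {m : ℕ} {κ : ℝ} (hκ : 10000 ≤ κ) :
    (((Bl q m (m * κ ^ q)).filter
      (fun y => m ≤ 2 * (univ.filter (fun i => |(y i : ℝ)| ≤ κ / 10000)).card)).card : ℝ)
      ≤ (1 / 2) ^ m * (Bl q m (m * κ ^ q)).card := by
  classical
  have hκ0 : 0 < κ := by linarith
  set M := m * κ ^ q with hM
  set A := ⌈M⌉₊
  set lam : ℤ → ℝ := fun a => if |(a : ℝ)| ≤ κ / 10000 then 10000 else 1 with hlam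
  set w : ℤ → ℝ := fun a => Real.exp (2 - |(a : ℝ)| / κ) * lam a / 100 with hw
  have hlam0 : ∀ a, 0 < lam a := by intro a; simp only [hlam]; split_ifs <;> norm_num
  have hw0 : ∀ a, 0 ≤ w a := by intro a; have := hlam0 a; simp only [hw]; positivity
  set D := (Bl q m M).filter (fun y => m ≤ 2 * (univ.filter (fun i => |(y i : ℝ)| ≤ κ / 10000)).card)
  have hbox : ∀ y ∈ Bl q m M, y ∈ Fintype.piFinset (fun _ : Fin m => Icc (-(A : ℤ)) A) := by
    intro y hy
    unfold Bl at hy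
    have h := mem_Icc.1 (mem_filter.1 hy).1
    rw [Fintype.mem_piFinset]
    exact fun i => mem_Icc.2 ⟨h.1 i, h.2 i⟩
  have h1 : ∀ y ∈ D, 1 ≤ ∏ i, w (y i) := by
    intro y hy
    obtain ⟨hyB, hyc⟩ := mem_filter.1 hy
    rw [mem_Bl hq] at hyB
    have e1 : ∏ i, w (y i) = Real.exp (∑ i, (2 - |(y i : ℝ)| / κ)) * (∏ i, lam (y i)) / 100 ^ m := by
      simp only [hw]
      rw [Finset.prod_div_distrib, Finset.prod_mul_distrib, Real.exp_sum]; simp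
    have e2 : ∏ i, lam (y i) = 10000 ^ (univ.filter (fun i => |(y i : ℝ)| ≤ κ / 10000)).card := by
      simp only [hlam]
      rw [Finset.prod_ite]; simp
    have e3 : (100 : ℝ) ^ m ≤ ∏ i, lam (y i) := by
      rw [e2]
      generalize (univ.filter (fun i => |(y i : ℝ)| ≤ κ / 10000)).card = k at hyc
      rw [show (10000 : ℝ) = 100 ^ 2 by norm_num, ← pow_mul]
      exact pow_le_pow_right₀ (by norm_num) hyc
    have e4 : 0 ≤ ∑ i, (2 - |(y i : ℝ)| / κ) := by
      have : ∑ i, |(y i : ℝ)| / κ ≤ ∑ i, (1 + |(y i : ℝ)| ^ q / κ ^ q) := by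
        apply Finset.sum_le_sum
        intro i _
        rw [← Real.div_rpow (abs_nonneg _) hκ0.le]
        exact x_le_one_add_rpow hq (by positivity)
      rw [Finset.sum_add_distrib, ← Finset.sum_div (f := fun i => |(y i : ℝ)| ^ q)] at this
      have h5 : (∑ i, |(y i : ℝ)| ^ q) / κ ^ q ≤ m := by
        rw [div_le_iff₀ (by positivity)]; exact hyB
      rw [Finset.sum_sub_distrib]
      simp only [Finset.sum_const, card_univ, Fintype.card_fin, nsmul_eq_mul] at this ⊢
      linarith
    rw [e1, le_div_iff₀ (by positivity), one_mul]
    calc (100 : ℝ) ^ m ≤ ∏ i, lam (y i) := e3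
      _ = 1 * ∏ i, lam (y i) := by ring
      _ ≤ _ := by
        apply mul_le_mul_of_nonneg_right (Real.one_le_exp e4)
        exact Finset.prod_nonneg (fun i _ => (hlam0 _).le)
  have h2 : (D.card : ℝ) ≤ (∑ a ∈ Icc (-(A : ℤ)) A, w a) ^ m := by
    calc (D.card : ℝ) = ∑ y ∈ D, (1 : ℝ) := by simp
      _ ≤ ∑ y ∈ D, ∏ i, w (y i) := Finset.sum_le_sum h1
      _ ≤ ∑ y ∈ Fintype.piFinset (fun _ : Fin m => Icc (-(A : ℤ)) A), ∏ i, w (y i) :=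
          Finset.sum_le_sum_of_subset_of_nonneg (fun y hy => hbox y (mem_filter.1 hy).1)
            (fun y _ _ => Finset.prod_nonneg (fun i _ => hw0 _))
      _ = _ := by
        rw [Finset.sum_prod_piFinset (Icc (-(A : ℤ)) A) (fun _ a => w a)]; simp
  have h3 : ∑ a ∈ Icc (-(A : ℤ)) A, w a ≤ κ / 2 := by
    have hle : ∀ a ∈ Icc (-(A : ℤ)) A, w a ≤ (Real.exp 2 / 100) * (Real.exp (-(|(a : ℝ)| / κ)) +
        10000 * (if |(a : ℝ)| ≤ κ / 10000 then 1 else 0)) := by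
      intro a _
      simp only [hw, hlam]
      have e : Real.exp (2 - |(a : ℝ)| / κ) = Real.exp 2 * Real.exp (-(|(a : ℝ)| / κ)) := by
        rw [← Real.exp_add]; ring_nf
      rw [e]
      have p1 := Real.exp_pos 2
      have p2 : Real.exp (-(|(a : ℝ)| / κ)) ≤ 1 := by rw [Real.exp_le_one_iff]; simp; positivity
      have p3 := Real.exp_pos (-(|(a : ℝ)| / κ))
      rw [mul_assoc, mul_div_right_comm]
      apply mul_le_mul_of_nonneg_left _ (by positivity)
      split_ifs <;> nlinarith
    have hcount : ∑ a ∈ Icc (-(A : ℤ)) A, (if |(a : ℝ)| ≤ κ / 10000 then (1 : ℝ) else 0) ≤ 2 * (κ / 10000) + 1 := by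
      rw [← Finset.sum_filter, Finset.sum_const, nsmul_eq_mul, mul_one]
      have hs : (Icc (-(A : ℤ)) A).filter (fun a : ℤ => |(a : ℝ)| ≤ κ / 10000) ⊆ Icc (-(⌊κ / 10000⌋₊ : ℤ)) ⌊κ / 10000⌋₊ := by
        intro a ha
        have h := (mem_filter.1 ha).2
        have h2 : (a.natAbs : ℝ) ≤ κ / 10000 := by rw [Nat.cast_natAbs]; push_cast; exact h
        have h3 := Nat.le_floor h2
        rw [mem_Icc]; omega
      have h := Finset.card_le_card hs
      rw [Int.card_Icc] at h
      have h4 : ((Icc (-(A : ℤ)) A).filter (fun a : ℤ => |(a : ℝ)| ≤ κ / 10000)).card ≤ 2 * ⌊κ / 10000⌋₊ + 1 := by omega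
      have h5 := Nat.floor_le (show (0 : ℝ) ≤ κ / 10000 by positivity)
      have h6 : ((((Icc (-(A : ℤ)) A).filter (fun a : ℤ => |(a : ℝ)| ≤ κ / 10000)).card : ℕ) : ℝ) ≤ 2 * (⌊κ / 10000⌋₊ : ℝ) + 1 := by
        exact_mod_cast h4
      linarith
    have hexp := sum_exp_le A (show 2 ≤ κ by linarith)
    have he2 : Real.exp 2 ≤ 7.4 := by
      have := Real.exp_one_lt_d9
      have h' : Real.exp 2 = Real.exp 1 * Real.exp 1 := by rw [← Real.exp_add]; norm_num
      rw [h']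
      nlinarith [Real.exp_pos 1]
    calc ∑ a ∈ Icc (-(A : ℤ)) A, w a ≤ _ := Finset.sum_le_sum hle
      _ = (Real.exp 2 / 100) * (∑ a ∈ Icc (-(A : ℤ)) A, Real.exp (-(|(a : ℝ)| / κ)) +
        10000 * ∑ a ∈ Icc (-(A : ℤ)) A, (if |(a : ℝ)| ≤ κ / 10000 then (1 : ℝ) else 0)) := by
          rw [← Finset.mul_sum, Finset.sum_add_distrib, ← Finset.mul_sum]
      _ ≤ (7.4 / 100) * (3 * κ + 10000 * (2 * (κ / 10000) + 1)) := by gcongr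
      _ ≤ κ / 2 := by linarith
  have h4 : (∑ a ∈ Icc (-(A : ℤ)) A, w a) ^ m ≤ (κ / 2) ^ m :=
    pow_le_pow_left₀ (Finset.sum_nonneg (fun a _ => hw0 a)) h3 m
  have h5 := Bl_card_ge hq (m := m) hκ0.le
  calc (D.card : ℝ) ≤ (κ / 2) ^ m := h2.trans h4
    _ = (1 / 2) ^ m * κ ^ m := by rw [← mul_pow]; ring
    _ ≤ _ := by gcongr



lemma perm_Bl {q : ℝ} (hq : 2 ≤ q) {m : ℕ} {M : ℝ} (σ : Equiv.Perm (Fin m)) {y : Fin m → ℤ} :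
    (y ∘ σ) ∈ Bl q m M ↔ y ∈ Bl q m M := by
  rw [mem_Bl hq, mem_Bl hq]
  have := Equiv.sum_comp σ (fun i => |(y i : ℝ)| ^ q)
  simp only [Function.comp]
  rw [this]

/-- sums over the ball are invariant under permutations -/
lemma sum_perm_Bl {q : ℝ} (hq : 2 ≤ q) {m : ℕ} {M : ℝ} (σ : Equiv.Perm (Fin m)) {E : Type*} [AddCommMonoid E]
    (F : (Fin m → ℤ) → E) :
    ∑ y ∈ Bl q m M, F (y ∘ σ) = ∑ y ∈ Bl q m M, F y := by
  apply Finset.sum_bij (fun y _ => y ∘ σ)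
  · intro y hy; exact (perm_Bl hq σ).2 hy
  · intro a _ b _ h
    funext i
    have := congrFun h (σ.symm i)
    simpa using this
  · intro b hb
    exact ⟨b ∘ σ.symm, (perm_Bl hq _).2 hb, by funext i; simp⟩
  · intro _ _; rfl

lemma card_perm_Bl {q : ℝ} (hq : 2 ≤ q) {m : ℕ} {M : ℝ} (i j : Fin m) (p : ℤ → Prop) [DecidablePred p] :
    ((Bl q m M).filter (fun y => p (y i))).card = ((Bl q m M).filter (fun y => p (y j))).card := by
  rw [Finset.card_filter, Finset.card_filter]
  have := sum_perm_Bl hq (M := M) (Equiv.swap i j) (fun y => if p (y j) then 1 else 0)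
  rw [← this]
  simp

/-- reducing the radius a bit does not lose more than a constant factor of volume -/
lemma large_step {q : ℝ} (hq : 2 ≤ q) {m : ℕ} (hm : 0 < m) {κ : ℝ} (hκ : 10000 ≤ κ) :
    ((Bl q m (m * κ ^ q)).card : ℝ) ≤ 12 * (Bl q m (m * κ ^ q - 3 / 4 * (κ / 10000) ^ q)).card := by
  classical
  have hκ0 : 0 < κ := by linarith
  set M := m * κ ^ q
  have hdeg := large_deg hq (m := m) hκ
  set D := (Bl q m M).filter (fun y => m ≤ 2 * (univ.filter (fun i => |(y i : ℝ)| ≤ κ / 10000)).card)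
  set G := (Bl q m M).filter (fun y => ¬ (m ≤ 2 * (univ.filter (fun i => |(y i : ℝ)| ≤ κ / 10000)).card))
  have hDG : D.card + G.card = (Bl q m M).card := Finset.card_filter_add_card_filter_not _
  have hhalf : ((1 : ℝ) / 2) ^ m ≤ 1 / 2 := by
    calc ((1 : ℝ) / 2) ^ m ≤ (1 / 2) ^ 1 := pow_le_pow_of_le_one (by norm_num) (by norm_num) hm
      _ = _ := by norm_num
  have hG : ((Bl q m M).card : ℝ) ≤ 2 * G.card := by
    have e : (D.card : ℝ) + G.card = (Bl q m M).card := by exact_mod_cast hDG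
    have : ((1 : ℝ) / 2) ^ m * (Bl q m M).card ≤ 1 / 2 * (Bl q m M).card := by gcongr
    linarith
  -- double count
  have h2 : (m : ℝ) * G.card ≤ 2 * ∑ i : Fin m, (((Bl q m M).filter (fun y => ¬ |(y i : ℝ)| ≤ κ / 10000)).card : ℝ) := by
    have e1 : ∑ i : Fin m, (((Bl q m M).filter (fun y => ¬ |(y i : ℝ)| ≤ κ / 10000)).card : ℝ)
        = ∑ y ∈ Bl q m M, ((univ.filter (fun i => ¬ |(y i : ℝ)| ≤ κ / 10000)).card : ℝ) := by
      simp only [Finset.card_filter, Nat.cast_sum]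
      rw [Finset.sum_comm]
    rw [e1, Finset.mul_sum]
    calc (m : ℝ) * G.card = ∑ y ∈ G, (m : ℝ) := by simp [mul_comm]
      _ ≤ ∑ y ∈ G, 2 * ((univ.filter (fun i => ¬ |(y i : ℝ)| ≤ κ / 10000)).card : ℝ) := by
        apply Finset.sum_le_sum
        intro y hy
        have h := (mem_filter.1 hy).2
        have h3 := Finset.card_filter_add_card_filter_not (s := (univ : Finset (Fin m))) (fun i => |(y i : ℝ)| ≤ κ / 10000)
        rw [card_univ, Fintype.card_fin] at h3
        have : m ≤ 2 * (univ.filter (fun i => ¬ |(y i : ℝ)| ≤ κ / 10000)).card := by omega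
        exact_mod_cast this
      _ ≤ _ := by
        apply Finset.sum_le_sum_of_subset_of_nonneg (Finset.filter_subset _ _)
        intros; positivity
  obtain ⟨i, -, hi⟩ : ∃ i ∈ (univ : Finset (Fin m)), (G.card : ℝ) ≤ 2 * (((Bl q m M).filter (fun y => ¬ |(y i : ℝ)| ≤ κ / 10000)).card : ℝ) := by
    apply Finset.exists_le_of_sum_le ⟨⟨0, hm⟩, mem_univ _⟩
    rw [← Finset.mul_sum]
    simpa using h2
  -- halving map
  set T := (Bl q m M).filter (fun y => ¬ |(y i : ℝ)| ≤ κ / 10000)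
  have hmap : ∀ y ∈ T, Function.update y i ((y i).tdiv 2) ∈ Bl q m (M - 3 / 4 * (κ / 10000) ^ q) := by
    intro y hy
    obtain ⟨h1, h2⟩ := mem_filter.1 hy
    rw [mem_Bl hq] at h1 ⊢
    rw [sum_update]
    have h3 : |((y i).tdiv 2 : ℝ)| ≤ |(y i : ℝ)| / 2 := by
      have : 2 * |(y i).tdiv 2| ≤ |y i| := by
        rcases le_total 0 (y i) with h | h
        · have : (y i).tdiv 2 = (y i) / 2 := Int.tdiv_eq_ediv_of_nonneg h
          rw [this, abs_of_nonneg h, abs_of_nonneg (by omega)]; omega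
        · have : (y i).tdiv 2 = -((-(y i)) / 2) := by
            have e := Int.neg_tdiv (-(y i)) 2
            rw [neg_neg] at e
            rw [e, Int.tdiv_eq_ediv_of_nonneg (by omega)]
          rw [this, abs_neg, abs_of_nonpos h, abs_of_nonneg (by omega)]; omega
      have : 2 * |((y i).tdiv 2 : ℝ)| ≤ |(y i : ℝ)| := by exact_mod_cast this
      linarith
    have h4 : |((y i).tdiv 2 : ℝ)| ^ q ≤ |(y i : ℝ)| ^ q / 4 := by
      calc |((y i).tdiv 2 : ℝ)| ^ q ≤ (|(y i : ℝ)| / 2) ^ q := Real.rpow_le_rpow (abs_nonneg _) h3 (by linarith)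
        _ = |(y i : ℝ)| ^ q / 2 ^ q := Real.div_rpow (abs_nonneg _) (by norm_num) _
        _ ≤ _ := by
          apply div_le_div_of_nonneg_left (rpow_q_nonneg _ _) (by norm_num)
          calc (4 : ℝ) = 2 ^ (2 : ℝ) := by norm_num
            _ ≤ _ := Real.rpow_le_rpow_of_exponent_le (by norm_num) hq
    have h5 : (κ / 10000) ^ q ≤ |(y i : ℝ)| ^ q :=
      Real.rpow_le_rpow (by positivity) (not_le.1 h2).le (by linarith)
    linarith
  have hfib : T.card ≤ 3 * (Bl q m (M - 3 / 4 * (κ / 10000) ^ q)).card := by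
    apply Finset.card_le_mul_card_image_of_maps_to hmap
    intro z hz
    have hinj : Set.InjOn (fun y : Fin m → ℤ => y i) ({y ∈ T | Function.update y i ((y i).tdiv 2) = z} : Finset _) := by
      intro y hy y' hy' h
      simp only [coe_filter, Set.mem_ofPred_eq] at hy hy'
      funext j
      by_cases hj : j = i
      · subst hj; exact h
      · have e1 := congrFun hy.2 j
        have e2 := congrFun hy'.2 j
        rw [Function.update_of_ne hj] at e1 e2
        rw [e1, e2]
    have hto : Set.MapsTo (fun y : Fin m → ℤ => y i) ({y ∈ T | Function.update y i ((y i).tdiv 2) = z} : Finset _)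
        ((if 0 < z i then {2 * z i, 2 * z i + 1} else if z i = 0 then {-1, 0, 1} else {2 * z i, 2 * z i - 1} : Finset ℤ) : Set ℤ) := by
      intro y hy
      simp only [coe_filter, Set.mem_ofPred_eq] at hy
      have e1 := congrFun hy.2 i
      rw [Function.update_self] at e1
      have e2 : (0 ≤ y i ∧ (y i).tdiv 2 = y i / 2) ∨ (y i ≤ 0 ∧ (y i).tdiv 2 = -(-(y i) / 2)) := by
        rcases le_total 0 (y i) with h | h
        · exact Or.inl ⟨h, Int.tdiv_eq_ediv_of_nonneg h⟩
        · refine Or.inr ⟨h, ?_⟩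
          have e := Int.neg_tdiv (-(y i)) 2
          rw [neg_neg] at e
          rw [e, Int.tdiv_eq_ediv_of_nonneg (by omega)]
      rw [e1] at e2
      rw [Finset.mem_coe]
      split_ifs with c1 c2
      · simp only [mem_insert, mem_singleton]; omega
      · simp only [mem_insert, mem_singleton]; omega
      · simp only [mem_insert, mem_singleton]; omega
    refine (Finset.card_le_card_of_injOn _ hto hinj).trans ?_
    split_ifs
    · exact Finset.card_le_two.trans (by norm_num)
    · exact Finset.card_le_three
    · exact Finset.card_le_two.trans (by norm_num)
  have hfib' : (T.card : ℝ) ≤ 3 * ((Bl q m (M - 3 / 4 * (κ / 10000) ^ q)).card : ℝ) := by exact_mod_cast hfib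
  linarith

lemma sum_succ_q {q : ℝ} {m : ℕ} (y : Fin m → ℤ) (a : ℤ) :
    ∑ i, |((Fin.cons a y : Fin (m+1) → ℤ) i : ℝ)| ^ q = |(a : ℝ)| ^ q + ∑ i, |(y i : ℝ)| ^ q := by
  rw [Fin.sum_univ_succ]; simp

lemma slice_eq {q : ℝ} (hq : 2 ≤ q) {m : ℕ} {M : ℝ} (a : ℤ) :
    ((Bl q (m+1) M).filter (fun y => y 0 = a)).card = (Bl q m (M - |(a : ℝ)| ^ q)).card := by
  symm
  apply Finset.card_bij (fun y _ => (Fin.cons a y : Fin (m+1) → ℤ))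
  · intro y hy
    rw [mem_filter, mem_Bl hq, sum_succ_q]
    rw [mem_Bl hq] at hy
    exact ⟨by linarith, by simp⟩
  · intro y _ y' _ h
    exact (Fin.cons_inj.1 h).2
  · intro z hz
    rw [mem_filter, mem_Bl hq, Fin.sum_univ_succ] at hz
    refine ⟨Fin.tail z, ?_, ?_⟩
    · rw [mem_Bl hq]
      have := hz.1
      rw [hz.2] at this
      simp only [Fin.tail]; linarith
    · rw [← hz.2]; exact Fin.cons_self_tail z

lemma large_slice {q : ℝ} (hq : 2 ≤ q) {d : ℕ} {κ : ℝ} (hκ : 10000 ≤ κ) (i : Fin d) (a : ℤ) :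
    (((Bl q d (d * κ ^ q)).filter (fun y => y i = a)).card : ℝ) ≤ 240000 / κ * (Bl q d (d * κ ^ q)).card := by
  classical
  have hκ0 : 0 < κ := by linarith
  obtain ⟨m, rfl⟩ : ∃ m, d = m + 1 := ⟨d - 1, by have := i.2; omega⟩
  set M := ((m + 1 : ℕ) : ℝ) * κ ^ q with hM
  rw [card_perm_Bl hq i 0 (fun b => b = a), slice_eq hq]
  have h0 : ((Bl q m (M - |(a : ℝ)| ^ q)).card : ℝ) ≤ (Bl q m M).card := by
    exact Nat.cast_le.2 (Finset.card_le_card (Bl_mono hq (by linarith [rpow_q_nonneg q a])))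
  refine h0.trans ?_
  rw [div_mul_eq_mul_div, le_div_iff₀ hκ0]
  rcases Nat.eq_zero_or_pos m with rfl | hm
  · have h1 : ((Bl q 0 M).card : ℝ) ≤ 1 := by exact_mod_cast Finset.card_le_one_of_subsingleton _
    have h2 := Bl_card_ge hq (m := 0 + 1) hκ0.le
    rw [← hM] at h2
    simp only [zero_add, pow_one] at h2
    rw [show (0 + 1 : ℕ) = 1 from rfl]
    nlinarith
  · -- choose the scale
    have hm' : (0 : ℝ) < m := by exact_mod_cast hm
    set κ' := (M / m) ^ (1 / q) with hκ'
    have hMpos : 0 < M := by rw [hM]; positivity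
    have hq0 : q ≠ 0 := by linarith
    have e1 : M = m * κ' ^ q := by
      rw [hκ', ← Real.rpow_mul (by positivity), one_div_mul_cancel hq0, Real.rpow_one]; field_simp
    have e2 : κ ≤ κ' := by
      have : κ = (κ ^ q) ^ (1 / q) := by
        rw [← Real.rpow_mul hκ0.le, mul_one_div_cancel hq0, Real.rpow_one]
      rw [this, hκ']
      apply Real.rpow_le_rpow (by positivity) _ (by positivity)
      rw [le_div_iff₀ hm', hM]
      push_cast
      have : 0 < κ ^ q := by positivity
      nlinarith
    have hstep := large_step hq hm (hκ.trans e2)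
    rw [← e1] at hstep
    set b := κ' / 20000
    have hb0 : 0 ≤ b := by have := hκ0.le.trans e2; positivity
    have hκ'0 : 0 < κ' := hκ0.trans_le e2
    -- many slices
    have hsl : ∀ c ∈ Icc (-(⌊b⌋₊ : ℤ)) ⌊b⌋₊, ((Bl q m M).card : ℝ) / 12 ≤ (((Bl q (m+1) M).filter (fun y => y 0 = c)).card : ℝ) := by
      intro c hc
      rw [slice_eq hq]
      have h1 : |(c : ℝ)| ≤ b := by
        have := abs_le.2 (mem_Icc.1 hc)
        have h2 : |(c : ℝ)| ≤ (⌊b⌋₊ : ℝ) := by exact_mod_cast this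
        exact h2.trans (Nat.floor_le hb0)
      have h2 : |(c : ℝ)| ^ q ≤ 3 / 4 * (κ' / 10000) ^ q := by
        calc |(c : ℝ)| ^ q ≤ ((κ' / 10000) / 2) ^ q := by
              apply Real.rpow_le_rpow (abs_nonneg _) _ (by linarith)
              have : b = κ' / 10000 / 2 := by simp only [b]; ring
              linarith
          _ = (κ' / 10000) ^ q / 2 ^ q := Real.div_rpow (by positivity) (by norm_num) _
          _ ≤ (κ' / 10000) ^ q / 4 := by
            apply div_le_div_of_nonneg_left (by positivity) (by norm_num)
            calc (4 : ℝ) = 2 ^ (2 : ℝ) := by norm_num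
              _ ≤ _ := Real.rpow_le_rpow_of_exponent_le (by norm_num) hq
          _ ≤ _ := by have : 0 < (κ' / 10000) ^ q := by positivity
                      linarith
      have h3 : ((Bl q m (M - 3 / 4 * (κ' / 10000) ^ q)).card : ℝ) ≤ (Bl q m (M - |(c : ℝ)| ^ q)).card := by
        exact Nat.cast_le.2 (Finset.card_le_card (Bl_mono hq (by linarith)))
      linarith
    have hsum : ∑ c ∈ Icc (-(⌊b⌋₊ : ℤ)) ⌊b⌋₊, (((Bl q (m+1) M).filter (fun y => y 0 = c)).card : ℝ) ≤ (Bl q (m+1) M).card := by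
      have : ∑ c ∈ Icc (-(⌊b⌋₊ : ℤ)) ⌊b⌋₊, ((Bl q (m+1) M).filter (fun y => y 0 = c)).card ≤ (Bl q (m+1) M).card := by
        rw [← Finset.card_biUnion]
        · apply Finset.card_le_card
          intro y hy
          obtain ⟨c, _, h⟩ := mem_biUnion.1 hy
          exact (mem_filter.1 h).1
        · intro c _ c' _ h
          rw [Function.onFun, Finset.disjoint_left]
          intro y h1 h2
          exact h ((mem_filter.1 h1).2.symm.trans (mem_filter.1 h2).2)
      rw [← Nat.cast_sum]
      exact Nat.cast_le.2 this
    have h1 := Finset.sum_le_sum hsl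
    rw [Finset.sum_const, Int.card_Icc, nsmul_eq_mul] at h1
    have e3 : ((⌊b⌋₊ : ℤ) + 1 - -(⌊b⌋₊ : ℤ)).toNat = 2 * ⌊b⌋₊ + 1 := by omega
    rw [e3] at h1
    push_cast at h1
    have h2 := Nat.lt_floor_add_one b
    have h3 : b ≤ 2 * (⌊b⌋₊ : ℝ) + 1 := by
      have : (0 : ℝ) ≤ ⌊b⌋₊ := by positivity
      linarith
    have h4 : b * ((Bl q m M).card / 12) ≤ (Bl q (m+1) M).card := by
      calc b * ((Bl q m M).card / 12) ≤ (2 * (⌊b⌋₊ : ℝ) + 1) * ((Bl q m M).card / 12) := mul_le_mul_of_nonneg_right h3 (div_nonneg (Nat.cast_nonneg _) (by norm_num))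
        _ ≤ _ := h1.trans hsum
    have h5 : ((Bl q m M).card : ℝ) * κ ≤ (Bl q m M).card * κ' := mul_le_mul_of_nonneg_left e2 (Nat.cast_nonneg _)
    have : b * ((Bl q m M).card / 12) = (Bl q m M).card * κ' / 240000 := by simp only [b]; ring
    linarith


lemma chebyshev_exp {Ω ι : Type*} [Fintype Ω] [Fintype ι] [DecidableEq ι] (X : ι → Ω → ℝ)
    (h0 : ∀ r w, 0 ≤ X r w) (h1 : ∀ r w, X r w ≤ 1) (a μ : ι → ℝ) (n C d : ℝ) (hn : n = Fintype.card Ω)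
    (hd : 0 < d) (hC : 0 ≤ C)
    (ha : ∀ r, ∑ w, X r w = n * a r) (hμ : ∀ r, μ r ≤ a r) (hμ2 : ∀ r, a r ≤ 2 * μ r) (hμ0 : ∀ r, 0 ≤ μ r)
    (hrs : ∀ r s, r ≠ s → ∑ w, X r w * X s w ≤ n * ((1 + C / d) * (μ r * μ s)))
    (hM : 0 < ∑ r, μ r) (hMd : ∑ r, μ r ≤ d) :
    ∑ w, Real.exp (-∑ r, X r w) ≤ n * ((10 + 4 * C) / ∑ r, μ r) := by
  set M := ∑ r, μ r with hMdef
  set A := ∑ r, a r with hA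
  have hn0 : 0 ≤ n := by rw [hn]; positivity
  have hMA : M ≤ A := Finset.sum_le_sum (fun r _ => hμ r)
  have hA2 : A ≤ 2 * M := by rw [hA, hMdef, Finset.mul_sum]; exact Finset.sum_le_sum (fun r _ => hμ2 r)
  -- second moment
  have hvar : ∑ w, (∑ r, X r w - A) ^ 2 ≤ n * ((2 + C) * M) := by
    have e1 : ∑ w, (∑ r, X r w) = n * A := by
      rw [Finset.sum_comm, hA, Finset.mul_sum]; exact Finset.sum_congr rfl (fun r _ => ha r)
    have e2 : ∑ w, (∑ r, X r w) ^ 2 ≤ n * (A + (1 + C / d) * M ^ 2) - 0 := by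
      have : ∑ w, (∑ r, X r w) ^ 2 = ∑ r, ∑ s, ∑ w, X r w * X s w := by
        simp only [sq, Finset.sum_mul_sum]
        rw [Finset.sum_comm]
        apply Finset.sum_congr rfl
        intro r _
        rw [Finset.sum_comm]
      rw [this]
      have : ∀ r s, ∑ w, X r w * X s w ≤ n * ((if r = s then a r else 0) + (1 + C / d) * (μ r * μ s)) := by
        intro r s
        by_cases h : r = s
        · subst h
          simp only [if_true]
          have : ∑ w, X r w * X r w ≤ ∑ w, X r w := by
            apply Finset.sum_le_sum; intro w _; nlinarith [h0 r w, h1 r w]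
          rw [ha] at this
          refine this.trans ?_
          apply mul_le_mul_of_nonneg_left _ hn0
          have : 0 ≤ (1 + C / d) * (μ r * μ r) := by have := hμ0 r; positivity
          linarith
        · simp only [h, if_false, zero_add]
          exact hrs r s h
      refine (Finset.sum_le_sum (fun r _ => Finset.sum_le_sum (fun s _ => this r s))).trans ?_
      simp only [← Finset.mul_sum, Finset.sum_add_distrib, Finset.sum_ite_eq, mem_univ, if_true, ← Finset.sum_mul]
      rw [← hMdef, ← hA]
      linarith
    have e3 : ∑ w, (∑ r, X r w - A) ^ 2 = ∑ w, (∑ r, X r w) ^ 2 - 2 * A * ∑ w, (∑ r, X r w) + n * A ^ 2 := by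
      rw [hn, Finset.mul_sum, ← Finset.sum_sub_distrib]
      have : (Fintype.card Ω : ℝ) * A ^ 2 = ∑ w : Ω, A ^ 2 := by simp
      rw [this, ← Finset.sum_add_distrib]
      exact Finset.sum_congr rfl (fun w _ => by ring)
    rw [e3, e1]
    have e4 : C / d * M ^ 2 ≤ C * M := by
      rw [div_mul_eq_mul_div, div_le_iff₀ hd]
      have : C * M * M ≤ C * M * d := by gcongr
      nlinarith
    have e5 : A + (1 + C / d) * M ^ 2 - A ^ 2 ≤ (2 + C) * M := by nlinarith
    calc _ ≤ n * (A + (1 + C / d) * M ^ 2 - A ^ 2) := by linarith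
      _ ≤ _ := mul_le_mul_of_nonneg_left e5 hn0
  have hpt : ∀ w, Real.exp (-∑ r, X r w) ≤ 2 / M + 4 / M ^ 2 * (∑ r, X r w - A) ^ 2 := by
    intro w
    set Y := ∑ r, X r w with hY
    have hY0 : 0 ≤ Y := Finset.sum_nonneg (fun r _ => h0 r w)
    by_cases h : M / 2 ≤ Y
    · have hYp : 0 < Y := by linarith
      have : Real.exp (-Y) ≤ 2 / M := by
        rw [Real.exp_neg]
        calc (Real.exp Y)⁻¹ ≤ (M / 2)⁻¹ := by
              apply inv_anti₀ (by positivity)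
              linarith [Real.add_one_le_exp Y]
          _ = 2 / M := by rw [inv_div]
      have : 0 ≤ 4 / M ^ 2 * (Y - A) ^ 2 := by positivity
      linarith
    · have h2 : M / 2 ≤ A - Y := by linarith
      have h3 : 1 ≤ 4 / M ^ 2 * (Y - A) ^ 2 := by
        rw [div_mul_eq_mul_div, le_div_iff₀ (by positivity)]
        nlinarith
      have h4 : Real.exp (-Y) ≤ 1 := Real.exp_le_one_iff.2 (by linarith)
      have : 0 ≤ 2 / M := by positivity
      linarith
  calc ∑ w, Real.exp (-∑ r, X r w) ≤ ∑ w, (2 / M + 4 / M ^ 2 * (∑ r, X r w - A) ^ 2) := Finset.sum_le_sum (fun w _ => hpt w)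
    _ = n * (2 / M) + 4 / M ^ 2 * ∑ w, (∑ r, X r w - A) ^ 2 := by
      rw [Finset.sum_add_distrib, ← Finset.mul_sum, hn]; simp
    _ ≤ n * (2 / M) + 4 / M ^ 2 * (n * ((2 + C) * M)) := by gcongr
    _ = _ := by field_simp; ring

lemma exists_perm_emb {d k : ℕ} (c c' : Fin k ↪ Fin d) : ∃ σ : Equiv.Perm (Fin d), ∀ t, σ (c t) = c' t := by
  have := (Equiv.Perm.isMultiplyPretransitive (Fin d) k).exists_smul_eq c c'
  obtain ⟨σ, h⟩ := this
  exact ⟨σ, fun t => by rw [← h]; rfl⟩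

lemma perm_sum_emb {d k : ℕ} (c : Fin k ↪ Fin d) (φ : (Fin k → Fin d) → ℝ) :
    (d.descFactorial k : ℝ) * ∑ π : Equiv.Perm (Fin d), φ (fun t => π (c t)) = (d.factorial : ℝ) * ∑ e : Fin k ↪ Fin d, φ e := by
  classical
  have h1 : ∀ e : Fin k ↪ Fin d, ∑ π : Equiv.Perm (Fin d), φ (fun t => π (e t)) = ∑ π : Equiv.Perm (Fin d), φ (fun t => π (c t)) := by
    intro e
    obtain ⟨σ, hσ⟩ := exists_perm_emb c e
    rw [← Equiv.sum_comp (Equiv.mulRight σ) (fun π : Equiv.Perm (Fin d) => φ (fun t => π (c t)))]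
    apply Finset.sum_congr rfl
    intro π _
    simp [hσ]
  have h2 : ∑ e : Fin k ↪ Fin d, ∑ π : Equiv.Perm (Fin d), φ (fun t => π (e t)) = (d.descFactorial k : ℝ) * ∑ π : Equiv.Perm (Fin d), φ (fun t => π (c t)) := by
    rw [Finset.sum_congr rfl (fun e _ => h1 e), Finset.sum_const, card_univ, Fintype.card_embedding_eq]
    simp
  rw [← h2, Finset.sum_comm]
  have h3 : ∀ π : Equiv.Perm (Fin d), ∑ e : Fin k ↪ Fin d, φ (fun t => π (e t)) = ∑ e : Fin k ↪ Fin d, φ e := by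
    intro π
    rw [← Equiv.sum_comp (Equiv.embeddingCongr (Equiv.refl (Fin k)) π) (fun e : Fin k ↪ Fin d => φ e)]
    apply Finset.sum_congr rfl
    intro e _
    congr 1
  rw [Finset.sum_congr rfl (fun π _ => h3 π), Finset.sum_const, card_univ, Fintype.card_perm]
  simp

lemma sum_emb_le {d k : ℕ} (φ : (Fin k → Fin d) → ℝ) (h : ∀ v, 0 ≤ φ v) :
    ∑ e : Fin k ↪ Fin d, φ e ≤ ∑ v : Fin k → Fin d, φ v := by
  classical
  have : ∑ e : Fin k ↪ Fin d, φ e = ∑ v ∈ univ.image (fun e : Fin k ↪ Fin d => (e : Fin k → Fin d)), φ v := by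
    rw [Finset.sum_image]
    intro a _ b _ h
    exact DFunLike.coe_injective h
  rw [this]
  exact Finset.sum_le_sum_of_subset_of_nonneg (subset_univ _) (fun v _ _ => h v)

lemma sum_emb_eq {d k : ℕ} (φ : (Fin k → Fin d) → ℝ) (h : ∀ v, ¬ Function.Injective v → φ v = 0) :
    ∑ e : Fin k ↪ Fin d, φ e = ∑ v : Fin k → Fin d, φ v := by
  classical
  have : ∑ e : Fin k ↪ Fin d, φ e = ∑ v ∈ univ.image (fun e : Fin k ↪ Fin d => (e : Fin k → Fin d)), φ v := by
    rw [Finset.sum_image]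
    intro a _ b _ h
    exact DFunLike.coe_injective h
  rw [this]
  apply Finset.sum_subset (subset_univ _)
  intro v _ hv
  apply h
  intro hi
  exact hv (mem_image.2 ⟨⟨v, hi⟩, mem_univ _, rfl⟩)

lemma sum_pi_succ {α : Type*} [Fintype α] {n : ℕ} (F : (Fin (n+1) → α) → ℝ) :
    ∑ v, F v = ∑ a, ∑ w : Fin n → α, F (Fin.cons a w) := by
  rw [← Equiv.sum_comp (Fin.consEquiv (fun _ => α)) F, Fintype.sum_prod_type]
  rfl

lemma perm_single {d : ℕ} (hd : 0 < d) (g : Fin d → Fin d → ℝ) (h0 : ∀ j i, 0 ≤ g j i) (h1 : ∀ j i, g j i ≤ 1)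
    (M : ℝ) (hM : M = ∑ j, (∑ i, g j i) / d) (hM0 : 0 < M) :
    ∑ π : Equiv.Perm (Fin d), Real.exp (-∑ j, g j (π j)) ≤ d.factorial * (18 / M) := by
  classical
  have hd0 : (0 : ℝ) < d := by exact_mod_cast hd
  have hMd : M ≤ d := by
    rw [hM]
    calc ∑ j, (∑ i, g j i) / d ≤ ∑ j : Fin d, (1 : ℝ) := by
          apply Finset.sum_le_sum
          intro j _
          rw [div_le_one hd0]
          calc ∑ i, g j i ≤ ∑ i : Fin d, (1 : ℝ) := Finset.sum_le_sum (fun i _ => h1 j i)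
            _ = d := by simp
      _ = d := by simp
  rcases Nat.lt_or_ge 1 d with hd2 | hd1
  · have hd2' : (2 : ℝ) ≤ d := by exact_mod_cast hd2
    have := chebyshev_exp (Ω := Equiv.Perm (Fin d)) (ι := Fin d) (fun j π => g j (π j)) (fun j π => h0 _ _) (fun j π => h1 _ _)
      (fun j => (∑ i, g j i) / d) (fun j => (∑ i, g j i) / d) (d.factorial) 2 d (by rw [Fintype.card_perm, Fintype.card_fin]) hd0 (by norm_num)
      ?_ (fun _ => le_rfl) ?_ ?_ ?_ (by rw [← hM]; exact hM0) (by rw [← hM]; exact hMd)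
    · rw [← hM] at this
      norm_num at this ⊢
      exact this
    · intro j
      have := perm_sum_emb (k := 1) ⟨fun _ => j, fun a b _ => Subsingleton.elim a b⟩ (fun v => g j (v 0))
      rw [sum_emb_eq (fun v : Fin 1 → Fin d => g j (v 0)) (fun v hv => absurd (fun a b _ => Subsingleton.elim a b) hv), sum_pi_succ] at this
      simp at this
      change (d : ℝ) * ∑ x : Equiv.Perm (Fin d), g j (x j) = _ at this
      field_simp
      linarith
    · intro j
      have : 0 ≤ (∑ i, g j i) / (d : ℝ) := div_nonneg (Finset.sum_nonneg (fun i _ => h0 j i)) hd0.le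
      linarith
    · intro j
      exact div_nonneg (Finset.sum_nonneg (fun i _ => h0 j i)) hd0.le
    · intro j k hjk
      have hinj : Function.Injective (![j, k] : Fin 2 → Fin d) := by
        intro a b h
        fin_cases a <;> fin_cases b <;> simp_all
      have := perm_sum_emb (k := 2) ⟨![j, k], hinj⟩ (fun v => g j (v 0) * g k (v 1))
      have h2 := sum_emb_le (k := 2) (d := d) (fun v => g j (v 0) * g k (v 1)) (fun v => mul_nonneg (h0 _ _) (h0 _ _))
      rw [sum_pi_succ] at h2
      simp only [sum_pi_succ] at h2
      simp only [Fin.cons_zero, Fin.cons_one, Fintype.sum_unique] at h2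
      simp only [Function.Embedding.coeFn_mk, Matrix.cons_val_zero, Matrix.cons_val_one] at this
      have e : (d.descFactorial 2 : ℝ) = d * (d - 1) := by
        rw [show d.descFactorial 2 = (d - 1) * d by simp [Nat.descFactorial_succ]]
        rw [Nat.cast_mul, Nat.cast_sub hd]; push_cast; ring
      rw [e] at this
      rw [← Finset.sum_mul_sum] at h2
      have hf : (0 : ℝ) < d.factorial := by exact_mod_cast d.factorial_pos
      set S := ∑ π : Equiv.Perm (Fin d), g j (π j) * g k (π k) with hS
      set a := ∑ i, g j i
      set b := ∑ i, g k i
      have ha : 0 ≤ a := Finset.sum_nonneg (fun i _ => h0 j i)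
      have hb : 0 ≤ b := Finset.sum_nonneg (fun i _ => h0 k i)
      have h3 : (d : ℝ) * (d - 1) * S ≤ d.factorial * (a * b) := by
        rw [this]; exact mul_le_mul_of_nonneg_left h2 hf.le
      have h4 : S ≤ d.factorial * (a * b) / (d * (d - 1)) := by
        rw [le_div_iff₀ (by nlinarith)]; linarith
      refine h4.trans ?_
      rw [mul_div_assoc]
      apply mul_le_mul_of_nonneg_left _ hf.le
      rw [div_le_iff₀ (by nlinarith)]
      have : (1 + 2 / (d : ℝ)) * (a / d * (b / d)) * (d * (d - 1)) = a * b * ((d + 2) * (d - 1) / d ^ 2) := by field_simp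
      rw [this]
      have h5 : 1 ≤ ((d : ℝ) + 2) * (d - 1) / d ^ 2 := by rw [le_div_iff₀ (by positivity)]; nlinarith
      have : 0 ≤ a * b := mul_nonneg ha hb
      nlinarith
  · have hde : d = 1 := by omega
    subst hde
    have : ∀ π : Equiv.Perm (Fin 1), Real.exp (-∑ j, g j (π j)) ≤ 18 / M := by
      intro π
      have e1 : Real.exp (-∑ j, g j (π j)) ≤ 1 := Real.exp_le_one_iff.2 (by simp; exact h0 _ _)
      have e2 : 1 ≤ 18 / M := by rw [le_div_iff₀ hM0]; push_cast at hMd; linarith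
      linarith
    refine (Finset.sum_le_sum (fun π _ => this π)).trans ?_
    simp

lemma perm_pair {d R : ℕ} (hd : 8 ≤ d) (a b : Fin R → Fin d) (hab : ∀ r s, a r ≠ b s)
    (ha : Function.Injective a) (hb : Function.Injective b) (D : Fin d → Fin d → ℝ)
    (h0 : ∀ j i, 0 ≤ D j i) (h1 : ∀ j i, D j i ≤ 1) (hdiag : ∀ i, D i i = 0)
    (M : ℝ) (hM : M = R * ((∑ i, ∑ j, D i j) / d ^ 2)) (hM0 : 0 < M) :
    ∑ π : Equiv.Perm (Fin d), Real.exp (-∑ r, D (π (a r)) (π (b r))) ≤ d.factorial * (74 / M) := by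
  classical
  have hd0 : (0 : ℝ) < d := by exact_mod_cast (by omega : 0 < d)
  have hd8 : (8 : ℝ) ≤ d := by exact_mod_cast hd
  set T := ∑ i, ∑ j, D i j with hT
  have hT0 : 0 ≤ T := Finset.sum_nonneg (fun i _ => Finset.sum_nonneg (fun j _ => h0 i j))
  have hTd : T ≤ d ^ 2 := by
    calc T ≤ ∑ i : Fin d, ∑ j : Fin d, (1 : ℝ) := Finset.sum_le_sum (fun i _ => Finset.sum_le_sum (fun j _ => h1 i j))
      _ = _ := by simp; ring
  have hf : (0 : ℝ) < d.factorial := by exact_mod_cast d.factorial_pos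
  have hRd : (R : ℝ) ≤ d := by
    have := Fintype.card_le_of_injective a ha
    simp at this
    exact_mod_cast this
  have hMs : ∑ r : Fin R, T / d ^ 2 = M := by simp [hM]
  have := chebyshev_exp (Ω := Equiv.Perm (Fin d)) (ι := Fin R) (fun r π => D (π (a r)) (π (b r))) (fun j π => h0 _ _) (fun j π => h1 _ _)
      (fun j => T / (d * (d - 1))) (fun j => T / d ^ 2) (d.factorial) 16 d (by rw [Fintype.card_perm, Fintype.card_fin]) hd0 (by norm_num)
      ?_ ?_ ?_ ?_ ?_ (by rw [hMs]; exact hM0) ?_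
  · rw [hMs] at this
    norm_num at this ⊢
    exact this
  · intro r
    have hinj : Function.Injective (![a r, b r] : Fin 2 → Fin d) := by
      intro i j h
      have := hab r r
      have := (hab r r).symm
      fin_cases i <;> fin_cases j <;> simp_all
    have := perm_sum_emb (k := 2) ⟨![a r, b r], hinj⟩ (fun v => D (v 0) (v 1))
    rw [sum_emb_eq (fun v : Fin 2 → Fin d => D (v 0) (v 1))] at this
    · simp only [sum_pi_succ] at this
      simp only [Fin.cons_zero, Fin.cons_one, Fintype.sum_unique] at this
      simp only [Function.Embedding.coeFn_mk, Matrix.cons_val_zero, Matrix.cons_val_one] at this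
      have e : (d.descFactorial 2 : ℝ) = d * (d - 1) := by
        rw [show d.descFactorial 2 = (d - 1) * d by simp [Nat.descFactorial_succ]]
        rw [Nat.cast_mul, Nat.cast_sub (by omega)]; push_cast; ring
      rw [e] at this
      have hd1 : (0 : ℝ) < d - 1 := by linarith
      rw [← mul_div_assoc, eq_div_iff (by positivity)]
      linarith
    · intro v hv
      have : v 0 = v 1 := by
        by_contra hne
        apply hv
        intro i j h
        have := Ne.symm hne
        fin_cases i <;> fin_cases j <;> simp_all
      simp only [this, hdiag]
  · intro r
    apply div_le_div_of_nonneg_left hT0 (by nlinarith) (by nlinarith)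
  · intro r
    rw [← mul_div_assoc, div_le_div_iff₀ (by nlinarith) (by positivity)]
    have : (d : ℝ) ^ 2 ≤ 2 * (d * (d - 1)) := by nlinarith
    nlinarith
  · intro r; positivity
  · intro r s hrs
    have hinj : Function.Injective (![a r, b r, a s, b s] : Fin 4 → Fin d) := by
      have q1 := hab r r
      have q2 := hab r s
      have q3 := hab s r
      have q4 := hab s s
      have q5 : a r ≠ a s := fun h => hrs (ha h)
      have q6 : b r ≠ b s := fun h => hrs (hb h)
      intro i j h
      fin_cases i <;> fin_cases j <;> simp at h ⊢ <;> first | exact absurd h ‹_› | exact absurd h.symm ‹_›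
    have := perm_sum_emb (k := 4) ⟨![a r, b r, a s, b s], hinj⟩ (fun v => D (v 0) (v 1) * D (v 2) (v 3))
    have h2 := sum_emb_le (k := 4) (d := d) (fun v => D (v 0) (v 1) * D (v 2) (v 3)) (fun v => mul_nonneg (h0 _ _) (h0 _ _))
    have h2' : ∑ v : Fin 4 → Fin d, D (v 0) (v 1) * D (v 2) (v 3) = T * T := by
      simp only [sum_pi_succ, Fintype.sum_unique]
      rw [hT, Finset.sum_mul]
      apply Finset.sum_congr rfl; intro i _
      rw [Finset.sum_mul]
      apply Finset.sum_congr rfl; intro j _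
      rw [Finset.mul_sum]
      apply Finset.sum_congr rfl; intro k _
      rw [Finset.mul_sum]
      apply Finset.sum_congr rfl; intro l _
      rfl
    rw [h2'] at h2
    have e : (d.descFactorial 4 : ℝ) = d * (d - 1) * (d - 2) * (d - 3) := by
      rw [show d.descFactorial 4 = (d - 3) * ((d - 2) * ((d - 1) * d)) by simp [Nat.descFactorial_succ]]
      rw [Nat.cast_mul, Nat.cast_mul, Nat.cast_mul, Nat.cast_sub (by omega), Nat.cast_sub (by omega), Nat.cast_sub (by omega)]; push_cast; ring
    rw [e] at this
    have h3 : (d : ℝ) * (d - 1) * (d - 2) * (d - 3) * ∑ π : Equiv.Perm (Fin d), D (π (a r)) (π (b r)) * D (π (a s)) (π (b s)) ≤ d.factorial * (T * T) := by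
      have h4 : (d.factorial : ℝ) * ∑ e : Fin 4 ↪ Fin d, D (e 0) (e 1) * D (e 2) (e 3) ≤ d.factorial * (T * T) :=
        mul_le_mul_of_nonneg_left h2 hf.le
      rw [← this] at h4
      exact h4
    set S := ∑ π : Equiv.Perm (Fin d), D (π (a r)) (π (b r)) * D (π (a s)) (π (b s))
    have hpos : 0 < (d : ℝ) * (d - 1) * (d - 2) * (d - 3) := by
      have : (0 : ℝ) < d - 1 := by linarith
      have : (0 : ℝ) < d - 2 := by linarith
      have : (0 : ℝ) < d - 3 := by linarith
      positivity
    have h4 : S ≤ d.factorial * (T * T) / (d * (d - 1) * (d - 2) * (d - 3)) := by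
      rw [le_div_iff₀ hpos]; linarith
    refine h4.trans ?_
    rw [mul_div_assoc]
    apply mul_le_mul_of_nonneg_left _ hf.le
    rw [div_le_iff₀ hpos]
    have e5 : (1 + 16 / (d : ℝ)) * (T / d ^ 2 * (T / d ^ 2)) * (d * (d - 1) * (d - 2) * (d - 3))
       = T * T * ((d + 16) * (d - 1) * (d - 2) * (d - 3) / d ^ 4) := by field_simp
    rw [e5]
    have h5 : 1 ≤ ((d : ℝ) + 16) * (d - 1) * (d - 2) * (d - 3) / d ^ 4 := by
      rw [le_div_iff₀ (by positivity)]
      obtain ⟨e, he⟩ : ∃ e : ℝ, (d : ℝ) = e + 8 := ⟨d - 8, by ring⟩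
      have he0 : 0 ≤ e := by linarith
      rw [he]
      nlinarith [pow_nonneg he0 2, pow_nonneg he0 3, pow_nonneg he0 4]
    have : 0 ≤ T * T := mul_nonneg hT0 hT0
    nlinarith
  · rw [hMs, hM]
    have : T / d ^ 2 ≤ 1 := by rw [div_le_one (by positivity)]; exact hTd
    calc (R : ℝ) * (T / d ^ 2) ≤ R * 1 := by gcongr
      _ ≤ d := by linarith


lemma sign_Bl {q : ℝ} (hq : 2 ≤ q) {m : ℕ} {M : ℝ} (ε : Fin m → ℤ) (hε : ∀ i, ε i = 1 ∨ ε i = -1) {y : Fin m → ℤ} :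
    (ε * y) ∈ Bl q m M ↔ y ∈ Bl q m M := by
  rw [mem_Bl hq, mem_Bl hq]
  have : ∀ i, |((ε * y) i : ℝ)| = |(y i : ℝ)| := by
    intro i
    rcases hε i with h | h <;> simp [h]
  simp only [this]

lemma sum_sign_Bl {q : ℝ} (hq : 2 ≤ q) {m : ℕ} {M : ℝ} (ε : Fin m → ℤ) (hε : ∀ i, ε i = 1 ∨ ε i = -1)
    {E : Type*} [AddCommMonoid E] (F : (Fin m → ℤ) → E) :
    ∑ y ∈ Bl q m M, F (ε * y) = ∑ y ∈ Bl q m M, F y := by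
  have hεε : ∀ y : Fin m → ℤ, ε * (ε * y) = y := by
    intro y; funext i; rcases hε i with h | h <;> simp [h]
  apply Finset.sum_bij (fun y _ => ε * y)
  · intro y hy; exact (sign_Bl hq ε hε).2 hy
  · intro a _ b _ h
    rw [← hεε a, ← hεε b, h]
  · intro b hb
    exact ⟨ε * b, (sign_Bl hq ε hε).2 hb, hεε b⟩
  · intro _ _; rfl

lemma symm_prod_Bl {q : ℝ} (hq : 2 ≤ q) {m : ℕ} {M : ℝ} (F : Fin m → ℤ → ℂ) :
    ∑ y ∈ Bl q m M, ∏ j, F j (y j) = ∑ y ∈ Bl q m M, ∏ j, ((F j (y j) + F j (-y j)) / 2) := by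
  classical
  set S := Fintype.piFinset (fun _ : Fin m => ({1, -1} : Finset ℤ))
  have hcard : S.card = 2 ^ m := by simp [S, Fintype.card_piFinset]
  have h1 : ∀ ε ∈ S, ∑ y ∈ Bl q m M, ∏ j, F j (y j) = ∑ y ∈ Bl q m M, ∏ j, F j (ε j * y j) := by
    intro ε hε
    rw [Fintype.mem_piFinset] at hε
    have := sum_sign_Bl hq (M := M) ε (fun i => by simpa using hε i) (fun y => ∏ j, F j (y j))
    rw [← this]; rfl
  have h2 : (2 : ℂ) ^ m * ∑ y ∈ Bl q m M, ∏ j, F j (y j) = ∑ y ∈ Bl q m M, ∏ j, (F j (y j) + F j (-y j)) := by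
    have : (2 : ℂ) ^ m * ∑ y ∈ Bl q m M, ∏ j, F j (y j) = ∑ ε ∈ S, ∑ y ∈ Bl q m M, ∏ j, F j (y j) := by
      rw [Finset.sum_const, hcard]; simp
    rw [this, Finset.sum_congr rfl h1, Finset.sum_comm]
    apply Finset.sum_congr rfl
    intro y _
    have := Finset.prod_univ_sum (fun _ : Fin m => ({1, -1} : Finset ℤ)) (fun j e => F j (e * y j))
    rw [← this]
    apply Finset.prod_congr rfl
    intro j _
    rw [Finset.sum_pair (by norm_num)]
    simp
  simp only [Finset.prod_div_distrib, ← Finset.sum_div]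
  rw [← h2]
  simp

/-- the multiplier of the ball -/
noncomputable def mc (q : ℝ) (d : ℕ) (N : ℝ) (φ : Fin d → ℝ) : ℝ :=
  (∑ y ∈ Bl q d N, ∏ j, Real.cos (y j * φ j)) / (Bl q d N).card

lemma mc_exp {q : ℝ} (hq : 2 ≤ q) {m : ℕ} {M : ℝ} (φ : Fin m → ℝ) :
    ∑ y ∈ Bl q m M, ∏ j, Complex.exp (Complex.I * (y j * φ j)) = ((∑ y ∈ Bl q m M, ∏ j, Real.cos (y j * φ j) : ℝ) : ℂ) := by
  rw [symm_prod_Bl hq (fun j a => Complex.exp (Complex.I * (a * φ j)))]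
  push_cast
  apply Finset.sum_congr rfl; intro y _
  apply Finset.prod_congr rfl; intro j _
  rw [Complex.cos]
  ring_nf

lemma mc_le_one {q : ℝ} (hq : 2 ≤ q) {d : ℕ} {N : ℝ} (hN : 0 ≤ N) (φ : Fin d → ℝ) : |mc q d N φ| ≤ 1 := by
  have h := Bl_card_pos hq (m := d) hN
  have h' : (0 : ℝ) < (Bl q d N).card := by exact_mod_cast h
  rw [mc, abs_div, Nat.abs_cast, div_le_one h']
  calc |∑ y ∈ Bl q d N, ∏ j, Real.cos (y j * φ j)| ≤ ∑ y ∈ Bl q d N, |∏ j, Real.cos (y j * φ j)| := Finset.abs_sum_le_sum_abs _ _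
    _ ≤ ∑ y ∈ Bl q d N, 1 := by
      apply Finset.sum_le_sum; intro y _
      rw [Finset.abs_prod]
      exact Finset.prod_le_one (fun j _ => abs_nonneg _) (fun j _ => Real.abs_cos_le_one _)
    _ = _ := by simp

lemma prod_sub_one_le {ι : Type*} (s : Finset ι) (a : ι → ℝ) (h : ∀ i, |a i| ≤ 1) :
    |∏ i ∈ s, a i - 1| ≤ ∑ i ∈ s, |a i - 1| := by
  classical
  induction s using Finset.induction_on with
  | empty => simp
  | insert i s hi ih =>
    rw [Finset.prod_insert hi, Finset.sum_insert hi]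
    have : a i * ∏ j ∈ s, a j - 1 = a i * (∏ j ∈ s, a j - 1) + (a i - 1) := by ring
    rw [this]
    refine (abs_add_le _ _).trans ?_
    rw [abs_mul]
    have : |a i| * |∏ j ∈ s, a j - 1| ≤ 1 * |∏ j ∈ s, a j - 1| := by gcongr; exact h i
    linarith

lemma abs_sin_nat_mul_le (n : ℕ) (x : ℝ) : |Real.sin (n * x)| ≤ n * |Real.sin x| := by
  induction n with
  | zero => simp
  | succ n ih =>
    push_cast
    rw [add_mul, one_mul, Real.sin_add]
    have h1 := Real.abs_cos_le_one x
    have h2 := Real.abs_cos_le_one (n * x)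
    calc _ ≤ |Real.sin (n * x) * Real.cos x| + |Real.cos (n * x) * Real.sin x| := abs_add_le _ _
      _ = |Real.sin (n * x)| * |Real.cos x| + |Real.cos (n * x)| * |Real.sin x| := by rw [abs_mul, abs_mul]
      _ ≤ |Real.sin (n * x)| * 1 + 1 * |Real.sin x| := by gcongr
      _ ≤ _ := by linarith

lemma sin_int_sq_le (a : ℤ) (x : ℝ) : Real.sin (a * x) ^ 2 ≤ (a : ℝ) ^ 2 * Real.sin x ^ 2 := by
  have h : |Real.sin (a * x)| ≤ |(a : ℝ)| * |Real.sin x| := by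
    obtain ⟨n, rfl | rfl⟩ := a.eq_nat_or_neg
    · have := abs_sin_nat_mul_le n x
      simpa using this
    · have := abs_sin_nat_mul_le n x
      push_cast
      rw [neg_mul, Real.sin_neg, abs_neg, abs_neg]
      simpa using this
  rw [← sq_abs (Real.sin (a * x)), ← sq_abs (Real.sin x), ← sq_abs (a : ℝ), ← mul_pow]
  exact pow_le_pow_left₀ (abs_nonneg _) h 2

lemma one_sub_cos_le (a : ℤ) (x : ℝ) : |Real.cos (a * x) - 1| ≤ 2 * ((a : ℝ) ^ 2 * Real.sin (x / 2) ^ 2) := by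
  have h1 : Real.cos (a * x) - 1 = - (2 * Real.sin (a * (x / 2)) ^ 2) := by
    have := Real.cos_sq_add_sin_sq (a * (x / 2))
    have h2 : Real.cos (a * x) = 2 * Real.cos (a * (x / 2)) ^ 2 - 1 := by
      rw [← Real.cos_two_mul]; ring_nf
    linarith
  rw [h1, abs_neg, abs_of_nonneg (by positivity)]
  have := sin_int_sq_le a (x / 2)
  linarith

lemma moment_q {q : ℝ} (hq : 2 ≤ q) {d : ℕ} (M : ℝ) (i : Fin d) :
    (d : ℝ) * ∑ y ∈ Bl q d M, |(y i : ℝ)| ^ q ≤ M * (Bl q d M).card := by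
  have h1 : ∀ j, ∑ y ∈ Bl q d M, |(y i : ℝ)| ^ q = ∑ y ∈ Bl q d M, |(y j : ℝ)| ^ q := by
    intro j
    have := sum_perm_Bl hq (M := M) (Equiv.swap i j) (fun y => |(y j : ℝ)| ^ q)
    rw [← this]
    simp
  have h2 : (d : ℝ) * ∑ y ∈ Bl q d M, |(y i : ℝ)| ^ q = ∑ j : Fin d, ∑ y ∈ Bl q d M, |(y j : ℝ)| ^ q := by
    rw [← Finset.sum_congr rfl (fun j _ => h1 j)]; simp
  rw [h2, Finset.sum_comm]
  calc _ ≤ ∑ y ∈ Bl q d M, M := Finset.sum_le_sum (fun y hy => (mem_Bl hq).1 hy)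
    _ = _ := by simp [mul_comm]

lemma moment_two {q : ℝ} (hq : 2 ≤ q) {d : ℕ} {κ : ℝ} (hκ : 0 < κ) (i : Fin d) :
    ∑ y ∈ Bl q d (d * κ ^ q), (y i : ℝ) ^ 2 ≤ 2 * min (κ ^ q) (κ ^ 2) * (Bl q d (d * κ ^ q)).card := by
  have hd : (0 : ℝ) < d := by exact_mod_cast (by have := i.2; omega : 0 < d)
  have h := moment_q hq (d * κ ^ q) i
  have hm : ∑ y ∈ Bl q d (d * κ ^ q), |(y i : ℝ)| ^ q ≤ κ ^ q * (Bl q d (d * κ ^ q)).card := by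
    have : (d : ℝ) * ∑ y ∈ Bl q d (d * κ ^ q), |(y i : ℝ)| ^ q ≤ d * (κ ^ q * (Bl q d (d * κ ^ q)).card) := by linarith
    exact le_of_mul_le_mul_left this hd
  have hκq : 0 < κ ^ q := by positivity
  set n := ((Bl q d (d * κ ^ q)).card : ℝ) with hn
  have hn0 : 0 ≤ n := Nat.cast_nonneg _
  have h1 : ∑ y ∈ Bl q d (d * κ ^ q), (y i : ℝ) ^ 2 ≤ κ ^ q * n :=
    (Finset.sum_le_sum (fun y _ => sq_le_rpow_q hq (y i))).trans hm
  have h2 : ∑ y ∈ Bl q d (d * κ ^ q), (y i : ℝ) ^ 2 ≤ 2 * κ ^ 2 * n := by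
    have hp : ∀ y ∈ Bl q d (d * κ ^ q), (y i : ℝ) ^ 2 ≤ κ ^ 2 * (1 + |(y i : ℝ)| ^ q / κ ^ q) := by
      intro y _
      rw [← Real.div_rpow (abs_nonneg _) hκ.le]
      have hx : 0 ≤ |(y i : ℝ)| / κ := by positivity
      have : (|(y i : ℝ)| / κ) ^ 2 ≤ 1 + (|(y i : ℝ)| / κ) ^ q := by
        rcases le_total (|(y i : ℝ)| / κ) 1 with h | h
        · have := Real.rpow_nonneg hx q
          nlinarith
        · calc (|(y i : ℝ)| / κ) ^ 2 = (|(y i : ℝ)| / κ) ^ (2 : ℝ) := by simp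
            _ ≤ _ := Real.rpow_le_rpow_of_exponent_le h hq
            _ ≤ _ := by linarith
      calc (y i : ℝ) ^ 2 = κ ^ 2 * (|(y i : ℝ)| / κ) ^ 2 := by rw [div_pow, sq_abs]; field_simp
        _ ≤ _ := by gcongr
    refine (Finset.sum_le_sum hp).trans ?_
    rw [← Finset.mul_sum, Finset.sum_add_distrib, ← Finset.sum_div]
    have : (∑ y ∈ Bl q d (d * κ ^ q), |(y i : ℝ)| ^ q) / κ ^ q ≤ n := by rw [div_le_iff₀ hκq]; linarith
    have h3 : ∑ y ∈ Bl q d (d * κ ^ q), (1 : ℝ) = n := by simp [hn]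
    rw [h3]
    have : κ ^ 2 * (n + (∑ y ∈ Bl q d (d * κ ^ q), |(y i : ℝ)| ^ q) / κ ^ q) ≤ κ ^ 2 * (n + n) := by gcongr
    linarith
  rcases min_cases (κ ^ q) (κ ^ 2) with ⟨h, _⟩ | ⟨h, _⟩ <;> rw [h]
  · have : 0 ≤ κ ^ q * n := by positivity
    linarith
  · exact h2

/-- E1 -/
lemma mc_near_one {q : ℝ} (hq : 2 ≤ q) {d : ℕ} {κ : ℝ} (hκ : 0 < κ) (φ : Fin d → ℝ) :
    |mc q d (d * κ ^ q) φ - 1| ≤ 4 * min (κ ^ q) (κ ^ 2) * ∑ j, Real.sin (φ j / 2) ^ 2 := by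
  have h' : (0 : ℝ) < (Bl q d (d * κ ^ q)).card := by
    exact_mod_cast Bl_card_pos hq (m := d) (M := d * κ ^ q) (by positivity)
  set B := Bl q d (d * κ ^ q) with hB
  have e : mc q d (d * κ ^ q) φ - 1 = (∑ y ∈ B, (∏ j, Real.cos (y j * φ j) - 1)) / B.card := by
    rw [mc, ← hB, Finset.sum_sub_distrib, sub_div]
    simp [h'.ne']
  rw [e, abs_div, Nat.abs_cast, div_le_iff₀ h']
  calc |∑ y ∈ B, (∏ j, Real.cos (y j * φ j) - 1)| ≤ ∑ y ∈ B, |∏ j, Real.cos (y j * φ j) - 1| := Finset.abs_sum_le_sum_abs _ _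
    _ ≤ ∑ y ∈ B, ∑ j, 2 * ((y j : ℝ) ^ 2 * Real.sin (φ j / 2) ^ 2) := by
      apply Finset.sum_le_sum; intro y _
      refine (prod_sub_one_le _ _ (fun j => Real.abs_cos_le_one _)).trans ?_
      exact Finset.sum_le_sum (fun j _ => one_sub_cos_le _ _)
    _ = ∑ j, 2 * Real.sin (φ j / 2) ^ 2 * ∑ y ∈ B, (y j : ℝ) ^ 2 := by
      rw [Finset.sum_comm]
      apply Finset.sum_congr rfl; intro j _
      rw [Finset.mul_sum]
      apply Finset.sum_congr rfl; intro y _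
      ring
    _ ≤ ∑ j, 2 * Real.sin (φ j / 2) ^ 2 * (2 * min (κ ^ q) (κ ^ 2) * B.card) := by
      apply Finset.sum_le_sum; intro j _
      exact mul_le_mul_of_nonneg_left (moment_two hq hκ j) (by positivity)
    _ = _ := by rw [← Finset.sum_mul, ← Finset.mul_sum]; ring

noncomputable def alph (q : ℝ) (d : ℕ) (N : ℝ) : ℝ := mc q d N (fun _ => Real.pi)

lemma cos_shift (a : ℤ) (x : ℝ) : Real.cos (a * x) = Real.cos (a * Real.pi) * Real.cos (a * (x - Real.pi)) := by
  have : (a : ℝ) * x = a * Real.pi + a * (x - Real.pi) := by ring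
  rw [this, Real.cos_add, Real.sin_int_mul_pi]; ring

/-- second case of E1 -/
lemma mc_near_alph {q : ℝ} (hq : 2 ≤ q) {d : ℕ} {κ : ℝ} (hκ : 0 < κ) (φ : Fin d → ℝ) :
    |mc q d (d * κ ^ q) φ - alph q d (d * κ ^ q)| ≤ 4 * min (κ ^ q) (κ ^ 2) * ∑ j, Real.cos (φ j / 2) ^ 2 := by
  have h' : (0 : ℝ) < (Bl q d (d * κ ^ q)).card := by
    exact_mod_cast Bl_card_pos hq (m := d) (M := d * κ ^ q) (by positivity)
  set B := Bl q d (d * κ ^ q) with hB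
  have e : mc q d (d * κ ^ q) φ - alph q d (d * κ ^ q) = (∑ y ∈ B, (∏ j, Real.cos (y j * φ j) - ∏ j, Real.cos (y j * Real.pi))) / B.card := by
    rw [alph, mc, mc, ← hB, Finset.sum_sub_distrib, sub_div]
  rw [e, abs_div, Nat.abs_cast, div_le_iff₀ h']
  calc |∑ y ∈ B, (∏ j, Real.cos (y j * φ j) - ∏ j, Real.cos (y j * Real.pi))| ≤ ∑ y ∈ B, |∏ j, Real.cos (y j * φ j) - ∏ j, Real.cos (y j * Real.pi)| := Finset.abs_sum_le_sum_abs _ _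
    _ ≤ ∑ y ∈ B, ∑ j, 2 * ((y j : ℝ) ^ 2 * Real.cos (φ j / 2) ^ 2) := by
      apply Finset.sum_le_sum; intro y _
      have e1 : ∏ j, Real.cos (y j * φ j) - ∏ j, Real.cos (y j * Real.pi) = (∏ j, Real.cos (y j * Real.pi)) * (∏ j, Real.cos (y j * (φ j - Real.pi)) - 1) := by
        rw [mul_sub, ← Finset.prod_mul_distrib, mul_one]
        congr 1
        exact Finset.prod_congr rfl (fun j _ => cos_shift _ _)
      rw [e1, abs_mul]
      have e2 : |∏ j, Real.cos (y j * Real.pi)| ≤ 1 := by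
        rw [Finset.abs_prod]
        exact Finset.prod_le_one (fun j _ => abs_nonneg _) (fun j _ => Real.abs_cos_le_one _)
      have e3 : |∏ j, Real.cos (y j * (φ j - Real.pi)) - 1| ≤ ∑ j, 2 * ((y j : ℝ) ^ 2 * Real.cos (φ j / 2) ^ 2) := by
        refine (prod_sub_one_le _ _ (fun j => Real.abs_cos_le_one _)).trans ?_
        apply Finset.sum_le_sum; intro j _
        refine (one_sub_cos_le _ _).trans (le_of_eq ?_)
        have : Real.sin ((φ j - Real.pi) / 2) = - Real.cos (φ j / 2) := by
          rw [show (φ j - Real.pi) / 2 = φ j / 2 - Real.pi / 2 by ring, Real.sin_sub_pi_div_two]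
        rw [this]; ring
      calc _ ≤ 1 * |∏ j, Real.cos (y j * (φ j - Real.pi)) - 1| := by gcongr
        _ ≤ _ := by rw [one_mul]; exact e3
    _ = ∑ j, 2 * Real.cos (φ j / 2) ^ 2 * ∑ y ∈ B, (y j : ℝ) ^ 2 := by
      rw [Finset.sum_comm]
      apply Finset.sum_congr rfl; intro j _
      rw [Finset.mul_sum]
      apply Finset.sum_congr rfl; intro y _
      ring
    _ ≤ ∑ j, 2 * Real.cos (φ j / 2) ^ 2 * (2 * min (κ ^ q) (κ ^ 2) * B.card) := by
      apply Finset.sum_le_sum; intro j _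
      exact mul_le_mul_of_nonneg_left (moment_two hq hκ j) (by positivity)
    _ = _ := by rw [← Finset.sum_mul, ← Finset.mul_sum]; ring


lemma mc_perm {q : ℝ} (hq : 2 ≤ q) {d : ℕ} {N : ℝ} (φ : Fin d → ℝ) :
    (d.factorial : ℝ) * ∑ y ∈ Bl q d N, ∏ j, Real.cos (y j * φ j) =
      ∑ y ∈ Bl q d N, ∑ π : Equiv.Perm (Fin d), ∏ j, Real.cos (y j * φ (π j)) := by
  classical
  have h : ∀ π : Equiv.Perm (Fin d), ∑ y ∈ Bl q d N, ∏ j, Real.cos (y j * φ (π j)) = ∑ y ∈ Bl q d N, ∏ j, Real.cos (y j * φ j) := by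
    intro π
    rw [← sum_perm_Bl hq π (fun y => ∏ j, Real.cos (y j * φ (π j)))]
    apply Finset.sum_congr rfl; intro y _
    exact Equiv.prod_comp π (fun j => Real.cos (y j * φ j))
  rw [Finset.sum_comm, Finset.sum_congr rfl (fun π _ => h π), Finset.sum_const, card_univ, Fintype.card_perm]
  simp

lemma swap_avg {d R : ℕ} (a b : Fin R → Fin d) (hab : ∀ r s, a r ≠ b s)
    (ha : Function.Injective a) (hb : Function.Injective b) (x : Fin d → ℝ) (W : Equiv.Perm (Fin d) → ℝ)
    (hW : ∀ r π, W (π * Equiv.swap (a r) (b r)) = W π) (s : Finset (Fin R)) :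
    ∑ π : Equiv.Perm (Fin d), (∏ r, x (π (a r))) * W π =
    ∑ π : Equiv.Perm (Fin d), (∏ r ∈ s, (x (π (a r)) + x (π (b r))) / 2) * (∏ r ∈ univ \ s, x (π (a r))) * W π := by
  classical
  induction s using Finset.induction_on with
  | empty => simp
  | insert r0 s hr ih =>
    rw [ih]
    set V : Equiv.Perm (Fin d) → ℝ := fun π => (∏ r ∈ s, (x (π (a r)) + x (π (b r))) / 2) * (∏ r ∈ univ \ insert r0 s, x (π (a r))) * W π with hV
    have hVinv : ∀ π, V (π * Equiv.swap (a r0) (b r0)) = V π := by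
      intro π
      simp only [hV, hW]
      have e : ∀ r, r ≠ r0 → Equiv.swap (a r0) (b r0) (a r) = a r ∧ Equiv.swap (a r0) (b r0) (b r) = b r := by
        intro r h
        exact ⟨Equiv.swap_apply_of_ne_of_ne (fun h' => h (ha h')) (hab _ _),
          Equiv.swap_apply_of_ne_of_ne (fun h' => hab _ _ h'.symm) (fun h' => h (hb h'))⟩
      congr 1
      congr 1
      · apply Finset.prod_congr rfl
        intro r hrs
        have := e r (fun h => hr (h ▸ hrs))
        rw [Equiv.Perm.mul_apply, Equiv.Perm.mul_apply, this.1, this.2]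
      · apply Finset.prod_congr rfl
        intro r hrs
        have := e r (fun h => by subst h; simp at hrs)
        rw [Equiv.Perm.mul_apply, this.1]
    have e1 : ∀ π : Equiv.Perm (Fin d), (∏ r ∈ s, (x (π (a r)) + x (π (b r))) / 2) * (∏ r ∈ univ \ s, x (π (a r))) * W π = x (π (a r0)) * V π := by
      intro π
      have : univ \ s = insert r0 (univ \ insert r0 s) := by
        ext r; simp only [mem_sdiff, mem_univ, true_and, mem_insert]
        by_cases h : r = r0
        · subst h; simp [hr]
        · simp [h]
      rw [this, Finset.prod_insert (by simp)]
      simp only [hV]; ring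
    have e2 : ∀ π : Equiv.Perm (Fin d), (∏ r ∈ insert r0 s, (x (π (a r)) + x (π (b r))) / 2) * (∏ r ∈ univ \ insert r0 s, x (π (a r))) * W π
        = (x (π (a r0)) * V π + x (π (b r0)) * V π) / 2 := by
      intro π
      rw [Finset.prod_insert hr]
      simp only [hV]; ring
    have e3 : ∑ π : Equiv.Perm (Fin d), x (π (b r0)) * V π = ∑ π : Equiv.Perm (Fin d), x (π (a r0)) * V π := by
      rw [← Equiv.sum_comp (Equiv.mulRight (Equiv.swap (a r0) (b r0)))]
      apply Finset.sum_congr rfl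
      intro π _
      simp only [Equiv.coe_mulRight, hVinv, Equiv.Perm.mul_apply, Equiv.swap_apply_right]
    rw [Finset.sum_congr rfl (fun π _ => e1 π), Finset.sum_congr rfl (fun π _ => e2 π), ← Finset.sum_div, Finset.sum_add_distrib, e3]
    ring

lemma Dbar_ge {d : ℕ} (hd : 8 ≤ d) (φ : Fin d → ℝ) :
    (d : ℝ) / 4 * min (∑ j, Real.sin (φ j / 2) ^ 2) (∑ j, Real.cos (φ j / 2) ^ 2) ≤
      ∑ i, ∑ j, (if i = j then 0 else 1 - |Real.cos (φ i) + Real.cos (φ j)| / 2) := by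
  classical
  have hd8 : (8 : ℝ) ≤ d := by exact_mod_cast hd
  set S := ∑ j, Real.sin (φ j / 2) ^ 2 with hS
  set S' := ∑ j, Real.cos (φ j / 2) ^ 2 with hS'
  set x := fun i => Real.cos (φ i) with hx
  have c1 : ∀ i, x i = 1 - 2 * Real.sin (φ i / 2) ^ 2 := by
    intro i
    have h2 : x i = 2 * Real.cos (φ i / 2) ^ 2 - 1 := by
      simp only [hx]; rw [← Real.cos_two_mul]; ring_nf
    linarith [Real.cos_sq_add_sin_sq (φ i / 2)]
  have c2 : ∀ i, x i = 2 * Real.cos (φ i / 2) ^ 2 - 1 := by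
    intro i; rw [c1]; linarith [Real.cos_sq_add_sin_sq (φ i / 2)]
  have hX1 : ∑ i, x i = d - 2 * S := by
    rw [Finset.sum_congr rfl (fun i _ => c1 i), Finset.sum_sub_distrib, ← Finset.mul_sum]; simp [hS]
  have hX2 : ∑ i, x i = 2 * S' - d := by
    rw [Finset.sum_congr rfl (fun i _ => c2 i), Finset.sum_sub_distrib, ← Finset.mul_sum]; simp [hS']
  have hS0 : 0 ≤ S := Finset.sum_nonneg (fun i _ => sq_nonneg _)
  have hS0' : 0 ≤ S' := Finset.sum_nonneg (fun i _ => sq_nonneg _)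
  have hsum : S + S' = d := by linarith
  have hx2 : ∑ i, x i ^ 2 ≤ d := by
    calc ∑ i, x i ^ 2 ≤ ∑ i : Fin d, (1 : ℝ) := Finset.sum_le_sum (fun i _ => Real.cos_sq_le_one _)
      _ = d := by simp
  have hall : S * S' ≤ ∑ i, ∑ j, (1 - |x i + x j| / 2) := by
    have hp : ∀ i j, (1 - (x i + x j) ^ 2 / 4) / 2 ≤ 1 - |x i + x j| / 2 := by
      intro i j
      rw [← sq_abs (x i + x j)]
      nlinarith [sq_nonneg (|x i + x j| - 2)]
    refine le_trans ?_ (Finset.sum_le_sum (fun i _ => Finset.sum_le_sum (fun j _ => hp i j)))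
    have e : ∑ i, ∑ j, (1 - (x i + x j) ^ 2 / 4) / 2 = (d ^ 2 - (2 * d * ∑ i, x i ^ 2 + 2 * (∑ i, x i) ^ 2) / 4) / 2 := by
      have : ∀ i j, (1 - (x i + x j) ^ 2 / 4) / 2 = 1 / 2 - x i ^ 2 / 8 - x j ^ 2 / 8 - x i * x j / 4 := by
        intro i j; ring
      simp only [this, Finset.sum_sub_distrib, ← Finset.sum_div, Finset.sum_const, card_univ, Fintype.card_fin, nsmul_eq_mul, ← Finset.mul_sum, ← Finset.sum_mul]
      ring
    rw [e]
    have h1 : ∑ i, x i = S' - S := by linarith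
    rw [h1]
    have : (d : ℝ) * ∑ i, x i ^ 2 ≤ d * d := by gcongr
    rw [← hsum] at this ⊢
    nlinarith
  have hdiag : ∑ i, (1 - |x i + x i| / 2) ≤ 2 * min S S' := by
    have hp1 : ∀ i, 1 - |x i + x i| / 2 ≤ 2 * Real.sin (φ i / 2) ^ 2 := by
      intro i
      have := le_abs_self (x i + x i)
      linarith [c1 i]
    have hp2 : ∀ i, 1 - |x i + x i| / 2 ≤ 2 * Real.cos (φ i / 2) ^ 2 := by
      intro i
      have := neg_abs_le (x i + x i)
      linarith [c2 i]
    have q1 := Finset.sum_le_sum (s := univ) (fun i _ => hp1 i)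
    have q2 := Finset.sum_le_sum (s := univ) (fun i _ => hp2 i)
    rw [← Finset.mul_sum] at q1 q2
    rcases min_cases S S' with ⟨h, _⟩ | ⟨h, _⟩ <;> rw [h] <;> assumption
  have hsplit : ∑ i, ∑ j, (if i = j then 0 else 1 - |x i + x j| / 2) = ∑ i, ∑ j, (1 - |x i + x j| / 2) - ∑ i, (1 - |x i + x i| / 2) := by
    rw [← Finset.sum_sub_distrib]
    apply Finset.sum_congr rfl; intro i _
    rw [eq_sub_iff_add_eq, ← Finset.add_sum_erase univ (fun j => 1 - |x i + x j| / 2) (mem_univ i),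
      ← Finset.add_sum_erase univ (fun j => if i = j then 0 else 1 - |x i + x j| / 2) (mem_univ i)]
    simp only [if_true, zero_add]
    rw [add_comm]
    congr 1
    apply Finset.sum_congr rfl
    intro j hj
    rw [if_neg (fun h => (mem_erase.1 hj).1 h.symm)]
  rw [hsplit]
  have : min S S' * (d / 2) ≤ S * S' := by
    rcases min_cases S S' with ⟨h, _⟩ | ⟨h, _⟩ <;> rw [h] <;> nlinarith
  have hm0 : 0 ≤ min S S' := le_min hS0 hS0'
  nlinarith

lemma good_bound {q : ℝ} (hq : 2 ≤ q) {d : ℕ} {N : ℝ} (hN : 4 ≤ N) (hNd : N ≤ d / 2) (φ : Fin d → ℝ)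
    (hmin : 0 < min (∑ j, Real.sin (φ j / 2) ^ 2) (∑ j, Real.cos (φ j / 2) ^ 2))
    (y : Fin d → ℤ) (hy : y ∈ Bl q d N) (hgood : N / 2 ≤ ((univ.filter (fun i => |y i| = 1)).card : ℝ)) :
    |∑ π : Equiv.Perm (Fin d), ∏ j, Real.cos (y j * φ (π j))| ≤ d.factorial *
      (592 / (N / d * min (∑ j, Real.sin (φ j / 2) ^ 2) (∑ j, Real.cos (φ j / 2) ^ 2))) := by
  classical
  have hd8r : (8 : ℝ) ≤ d := by linarith
  have hd8 : 8 ≤ d := by exact_mod_cast hd8r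
  have hd0 : (0 : ℝ) < d := by linarith
  set mn := min (∑ j, Real.sin (φ j / 2) ^ 2) (∑ j, Real.cos (φ j / 2) ^ 2) with hmn
  set R := ⌈N / 2⌉₊ with hR
  have hRO : R ≤ (univ.filter (fun i => |y i| = 1)).card := Nat.ceil_le.2 hgood
  have hRZ : R ≤ (univ.filter (fun i => y i = 0)).card := by
    have h1 := card_ne_zero_le hq hy
    have h2 := Finset.card_filter_add_card_filter_not (s := (univ : Finset (Fin d))) (fun i => y i = 0)
    rw [card_univ, Fintype.card_fin] at h2
    have h2' : (((univ.filter (fun i => y i = 0)).card : ℕ) : ℝ) + ((univ.filter (fun i => ¬ y i = 0)).card : ℕ) = d := by exact_mod_cast h2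
    apply Nat.ceil_le.2
    have h3 : (((univ.filter (fun i => ¬ y i = 0)).card : ℕ) : ℝ) ≤ N := h1
    linarith
  obtain ⟨O, hOs, hOc⟩ := Finset.exists_subset_card_eq hRO
  obtain ⟨Z, hZs, hZc⟩ := Finset.exists_subset_card_eq hRZ
  set a : Fin R → Fin d := fun r => (O.equivFin.symm (Fin.cast hOc.symm r) : Fin d)
  set b : Fin R → Fin d := fun r => (Z.equivFin.symm (Fin.cast hZc.symm r) : Fin d)
  have ha : Function.Injective a := fun r s h => by
    have := O.equivFin.symm.injective (Subtype.ext h)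
    simpa using this
  have hb : Function.Injective b := fun r s h => by
    have := Z.equivFin.symm.injective (Subtype.ext h)
    simpa using this
  have hay : ∀ r, |y (a r)| = 1 := fun r => (mem_filter.1 (hOs (O.equivFin.symm (Fin.cast hOc.symm r)).2)).2
  have hby : ∀ r, y (b r) = 0 := fun r => (mem_filter.1 (hZs (Z.equivFin.symm (Fin.cast hZc.symm r)).2)).2
  have hab : ∀ r s, a r ≠ b s := by
    intro r s h
    have := hay r
    rw [h, hby] at this
    simp at this
  set x : Fin d → ℝ := fun i => Real.cos (φ i)
  set W : Equiv.Perm (Fin d) → ℝ := fun π => ∏ j ∈ univ \ univ.image a, Real.cos (y j * φ (π j)) with hWdef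
  have hW1 : ∀ π, |W π| ≤ 1 := by
    intro π
    rw [hWdef, Finset.abs_prod]
    exact Finset.prod_le_one (fun j _ => abs_nonneg _) (fun j _ => Real.abs_cos_le_one _)
  have hW : ∀ r π, W (π * Equiv.swap (a r) (b r)) = W π := by
    intro r π
    apply Finset.prod_congr rfl
    intro j hj
    by_cases hjb : j = b r
    · rw [hjb, hby]; simp
    · rw [Equiv.Perm.mul_apply, Equiv.swap_apply_of_ne_of_ne _ hjb]
      intro h
      simp [h] at hj
  have hfac : ∀ π : Equiv.Perm (Fin d), ∏ j, Real.cos (y j * φ (π j)) = (∏ r, x (π (a r))) * W π := by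
    intro π
    rw [hWdef, ← Finset.prod_sdiff (subset_univ (univ.image a)), mul_comm]
    congr 1
    rw [Finset.prod_image (fun r _ s _ h => ha h)]
    apply Finset.prod_congr rfl
    intro r _
    rcases abs_eq (by norm_num : (0:ℤ) ≤ 1) |>.1 (hay r) with h | h <;> simp [h, x]
  rw [Finset.sum_congr rfl (fun π _ => hfac π), swap_avg a b hab ha hb x W hW univ]
  set D : Fin d → Fin d → ℝ := fun i j => if i = j then 0 else 1 - |Real.cos (φ i) + Real.cos (φ j)| / 2 with hD
  have hterm : ∀ π : Equiv.Perm (Fin d), |(∏ r, (x (π (a r)) + x (π (b r))) / 2) * (∏ r ∈ univ \ univ, x (π (a r))) * W π| ≤ Real.exp (-∑ r, D (π (a r)) (π (b r))) := by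
    intro π
    rw [Finset.sdiff_self, Finset.prod_empty, mul_one, abs_mul, Finset.abs_prod, ← Finset.sum_neg_distrib, Real.exp_sum]
    have : ∏ r, |(x (π (a r)) + x (π (b r))) / 2| ≤ ∏ r, Real.exp (-D (π (a r)) (π (b r))) := by
      apply Finset.prod_le_prod (fun r _ => abs_nonneg _)
      intro r _
      simp only [hD]
      rw [if_neg (fun h => hab r r (π.injective h))]
      have := Real.add_one_le_exp (-(1 - |Real.cos (φ (π (a r))) + Real.cos (φ (π (b r)))| / 2))
      rw [abs_div, abs_two]
      simp only [x]
      linarith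
    calc _ ≤ (∏ r, |(x (π (a r)) + x (π (b r))) / 2|) * 1 := by
          apply mul_le_mul_of_nonneg_left (hW1 π)
          exact Finset.prod_nonneg (fun r _ => abs_nonneg _)
      _ ≤ _ := by rw [mul_one]; exact this
  refine (Finset.abs_sum_le_sum_abs _ _).trans ((Finset.sum_le_sum (fun π _ => hterm π)).trans ?_)
  have hDge := Dbar_ge hd8 φ
  rw [← hmn] at hDge
  set T := ∑ i, ∑ j, D i j with hT
  have hTge : (d : ℝ) / 4 * mn ≤ T := hDge
  have hRge : N / 2 ≤ R := Nat.le_ceil _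
  have hMge : N / d * mn / 8 ≤ R * (T / d ^ 2) := by
    calc N / d * mn / 8 = N / 2 * ((d : ℝ) / 4 * mn / d ^ 2) := by field_simp; ring
      _ ≤ R * (T / d ^ 2) := by gcongr
  have hpos : 0 < N / d * mn / 8 := by positivity
  have hcos : ∀ i j, |Real.cos (φ i) + Real.cos (φ j)| ≤ 2 := by
    intro i j
    have := abs_add_le (Real.cos (φ i)) (Real.cos (φ j))
    linarith [Real.abs_cos_le_one (φ i), Real.abs_cos_le_one (φ j)]
  have := perm_pair hd8 a b hab ha hb D ?_ ?_ ?_ _ rfl (hpos.trans_le hMge)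
  · refine this.trans ?_
    apply mul_le_mul_of_nonneg_left _ (Nat.cast_nonneg _)
    calc 74 / (R * (T / d ^ 2)) ≤ 74 / (N / d * mn / 8) := by gcongr
      _ = _ := by field_simp; norm_num
  · intro i j; simp only [hD]; split_ifs
    · exact le_rfl
    · linarith [hcos i j]
  · intro i j; simp only [hD]; split_ifs
    · norm_num
    · linarith [abs_nonneg (Real.cos (φ i) + Real.cos (φ j))]
  · intro i; simp [hD]

/-- E2 -/
lemma mc_small {q : ℝ} (hq : 2 ≤ q) : ∃ C : ℝ, 0 ≤ C ∧ ∀ (d : ℕ) (N : ℝ), 4 ≤ N → N ≤ d / 2 → ∀ φ : Fin d → ℝ,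
    0 < min (∑ j, Real.sin (φ j / 2) ^ 2) (∑ j, Real.cos (φ j / 2) ^ 2) →
    |mc q d N φ| ≤ C * (N / d) + 592 / (N / d * min (∑ j, Real.sin (φ j / 2) ^ 2) (∑ j, Real.cos (φ j / 2) ^ 2)) := by
  classical
  obtain ⟨C, hC, hbad⟩ := small_bad hq
  refine ⟨C, hC, fun d N hN hNd φ hmin => ?_⟩
  have hd0 : (0 : ℝ) < d := by linarith
  have hb := hbad d N (by exact_mod_cast hd0) hN hNd
  set mn := min (∑ j, Real.sin (φ j / 2) ^ 2) (∑ j, Real.cos (φ j / 2) ^ 2) with hmn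
  set Q := 592 / (N / d * mn)
  have hQ0 : 0 ≤ Q := by positivity
  have hcard : (0 : ℝ) < (Bl q d N).card := by exact_mod_cast Bl_card_pos hq (m := d) (M := N) (by linarith)
  have hf : (0 : ℝ) < d.factorial := by exact_mod_cast d.factorial_pos
  rw [mc, abs_div, Nat.abs_cast, div_le_iff₀ hcard]
  have key : ∀ y ∈ Bl q d N, |∑ π : Equiv.Perm (Fin d), ∏ j, Real.cos (y j * φ (π j))| ≤
      d.factorial * ((if ((univ.filter (fun i => |y i| = 1)).card : ℝ) < N / 2 then 1 else 0) + Q) := by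
    intro y hy
    split_ifs with h
    · have : |∑ π : Equiv.Perm (Fin d), ∏ j, Real.cos (y j * φ (π j))| ≤ d.factorial := by
        refine (Finset.abs_sum_le_sum_abs _ _).trans ?_
        calc _ ≤ ∑ π : Equiv.Perm (Fin d), (1 : ℝ) := by
              apply Finset.sum_le_sum; intro π _
              rw [Finset.abs_prod]
              exact Finset.prod_le_one (fun j _ => abs_nonneg _) (fun j _ => Real.abs_cos_le_one _)
          _ = _ := by simp [Fintype.card_perm]
      nlinarith
    · rw [zero_add]
      exact good_bound hq hN hNd φ hmin y hy (not_lt.1 h)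
  have h1 : d.factorial * |∑ y ∈ Bl q d N, ∏ j, Real.cos (y j * φ j)| ≤ d.factorial * ((C * (N / d) + Q) * (Bl q d N).card) := by
    calc d.factorial * |∑ y ∈ Bl q d N, ∏ j, Real.cos (y j * φ j)|
        = |d.factorial * ∑ y ∈ Bl q d N, ∏ j, Real.cos (y j * φ j)| := by rw [abs_mul, abs_of_pos hf]
      _ ≤ ∑ y ∈ Bl q d N, |∑ π : Equiv.Perm (Fin d), ∏ j, Real.cos (y j * φ (π j))| := by
        rw [mc_perm hq]; exact Finset.abs_sum_le_sum_abs _ _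
      _ ≤ _ := Finset.sum_le_sum key
      _ = d.factorial * (((Bl q d N).filter (fun y => ((univ.filter (fun i => |y i| = 1)).card : ℝ) < N / 2)).card + Q * (Bl q d N).card) := by
        rw [← Finset.mul_sum, Finset.sum_add_distrib]
        simp [mul_comm]
      _ ≤ _ := by
        apply mul_le_mul_of_nonneg_left _ hf.le
        linarith
  exact le_of_mul_le_mul_left h1 hf


lemma card_interval_le (s : Finset ℤ) (c r : ℝ) (hr : 0 ≤ r) (h : ∀ a ∈ s, |(a : ℝ) - c| ≤ r) : (s.card : ℝ) ≤ 2 * r + 1 := by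
  have hs : s ⊆ Icc ⌈c - r⌉ ⌊c + r⌋ := by
    intro a ha
    have := abs_le.1 (h a ha)
    rw [mem_Icc, Int.ceil_le, Int.le_floor]
    constructor <;> linarith
  have h1 := Finset.card_le_card hs
  rw [Int.card_Icc] at h1
  have h2 : (s.card : ℝ) ≤ ((⌊c + r⌋ + 1 - ⌈c - r⌉).toNat : ℝ) := by exact_mod_cast h1
  refine h2.trans ?_
  rcases le_total 0 (⌊c + r⌋ + 1 - ⌈c - r⌉) with h3 | h3
  · have : (((⌊c + r⌋ + 1 - ⌈c - r⌉).toNat : ℤ) : ℝ) = ((⌊c + r⌋ + 1 - ⌈c - r⌉ : ℤ) : ℝ) := by rw [Int.toNat_of_nonneg h3]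
    have e : ((⌊c + r⌋ + 1 - ⌈c - r⌉).toNat : ℝ) = ((⌊c + r⌋ + 1 - ⌈c - r⌉ : ℤ) : ℝ) := by exact_mod_cast this
    rw [e]; push_cast
    linarith [Int.floor_le (c + r), Int.le_ceil (c - r)]
  · rw [Int.toNat_of_nonpos h3]; simp; positivity

lemma sin_ge_dist (x : ℝ) : 2 / Real.pi * |x - Real.pi * round (x / Real.pi)| ≤ |Real.sin x| := by
  have hpi := Real.pi_pos
  set b := round (x / Real.pi)
  have h1 : |x - Real.pi * b| ≤ Real.pi / 2 := by
    have := abs_sub_round (x / Real.pi)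
    have e : x - Real.pi * b = Real.pi * (x / Real.pi - b) := by field_simp
    rw [e, abs_mul, abs_of_pos hpi]
    nlinarith
  have h2 := Real.mul_abs_le_abs_sin h1
  have h3 : |Real.sin (x - Real.pi * b)| = |Real.sin x| := by
    rw [mul_comm, Real.sin_sub_int_mul_pi, abs_mul]
    simp
  rw [h3] at h2
  exact h2

lemma bad_count (s : Finset ℤ) {φ κ L η : ℝ} (hφ : φ ≠ 0) (hκ : 0 < κ) (hL : 1 ≤ L) (hη : 0 ≤ η) (hφL : κ * |φ| ≤ L ^ 2)
    (h1 : ∀ a ∈ s, |(a : ℝ)| ≤ L * κ) (h2 : ∀ a ∈ s, |Real.sin (a * φ)| ≤ η * κ * |φ|) :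
    (s.card : ℝ) ≤ 5 * L ^ 3 * (4 * η * κ + 1) := by
  classical
  have hpi := Real.pi_pos
  have hpi3 := Real.pi_gt_three
  have hpi4 := Real.pi_lt_four
  have hφ0 : 0 < |φ| := abs_pos.2 hφ
  set f : ℤ → ℤ := fun a => round (a * φ / Real.pi) with hf
  have hL3 : 1 ≤ L ^ 3 := one_le_pow₀ hL
  set n := ⌊4 * η * κ + 1⌋₊
  have hfib : ∀ b ∈ s.image f, (s.filter (fun a => f a = b)).card ≤ n := by
    intro b _
    apply Nat.le_floor
    have := card_interval_le (s.filter (fun a => f a = b)) (Real.pi * b / φ) (2 * η * κ) (by positivity) ?_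
    · linarith
    · intro a ha
      obtain ⟨has, hab⟩ := mem_filter.1 ha
      have h3 := sin_ge_dist (a * φ)
      have h4 := h2 a has
      have hab' : round ((a : ℝ) * φ / Real.pi) = b := hab
      rw [hab'] at h3
      have e : (a : ℝ) - Real.pi * b / φ = (a * φ - Real.pi * b) / φ := by field_simp
      rw [e, abs_div, div_le_iff₀ hφ0]
      have h5 := h3.trans h4
      rw [div_mul_eq_mul_div, div_le_iff₀ hpi] at h5
      have : η * κ * |φ| * Real.pi ≤ η * κ * |φ| * 4 := by gcongr
      linarith
  have h3 := Finset.card_le_mul_card_image s n hfib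
  have himg : ((s.image f).card : ℝ) ≤ 5 * L ^ 3 := by
    have := card_interval_le (s.image f) 0 (2 * L ^ 3) (by positivity) ?_
    · linarith
    · intro b hb
      obtain ⟨a, ha, rfl⟩ := mem_image.1 hb
      rw [sub_zero]
      have h4 := abs_sub_round (a * φ / Real.pi)
      have h5 : |(a : ℝ) * φ / Real.pi| ≤ L ^ 3 := by
        rw [abs_div, abs_mul, abs_of_pos hpi, div_le_iff₀ hpi]
        calc |(a : ℝ)| * |φ| ≤ L * κ * |φ| := by gcongr; exact h1 a ha
          _ = L * (κ * |φ|) := by ring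
          _ ≤ L * L ^ 2 := by gcongr
          _ = L ^ 3 * 1 := by ring
          _ ≤ L ^ 3 * Real.pi := by gcongr; linarith
      have h6 : |((f a : ℤ) : ℝ)| ≤ |(a : ℝ) * φ / Real.pi| + |(a : ℝ) * φ / Real.pi - round ((a : ℝ) * φ / Real.pi)| := by
        have h7 := abs_sub_abs_le_abs_sub (((f a : ℤ) : ℝ)) ((a : ℝ) * φ / Real.pi)
        rw [abs_sub_comm ((f a : ℤ) : ℝ)] at h7
        simp only [hf] at h7 ⊢
        linarith
      linarith
  have hn : (n : ℝ) ≤ 4 * η * κ + 1 := Nat.floor_le (by positivity)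
  calc (s.card : ℝ) ≤ (n : ℝ) * ((s.image f).card : ℝ) := by exact_mod_cast h3
    _ ≤ (4 * η * κ + 1) * (5 * L ^ 3) := by gcongr
    _ = _ := by ring

lemma bad_prob {q : ℝ} (hq : 2 ≤ q) {d : ℕ} {κ L : ℝ} (hκ : 10000 ≤ κ) (hL : 1 ≤ L) (hL5 : L ^ 5 ≤ κ)
    {φ : ℝ} (hφ : φ ≠ 0) (hφL : κ * |φ| ≤ L ^ 2) (j : Fin d) :
    (((Bl q d (d * κ ^ q)).filter (fun y => |Real.sin (y j * φ)| ≤ κ / L ^ 5 * |φ|)).card : ℝ)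
      ≤ 6000001 / L ^ 2 * (Bl q d (d * κ ^ q)).card := by
  classical
  have hκ0 : 0 < κ := by linarith
  have hL0 : 0 < L := by linarith
  have hd : (0 : ℝ) < d := by exact_mod_cast (by have := j.2; omega : 0 < d)
  set B := Bl q d (d * κ ^ q) with hB
  set P := B.filter (fun y => |Real.sin (y j * φ)| ≤ κ / L ^ 5 * |φ|)
  set P1 := P.filter (fun y => |(y j : ℝ)| ≤ L * κ)
  set P2 := P.filter (fun y => ¬ |(y j : ℝ)| ≤ L * κ)
  have hP : (P1.card : ℝ) + P2.card = P.card := by exact_mod_cast Finset.card_filter_add_card_filter_not _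
  have hc0 : (0 : ℝ) ≤ B.card := Nat.cast_nonneg _
  have h2 : (P2.card : ℝ) ≤ 1 / L ^ 2 * B.card := by
    have hm := moment_q hq (d * κ ^ q) j
    have hm' : ∑ y ∈ B, |(y j : ℝ)| ^ q ≤ κ ^ q * B.card := by
      have : (d : ℝ) * ∑ y ∈ B, |(y j : ℝ)| ^ q ≤ d * (κ ^ q * B.card) := by linarith
      exact le_of_mul_le_mul_left this hd
    have h3 : (L ^ 2 * κ ^ q) * P2.card ≤ ∑ y ∈ B, |(y j : ℝ)| ^ q := by
      calc (L ^ 2 * κ ^ q) * P2.card = ∑ y ∈ P2, L ^ 2 * κ ^ q := by simp [mul_comm]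
        _ ≤ ∑ y ∈ P2, |(y j : ℝ)| ^ q := by
          apply Finset.sum_le_sum
          intro y hy
          have h := not_le.1 (mem_filter.1 hy).2
          calc L ^ 2 * κ ^ q = L ^ (2 : ℝ) * κ ^ q := by simp
            _ ≤ L ^ q * κ ^ q := by gcongr
            _ = (L * κ) ^ q := (Real.mul_rpow hL0.le hκ0.le).symm
            _ ≤ _ := Real.rpow_le_rpow (by positivity) h.le (by linarith)
        _ ≤ _ := by
          apply Finset.sum_le_sum_of_subset_of_nonneg
          · intro y hy; exact (mem_filter.1 (mem_filter.1 hy).1).1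
          · intro y _ _; exact rpow_q_nonneg _ _
    have hk : 0 < κ ^ q := by positivity
    have h4 : κ ^ q * (L ^ 2 * P2.card) ≤ κ ^ q * B.card := by nlinarith
    have h5 := le_of_mul_le_mul_left h4 hk
    rw [div_mul_eq_mul_div, one_mul, le_div_iff₀ (by positivity)]; linarith
  have h1 : (P1.card : ℝ) ≤ 6000000 / L ^ 2 * B.card := by
    set A := P1.image (fun y => y j)
    have hA : (A.card : ℝ) ≤ 5 * L ^ 3 * (4 * (1 / L ^ 5) * κ + 1) := by
      apply bad_count A hφ hκ0 hL (by positivity) hφL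
      · intro a ha
        obtain ⟨y, hy, rfl⟩ := mem_image.1 ha
        exact (mem_filter.1 hy).2
      · intro a ha
        obtain ⟨y, hy, rfl⟩ := mem_image.1 ha
        have := (mem_filter.1 (mem_filter.1 hy).1).2
        rw [one_div_mul_eq_div]
        exact this
    have hsub : P1 ⊆ A.biUnion (fun a => B.filter (fun y => y j = a)) := by
      intro y hy
      rw [mem_biUnion]
      exact ⟨y j, mem_image_of_mem _ hy, mem_filter.2 ⟨(mem_filter.1 (mem_filter.1 hy).1).1, rfl⟩⟩
    have h3 : (P1.card : ℝ) ≤ ∑ a ∈ A, ((B.filter (fun y => y j = a)).card : ℝ) := by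
      have := (Finset.card_le_card hsub).trans Finset.card_biUnion_le
      rw [← Nat.cast_sum]
      exact Nat.cast_le.2 this
    refine h3.trans ((Finset.sum_le_sum (fun a _ => large_slice hq hκ j a)).trans ?_)
    rw [Finset.sum_const, nsmul_eq_mul, ← mul_assoc]
    apply mul_le_mul_of_nonneg_right _ hc0
    have h4 : 1 ≤ κ / L ^ 5 := by rw [le_div_iff₀ (by positivity)]; linarith
    calc (A.card : ℝ) * (240000 / κ) ≤ (5 * L ^ 3 * (4 * (1 / L ^ 5) * κ + 1)) * (240000 / κ) := by gcongr
      _ ≤ (5 * L ^ 3 * (4 * (1 / L ^ 5) * κ + κ / L ^ 5)) * (240000 / κ) := by gcongr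
      _ = _ := by field_simp; norm_num
  calc (P.card : ℝ) = P1.card + P2.card := hP.symm
    _ ≤ 6000000 / L ^ 2 * B.card + 1 / L ^ 2 * B.card := add_le_add h1 h2
    _ = _ := by ring

/-- the shift argument -/
lemma mc_shift {q : ℝ} (hq : 2 ≤ q) {d : ℕ} {N : ℝ} (φ : Fin d → ℝ) (i : Fin d) :
    |∑ y ∈ Bl q d N, ∏ j, Real.cos (y j * φ j)| * |Real.sin (φ i / 2)| ≤ ((Bl q d N).filter (fun y => y i = 0)).card := by
  classical
  set B := Bl q d N with hB
  set F : (Fin d → ℤ) → ℂ := fun y => ∏ j, Complex.exp (Complex.I * (y j * φ j)) with hF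
  have hFn : ∀ y, ‖F y‖ = 1 := by
    intro y
    rw [hF, norm_prod]
    apply Finset.prod_eq_one
    intro j _
    rw [mul_comm, show ((y j : ℂ) * (φ j : ℂ)) = (((y j : ℝ) * φ j : ℝ) : ℂ) by push_cast; rfl]
    exact Complex.norm_exp_ofReal_mul_I _
  set T : (Fin d → ℤ) → (Fin d → ℤ) := fun y => Function.update y i (y i + 1) with hT
  have hTinj : Function.Injective T := by
    intro y z h
    funext j
    have := congrFun h j
    by_cases hj : j = i
    · subst hj; simp [hT] at this; exact this
    · simpa [hT, Function.update_of_ne hj] using this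
  have hFT : ∀ y, F (T y) = Complex.exp (Complex.I * φ i) * F y := by
    intro y
    simp only [hF]
    rw [← Finset.mul_prod_erase univ (fun j => Complex.exp (Complex.I * ((T y) j * φ j))) (mem_univ i),
      ← Finset.mul_prod_erase univ (fun j => Complex.exp (Complex.I * (y j * φ j))) (mem_univ i)]
    have q1 : Complex.exp (Complex.I * ((T y) i * φ i)) = Complex.exp (Complex.I * φ i) * Complex.exp (Complex.I * (y i * φ i)) := by
      rw [← Complex.exp_add]; congr 1; simp only [hT, Function.update_self]; push_cast; ring
    have q2 : ∏ j ∈ univ.erase i, Complex.exp (Complex.I * ((T y) j * φ j)) = ∏ j ∈ univ.erase i, Complex.exp (Complex.I * (y j * φ j)) := by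
      apply Finset.prod_congr rfl
      intro j hj
      simp only [hT, Function.update_of_ne (mem_erase.1 hj).1]
    rw [q2, q1, mul_assoc]
  have e1 : (1 - Complex.exp (Complex.I * φ i)) * ∑ y ∈ B, F y = ∑ y ∈ B \ B.image T, F y - ∑ y ∈ B.image T \ B, F y := by
    rw [Finset.sum_sdiff_sub_sum_sdiff, Finset.sum_image (fun _ _ _ _ h => hTinj h), sub_mul, one_mul, Finset.mul_sum]
    simp only [hFT]
  have hcard1 : (B.image T \ B).card = (B \ B.image T).card :=
    Finset.card_sdiff_comm (Finset.card_image_of_injective _ hTinj)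
  have hcard2 : (B \ B.image T).card ≤ (B.filter (fun y => y i = 0)).card := by
    apply Finset.card_le_card_of_injOn (fun y => Function.update y i 0)
    · intro y hy
      have hyB := (mem_sdiff.1 (mem_coe.1 hy)).1
      rw [mem_coe, mem_filter]
      refine ⟨?_, by simp⟩
      rw [hB, mem_Bl hq] at hyB ⊢
      rw [sum_update]
      have h0 : |((0 : ℤ) : ℝ)| ^ q = 0 := by simp [Real.zero_rpow (by linarith : q ≠ 0)]
      rw [h0]
      linarith [rpow_q_nonneg q (y i)]
    · -- injectivity
      have key : ∀ y ∈ B, ∀ z ∈ B, z ∉ B.image T → (∀ j, j ≠ i → y j = z j) → z i ≤ y i := by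
        intro y hy z hz hzT hyz
        by_contra hlt
        push Not at hlt
        apply hzT
        rw [mem_image]
        refine ⟨Function.update z i (z i - 1), ?_, ?_⟩
        · rw [hB, mem_Bl hq] at hy hz ⊢
          have hupd : y = Function.update z i (y i) := by
            funext j
            by_cases hj : j = i
            · subst hj; simp
            · rw [Function.update_of_ne hj, hyz j hj]
          rw [sum_update]
          rw [hupd, sum_update] at hy
          have hmax : |((z i - 1 : ℤ) : ℝ)| ≤ max |(z i : ℝ)| |(y i : ℝ)| := by
            have : |z i - 1| ≤ max |z i| |y i| := by
              rcases le_total 1 (z i) with h | h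
              · apply le_max_of_le_left
                rw [abs_of_nonneg (by omega), abs_of_nonneg (by omega)]; omega
              · apply le_max_of_le_right
                rw [abs_of_nonpos (by omega), abs_of_nonpos (by omega)]; omega
            exact_mod_cast this
          rcases le_max_iff.1 hmax with h | h
          · have := Real.rpow_le_rpow (abs_nonneg _) h (by linarith : 0 ≤ q)
            linarith
          · have := Real.rpow_le_rpow (abs_nonneg _) h (by linarith : 0 ≤ q)
            linarith
        · simp [hT]
      intro y hy z hz h
      rw [mem_coe, mem_sdiff] at hy hz
      have hoff : ∀ j, j ≠ i → y j = z j := by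
        intro j hj
        have := congrFun h j
        simpa [Function.update_of_ne hj] using this
      funext j
      by_cases hj : j = i
      · subst hj
        exact le_antisymm (key z hz.1 y hy.1 hy.2 (fun k hk => (hoff k hk).symm)) (key y hy.1 z hz.1 hz.2 hoff)
      · exact hoff j hj
  have hn : ∀ s : Finset (Fin d → ℤ), ‖∑ y ∈ s, F y‖ ≤ s.card := by
    intro s
    refine (norm_sum_le _ _).trans ?_
    simp [hFn]
  have e2 : ‖1 - Complex.exp (Complex.I * φ i)‖ = 2 * |Real.sin (φ i / 2)| := by
    rw [norm_sub_rev, Complex.norm_exp_I_mul_ofReal_sub_one, Real.norm_eq_abs, abs_mul, abs_two]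
  have h1 : ‖(1 - Complex.exp (Complex.I * φ i)) * ∑ y ∈ B, F y‖ ≤ 2 * (B.filter (fun y => y i = 0)).card := by
    rw [e1]
    refine (norm_sub_le _ _).trans ?_
    have q1 := hn (B \ B.image T)
    have q2 := hn (B.image T \ B)
    rw [hcard1] at q2
    have q3 : ((B \ B.image T).card : ℝ) ≤ (B.filter (fun y => y i = 0)).card := by exact_mod_cast hcard2
    linarith
  rw [norm_mul, e2, hF, mc_exp hq, Complex.norm_real, Real.norm_eq_abs] at h1
  linarith


lemma abs_cos_le_exp (x : ℝ) : |Real.cos x| ≤ Real.exp (-(Real.sin x ^ 2 / 2)) := by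
  apply abs_le_of_sq_le_sq _ (Real.exp_pos _).le
  rw [← Real.exp_nat_mul]
  have h := Real.add_one_le_exp (-(Real.sin x ^ 2))
  have h2 := Real.sin_sq_add_cos_sq x
  have : ((2 : ℕ) : ℝ) * -(Real.sin x ^ 2 / 2) = -(Real.sin x ^ 2) := by push_cast; ring
  rw [this]; linarith

lemma mc_large_c {q : ℝ} (hq : 2 ≤ q) {d : ℕ} {κ L : ℝ} (hκ : 10000 ≤ κ) (hL : 1 ≤ L) (hL5 : L ^ 5 ≤ κ)
    (φ : Fin d → ℝ) (hS : L ^ 12 ≤ κ ^ 2 * ∑ j, Real.sin (φ j / 2) ^ 2) (hall : ∀ i, κ * |φ i| ≤ L ^ 2) :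
    |mc q d (d * κ ^ q) φ| ≤ 12000100 / L ^ 2 := by
  classical
  have hκ0 : 0 < κ := by linarith
  have hL0 : 0 < L := by linarith
  have hd : 0 < d := by
    rcases Nat.eq_zero_or_pos d with h | h
    · subst h; simp at hS; have : 0 < L ^ 12 := by positivity
      linarith
    · exact h
  have hd0 : (0 : ℝ) < d := by exact_mod_cast hd
  set Φ := ∑ i, φ i ^ 2 with hΦ
  have hSΦ : ∑ j, Real.sin (φ j / 2) ^ 2 ≤ Φ := by
    apply Finset.sum_le_sum
    intro j _
    have h := Real.abs_sin_le_one (φ j/2)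
    have h1 : |Real.sin (φ j / 2)| ≤ |φ j / 2| := Real.abs_sin_le_abs
    have h2 := sq_le_sq.2 h1
    nlinarith [sq_nonneg (φ j)]
  have hΦL : L ^ 12 ≤ κ ^ 2 * Φ := hS.trans (by gcongr)
  have hΦ0 : 0 < Φ := by
    by_contra h
    push Not at h
    have h1 : 0 < L ^ 12 := by positivity
    have h2 : κ ^ 2 * Φ ≤ 0 := mul_nonpos_of_nonneg_of_nonpos (by positivity) h
    linarith
  set B := Bl q d (d * κ ^ q) with hB
  have hBc : (0 : ℝ) < B.card := by exact_mod_cast Bl_card_pos hq (m := d) (M := d * κ ^ q) (by positivity)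
  set β : ℝ := 6000001 / L ^ 2 with hβ
  set F : (Fin d → ℤ) → ℝ := fun y => ∑ j, ∑ i, if |Real.sin (y j * φ i)| ≤ κ / L ^ 5 * |φ i| then φ i ^ 2 else 0 with hF
  have hF0 : ∀ y, 0 ≤ F y := fun y => Finset.sum_nonneg (fun j _ => Finset.sum_nonneg (fun i _ => by split_ifs <;> positivity))
  have hEF : ∑ y ∈ B, F y ≤ d * Φ * β * B.card := by
    simp only [hF]
    rw [Finset.sum_comm]
    have : ∀ j : Fin d, ∑ y ∈ B, (∑ i, if |Real.sin (y j * φ i)| ≤ κ / L ^ 5 * |φ i| then φ i ^ 2 else 0) ≤ Φ * β * B.card := by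
      intro j
      rw [Finset.sum_comm, hΦ, Finset.sum_mul, Finset.sum_mul]
      apply Finset.sum_le_sum
      intro i _
      by_cases h0 : φ i = 0
      · simp [h0]
      · rw [← Finset.sum_filter, Finset.sum_const, nsmul_eq_mul]
        have := bad_prob hq hκ hL hL5 h0 (hall i) j
        rw [← hB] at this
        calc _ ≤ (β * B.card) * φ i ^ 2 := mul_le_mul_of_nonneg_right this (sq_nonneg _)
          _ = _ := by ring
    calc _ ≤ ∑ j : Fin d, Φ * β * B.card := Finset.sum_le_sum (fun j _ => this j)
      _ = _ := by rw [Finset.sum_const, nsmul_eq_mul, card_univ, Fintype.card_fin]; ring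
  set G := B.filter (fun y => F y ≤ d * Φ / 2)
  set G' := B.filter (fun y => ¬ F y ≤ d * Φ / 2)
  have hG' : (G'.card : ℝ) ≤ 2 * β * B.card := by
    have h1 : (G'.card : ℝ) * (d * Φ / 2) ≤ ∑ y ∈ B, F y := by
      calc (G'.card : ℝ) * (d * Φ / 2) = ∑ y ∈ G', (d * Φ / 2) := by simp
        _ ≤ ∑ y ∈ G', F y := Finset.sum_le_sum (fun y hy => (not_le.1 (mem_filter.1 hy).2).le)
        _ ≤ _ := Finset.sum_le_sum_of_subset_of_nonneg (filter_subset _ _) (fun y _ _ => hF0 y)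
    have h2 : (d * Φ / 2) * (G'.card : ℝ) ≤ (d * Φ / 2) * (2 * β * B.card) := by linarith
    exact le_of_mul_le_mul_left h2 (by positivity)
  have hf : (0 : ℝ) < d.factorial := by exact_mod_cast d.factorial_pos
  have hgood : ∀ y ∈ G, |∑ π : Equiv.Perm (Fin d), ∏ j, Real.cos (y j * φ (π j))| ≤ d.factorial * (72 / L ^ 2) := by
    intro y hy
    have hFy := (mem_filter.1 hy).2
    set g : Fin d → Fin d → ℝ := fun j i => Real.sin (y j * φ i) ^ 2 / 2 with hg
    set M := ∑ j, (∑ i, g j i) / d with hM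
    have hMge : κ ^ 2 * Φ / (4 * L ^ 10) ≤ M := by
      have h1 : ∀ j i, (κ / L ^ 5) ^ 2 / 2 * (φ i ^ 2 - if |Real.sin (y j * φ i)| ≤ κ / L ^ 5 * |φ i| then φ i ^ 2 else 0) ≤ g j i := by
        intro j i
        split_ifs with h
        · simp only [hg]; rw [sub_self, mul_zero]; positivity
        · push Not at h
          have h3 : (κ / L ^ 5 * |φ i|) ^ 2 ≤ |Real.sin (y j * φ i)| ^ 2 := by gcongr
          rw [mul_pow, sq_abs, sq_abs] at h3
          simp only [hg]; linarith
      have h2 : (κ / L ^ 5) ^ 2 / 2 * (d * Φ - F y) ≤ ∑ j, ∑ i, g j i := by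
        calc (κ / L ^ 5) ^ 2 / 2 * (d * Φ - F y) = ∑ j : Fin d, ∑ i, (κ / L ^ 5) ^ 2 / 2 * (φ i ^ 2 - if |Real.sin (y j * φ i)| ≤ κ / L ^ 5 * |φ i| then φ i ^ 2 else 0) := by
              simp only [← Finset.mul_sum, Finset.sum_sub_distrib, hF]
              rw [← hΦ, Finset.sum_const, nsmul_eq_mul, card_univ, Fintype.card_fin]
          _ ≤ _ := Finset.sum_le_sum (fun j _ => Finset.sum_le_sum (fun i _ => h1 j i))
      rw [hM, ← Finset.sum_div, le_div_iff₀ hd0]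
      calc κ ^ 2 * Φ / (4 * L ^ 10) * d = (κ / L ^ 5) ^ 2 / 2 * (d * Φ - d * Φ / 2) := by field_simp; ring
        _ ≤ (κ / L ^ 5) ^ 2 / 2 * (d * Φ - F y) := by gcongr
        _ ≤ _ := h2
    have hM0 : 0 < M := lt_of_lt_of_le (by positivity) hMge
    have hps := perm_single hd g (fun j i => by simp only [hg]; positivity)
      (fun j i => by simp only [hg]; linarith [Real.sin_sq_le_one (y j * φ i)]) M hM hM0
    calc |∑ π : Equiv.Perm (Fin d), ∏ j, Real.cos (y j * φ (π j))|
        ≤ ∑ π : Equiv.Perm (Fin d), |∏ j, Real.cos (y j * φ (π j))| := Finset.abs_sum_le_sum_abs _ _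
      _ ≤ ∑ π : Equiv.Perm (Fin d), Real.exp (-∑ j, g j (π j)) := by
          apply Finset.sum_le_sum
          intro π _
          rw [Finset.abs_prod, ← Finset.sum_neg_distrib, Real.exp_sum]
          exact Finset.prod_le_prod (fun _ _ => abs_nonneg _) (fun j _ => abs_cos_le_exp _)
      _ ≤ d.factorial * (18 / M) := hps
      _ ≤ d.factorial * (72 / L ^ 2) := by
          apply mul_le_mul_of_nonneg_left _ hf.le
          rw [div_le_div_iff₀ hM0 (by positivity)]
          have : L ^ 2 / 4 ≤ M := by
            refine le_trans ?_ hMge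
            rw [div_le_div_iff₀ (by norm_num) (by positivity)]
            calc L ^ 2 * (4 * L ^ 10) = L ^ 12 * 4 := by ring
              _ ≤ _ := by gcongr
          linarith
  have htriv : ∀ y : Fin d → ℤ, |∑ π : Equiv.Perm (Fin d), ∏ j, Real.cos (y j * φ (π j))| ≤ d.factorial := by
    intro y
    calc _ ≤ ∑ π : Equiv.Perm (Fin d), |∏ j, Real.cos (y j * φ (π j))| := Finset.abs_sum_le_sum_abs _ _
      _ ≤ ∑ π : Equiv.Perm (Fin d), (1 : ℝ) := by
          apply Finset.sum_le_sum
          intro π _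
          rw [Finset.abs_prod]
          exact Finset.prod_le_one (fun _ _ => abs_nonneg _) (fun j _ => Real.abs_cos_le_one _)
      _ = _ := by simp [Fintype.card_perm]
  have key : |∑ y ∈ B, ∏ j, Real.cos (y j * φ j)| ≤ 12000100 / L ^ 2 * B.card := by
    have h := mc_perm hq (N := d * κ ^ q) φ
    rw [← hB] at h
    have h1 : d.factorial * |∑ y ∈ B, ∏ j, Real.cos (y j * φ j)| ≤ d.factorial * (12000100 / L ^ 2 * B.card) := by
      rw [← abs_of_pos hf, ← abs_mul, abs_of_pos hf, h, ← Finset.sum_filter_add_sum_filter_not B (fun y => F y ≤ d * Φ / 2)]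
      refine (abs_add_le _ _).trans ?_
      have t1 : |∑ y ∈ G, ∑ π : Equiv.Perm (Fin d), ∏ j, Real.cos (y j * φ (π j))| ≤ B.card * (d.factorial * (72 / L ^ 2)) := by
        refine (Finset.abs_sum_le_sum_abs _ _).trans ((Finset.sum_le_sum hgood).trans ?_)
        rw [Finset.sum_const, nsmul_eq_mul]
        exact mul_le_mul_of_nonneg_right (Nat.cast_le.2 (card_le_card (filter_subset _ _))) (by positivity)
      have t2 : |∑ y ∈ G', ∑ π : Equiv.Perm (Fin d), ∏ j, Real.cos (y j * φ (π j))| ≤ 2 * β * B.card * d.factorial := by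
        refine (Finset.abs_sum_le_sum_abs _ _).trans ((Finset.sum_le_sum (fun y _ => htriv y)).trans ?_)
        rw [Finset.sum_const, nsmul_eq_mul]
        exact mul_le_mul_of_nonneg_right hG' hf.le
      refine (add_le_add t1 t2).trans ?_
      have : d.factorial * (12000100 / L ^ 2 * B.card) - (B.card * (d.factorial * (72 / L ^ 2)) + 2 * β * B.card * d.factorial) = d.factorial * (26 / L ^ 2) * B.card := by
        rw [hβ]; ring
      have h0 : 0 ≤ d.factorial * (26 / L ^ 2) * (B.card : ℝ) := by positivity
      linarith
    exact le_of_mul_le_mul_left h1 hf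
  unfold mc
  rw [← hB, abs_div, abs_of_pos hBc, div_le_iff₀ hBc]
  exact key

lemma mc_large {q : ℝ} (hq : 2 ≤ q) {d : ℕ} {κ L : ℝ} (hκ : 10000 ≤ κ) (hL : 1 ≤ L) (hL5 : L ^ 5 ≤ κ)
    (φ : Fin d → ℝ) (hφ : ∀ i, |φ i| ≤ Real.pi) (hS : L ^ 12 ≤ κ ^ 2 * ∑ j, Real.sin (φ j / 2) ^ 2) :
    |mc q d (d * κ ^ q) φ| ≤ 12000100 / L ^ 2 := by
  classical
  have hκ0 : 0 < κ := by linarith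
  have hL0 : 0 < L := by linarith
  by_cases hall : ∀ i, κ * |φ i| ≤ L ^ 2
  · exact mc_large_c hq hκ hL hL5 φ hS hall
  push Not at hall
  obtain ⟨i, hi⟩ := hall
  set B := Bl q d (d * κ ^ q) with hB
  have hBc : (0 : ℝ) < B.card := by exact_mod_cast Bl_card_pos hq (m := d) (M := d * κ ^ q) (by positivity)
  have h1 := mc_shift hq (N := d * κ ^ q) φ i
  have h2 := large_slice hq hκ i 0 
  rw [← hB] at h1 h2
  have hpi := Real.pi_pos
  have h3 : |φ i| / Real.pi ≤ |Real.sin (φ i / 2)| := by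
    have := Real.mul_abs_le_abs_sin (x := φ i / 2) (by rw [abs_div, abs_two]; linarith [hφ i])
    rw [abs_div, abs_two] at this
    calc _ = 2 / Real.pi * (|φ i| / 2) := by field_simp
      _ ≤ _ := this
  have h4 : L ^ 2 / (κ * 4) ≤ |Real.sin (φ i / 2)| := by
    refine le_trans ?_ h3
    rw [div_le_div_iff₀ (by positivity) hpi]
    calc L ^ 2 * Real.pi ≤ (κ * |φ i|) * 4 := by gcongr; exact Real.pi_le_four
      _ = _ := by ring
  unfold mc
  rw [← hB, abs_div, abs_of_pos hBc, div_le_iff₀ hBc]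
  set X := |∑ y ∈ B, ∏ j, Real.cos (y j * φ j)|
  have h5 : X * (L ^ 2 / (κ * 4)) ≤ 240000 / κ * B.card := (mul_le_mul_of_nonneg_left h4 (abs_nonneg _)).trans (h1.trans h2)
  have h6 : X ≤ 960000 / L ^ 2 * B.card := by
    have : X * (L ^ 2 / (κ * 4)) = X * L^2 / (κ * 4) := by ring
    rw [this, div_le_iff₀ (by positivity)] at h5
    rw [div_mul_eq_mul_div, le_div_iff₀ (by positivity)]
    calc X * L ^ 2 ≤ _ := h5
      _ = _ := by field_simp; ring
  refine h6.trans ?_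
  gcongr
  norm_num


/-- Cesaro means of geometric sequences -/
noncomputable def aK (K : ℕ) (s : ℝ) : ℝ := (∑ k ∈ range K, (1 - s) ^ k) / K

lemma aK_nonneg {K : ℕ} {s : ℝ} (h1 : s ≤ 1) : 0 ≤ aK K s := by
  unfold aK
  have : 0 ≤ 1 - s := by linarith
  positivity

lemma aK_le_one {K : ℕ} {s : ℝ} (h0 : 0 ≤ s) (h1 : s ≤ 1) : aK K s ≤ 1 := by
  unfold aK
  apply div_le_one_of_le₀ _ (Nat.cast_nonneg _)
  calc _ ≤ ∑ k ∈ range K, (1 : ℝ) := Finset.sum_le_sum (fun k _ => pow_le_one₀ (by linarith) (by linarith))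
    _ = _ := by simp

lemma aK_near {K : ℕ} (hK : 0 < K) {s : ℝ} (h0 : 0 ≤ s) (h1 : s ≤ 1) : |1 - aK K s| ≤ K * s := by
  have hK' : (0 : ℝ) < K := by exact_mod_cast hK
  rw [abs_of_nonneg (by linarith [aK_le_one (K := K) h0 h1])]
  unfold aK
  have : (K : ℝ) * (1 - K * s) ≤ ∑ k ∈ range K, (1 - s) ^ k := by
    calc (K : ℝ) * (1 - K * s) = ∑ k ∈ range K, (1 - K * s) := by rw [Finset.sum_const, nsmul_eq_mul, card_range]
      _ ≤ _ := by
        apply Finset.sum_le_sum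
        intro k hk
        have hb := one_add_mul_le_pow (a := -s) (by linarith) k
        have : (k : ℝ) * s ≤ K * s := by
          apply mul_le_mul_of_nonneg_right _ h0
          exact_mod_cast (mem_range.1 hk).le
        calc 1 - K * s ≤ 1 + k * -s := by linarith
          _ ≤ _ := hb
          _ = _ := by ring
  have h2 : 1 - K * s ≤ (∑ k ∈ range K, (1 - s) ^ k) / K := by
    rw [le_div_iff₀ hK']; linarith
  linarith

lemma aK_far {K : ℕ} (hK : 0 < K) {s : ℝ} (h0 : 0 < s) (h1 : s ≤ 1) : aK K s ≤ 1 / (K * s) := by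
  have hK' : (0 : ℝ) < K := by exact_mod_cast hK
  unfold aK
  rw [div_le_div_iff₀ hK' (by positivity)]
  have h := geom_sum_mul_neg (1 - s) K
  have h3 : 0 ≤ (1 - s) ^ K := pow_nonneg (by linarith) _
  rw [sub_sub_cancel] at h
  calc _ = K * ((∑ k ∈ range K, (1 - s) ^ k) * s) := by ring
    _ = K * (1 - (1 - s) ^ K) := by rw [h]
    _ ≤ K * 1 := by gcongr; linarith
    _ = _ := by ring

lemma geo_sum1 {ρ : ℝ} (hρ : 2 ≤ ρ) {a U : ℝ} (ha : 0 ≤ a) (hU : 0 ≤ U) (m : ℕ) :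
    ∑ n ∈ range m, (if a * ρ ^ n ≤ U then a * ρ ^ n else 0) ≤ 2 * U := by
  have key : ∑ n ∈ range m, (if a * ρ ^ n ≤ U then a * ρ ^ n else 0) ≤ 2 * U ∧
      ∑ n ∈ range m, (if a * ρ ^ n ≤ U then a * ρ ^ n else 0) ≤ a * ρ ^ m := by
    induction m with
    | zero => simp [ha, hU]
    | succ m ih =>
      rw [Finset.sum_range_succ]
      have h0 : 0 ≤ a * ρ ^ m := by positivity
      have h1 : 2 * (a * ρ ^ m) ≤ a * ρ ^ (m + 1) := by
        rw [pow_succ]; nlinarith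
      split_ifs with h
      · constructor <;> linarith [ih.1, ih.2]
      · constructor <;> linarith [ih.1, ih.2]
  exact key.1

lemma geo_sum2 {r : ℝ} (hr : 1 < r) (m : ℕ) : ∀ a : ℝ, 0 ≤ a → 
    ∑ n ∈ range m, (if 1 ≤ a * r ^ n then (a * r ^ n)⁻¹ else 0) ≤ r / (r - 1) ∧ 
    (1 ≤ a → ∑ n ∈ range m, (if 1 ≤ a * r ^ n then (a * r ^ n)⁻¹ else 0) ≤ r / (r - 1) * a⁻¹) := by
  have hC : 0 < r / (r - 1) := div_pos (by linarith) (by linarith)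
  induction m with
  | zero => intro a ha; simp; constructor
            · exact hC.le
            · intro h; positivity
  | succ m ih =>
    intro a ha
    rw [Finset.sum_range_succ']
    have e : ∀ n, a * r ^ (n + 1) = (a * r) * r ^ n := fun n => by ring
    simp only [e, pow_zero, mul_one]
    obtain ⟨i1, i2⟩ := ih (a * r) (by positivity)
    have key : 1 ≤ a → ∑ n ∈ range m, (if 1 ≤ a * r * r ^ n then (a * r * r ^ n)⁻¹ else 0) + (if 1 ≤ a then a⁻¹ else 0) ≤ r / (r - 1) * a⁻¹ := by
      intro h
      rw [if_pos h]
      have := i2 (by nlinarith)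
      have e2 : r / (r - 1) * (a * r)⁻¹ + a⁻¹ = r / (r - 1) * a⁻¹ := by
        have : r - 1 ≠ 0 := by linarith
        field_simp; ring
      linarith
    refine ⟨?_, key⟩
    by_cases h : 1 ≤ a
    · refine (key h).trans ?_
      have := inv_le_one_of_one_le₀ h
      nlinarith
    · rw [if_neg h, add_zero]; exact i1

noncomputable def Psi (z : ℝ) : ℝ := if z ≤ 1 then z else z ^ (-(1/6 : ℝ))

lemma geo_sum3 {ρ s : ℝ} (hρ : 1 < ρ) (hs : 0 < s) : ∃ C : ℝ, 0 ≤ C ∧ ∀ a : ℝ, 0 ≤ a → ∀ m : ℕ,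
    ∑ n ∈ range m, (if 1 ≤ a * ρ ^ n then (a * ρ ^ n) ^ (-s) else 0) ≤ C := by
  have hr : 1 < ρ ^ s := Real.one_lt_rpow hρ hs
  refine ⟨ρ ^ s / (ρ ^ s - 1), (div_pos (by linarith) (by linarith)).le, fun a ha m => ?_⟩
  refine le_trans (Finset.sum_le_sum ?_) (geo_sum2 hr m (a ^ s) (by positivity)).1
  intro n _
  have e : a ^ s * (ρ ^ s) ^ n = (a * ρ ^ n) ^ s := by
    rw [Real.mul_rpow ha (by positivity), ← Real.rpow_natCast, ← Real.rpow_natCast, ← Real.rpow_mul (by linarith), ← Real.rpow_mul (by linarith), mul_comm s]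
  rw [e]
  by_cases h : 1 ≤ a * ρ ^ n
  · rw [if_pos h, if_pos (Real.one_le_rpow h hs.le), Real.rpow_neg (by positivity)]
  · rw [if_neg h]; split_ifs <;> positivity

lemma Psi_sum {ρ : ℝ} (hρ : 2 ≤ ρ) : ∃ C : ℝ, 0 ≤ C ∧ ∀ a : ℝ, 0 ≤ a → ∀ m : ℕ,
    ∑ n ∈ range m, Psi (a * ρ ^ n) ≤ C := by
  obtain ⟨C, hC, h⟩ := geo_sum3 (ρ := ρ) (s := 1/6) (by linarith) (by norm_num)
  refine ⟨2 * 1 + C, by linarith, fun a ha m => ?_⟩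
  refine le_trans ?_ (add_le_add (geo_sum1 hρ ha zero_le_one m) (h a ha m))
  rw [← Finset.sum_add_distrib]
  apply Finset.sum_le_sum
  intro n _
  unfold Psi
  have : 0 ≤ a * ρ ^ n := by positivity
  split_ifs with h1 h2 h2
  · have : 0 ≤ (a * ρ ^ n) ^ (-(1/6:ℝ)) := by positivity
    linarith
  · linarith
  · linarith
  · linarith

lemma Psi_nonneg {z : ℝ} (h : 0 ≤ z) : 0 ≤ Psi z := by
  unfold Psi; split_ifs <;> positivity

lemma le_Psi {z X A : ℝ} (h1 : z ≤ 1 → X ≤ A * z) (h2 : 1 < z → X ≤ A * z ^ (-(1/6 : ℝ))) : X ≤ A * Psi z := by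
  unfold Psi
  split_ifs with h
  · exact h1 h
  · exact h2 (not_le.1 h)

lemma inv_le_rpow_sixth {z : ℝ} (h : 1 ≤ z) : 1 / z ≤ z ^ (-(1/6 : ℝ)) := by
  rw [one_div, ← Real.rpow_neg_one]
  exact Real.rpow_le_rpow_of_exponent_le h (by norm_num)

noncomputable def kap (q : ℝ) (d n : ℕ) : ℝ := 2 ^ n * (d : ℝ) ^ (-(1 / q))
noncomputable def Kn (q : ℝ) (d n : ℕ) : ℕ := ⌈(d : ℝ) * min (kap q d n ^ q) (kap q d n ^ 2)⌉₊
noncomputable def alp (q : ℝ) (d n : ℕ) : ℝ := if kap q d n ^ q ≤ 1 / 2 then alph q d ((2 ^ n) ^ q) else 0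
noncomputable def Em (q : ℝ) (d n : ℕ) (φ : Fin d → ℝ) : ℝ :=
  mc q d ((2 ^ n) ^ q) φ - aK (Kn q d n) ((∑ j, Real.sin (φ j / 2) ^ 2) / d)
    - alp q d n * aK (Kn q d n) ((∑ j, Real.cos (φ j / 2) ^ 2) / d)

lemma kap_pos (q : ℝ) {d : ℕ} (hd : 0 < d) (n : ℕ) : 0 < kap q d n := by
  unfold kap
  have : (0 : ℝ) < d := by exact_mod_cast hd
  positivity

lemma kap_q {q : ℝ} (hq : 2 ≤ q) {d : ℕ} (hd : 0 < d) (n : ℕ) : (d : ℝ) * kap q d n ^ q = (2 ^ n) ^ q := by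
  unfold kap
  have h : (0 : ℝ) < d := by exact_mod_cast hd
  rw [Real.mul_rpow (by positivity) (by positivity), ← Real.rpow_mul h.le]
  have : -(1 / q) * q = -1 := by field_simp
  rw [this, Real.rpow_neg_one]
  field_simp

lemma one_le_tau {q : ℝ} (hq : 2 ≤ q) {d : ℕ} (hd : 0 < d) (n : ℕ) : 1 ≤ (d : ℝ) * min (kap q d n ^ q) (kap q d n ^ 2) := by
  have h : (1 : ℝ) ≤ d := by exact_mod_cast hd
  have h2 : (1 : ℝ) ≤ 2 ^ n := one_le_pow₀ (by norm_num)
  rw [mul_min_of_nonneg _ _ (by linarith), le_min_iff]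
  constructor
  · rw [kap_q hq hd]
    exact Real.one_le_rpow h2 (by linarith)
  · unfold kap
    rw [mul_pow]
    have e : (d : ℝ) * ((2 ^ n) ^ 2 * ((d : ℝ) ^ (-(1 / q))) ^ 2) = (2 ^ n) ^ 2 * (d : ℝ) ^ (1 - 2 / q) := by
      rw [← Real.rpow_natCast ((d : ℝ) ^ (-(1 / q))), ← Real.rpow_mul (by linarith)]
      have : (d : ℝ) ^ (1 - 2 / q) = d * (d : ℝ) ^ (-(1 / q) * (2 : ℕ)) := by
        rw [show 1 - 2 / q = 1 + -(1 / q) * (2 : ℕ) by push_cast; ring, Real.rpow_add (by linarith), Real.rpow_one]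
      rw [this]; ring
    rw [e]
    have h3 : (1 : ℝ) ≤ (d : ℝ) ^ (1 - 2 / q) := by
      apply Real.one_le_rpow h
      have : 2 / q ≤ 1 := by rw [div_le_one (by linarith)]; exact hq
      linarith
    have h4 : (1 : ℝ) ≤ (2 ^ n) ^ 2 := one_le_pow₀ h2
    nlinarith

lemma abs_sub_le_add (a b : ℝ) : |a - b| ≤ |a| + |b| := norm_sub_le (E := ℝ) a b


lemma alph_le {q : ℝ} (hq : 2 ≤ q) {d n : ℕ} : |alp q d n| ≤ 1 := by
  unfold alp
  split_ifs
  · exact mc_le_one hq (by positivity) _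
  · simp

lemma SS_sum {d : ℕ} (φ : Fin d → ℝ) : ∑ j, Real.sin (φ j / 2) ^ 2 + ∑ j, Real.cos (φ j / 2) ^ 2 = d := by
  rw [← Finset.sum_add_distrib]
  simp [Real.sin_sq_add_cos_sq]

lemma Kn_pos {q : ℝ} (hq : 2 ≤ q) {d : ℕ} (hd : 0 < d) (n : ℕ) : 0 < Kn q d n := by
  unfold Kn
  exact Nat.ceil_pos.2 (lt_of_lt_of_le one_pos (one_le_tau hq hd n))

lemma aKn_near {q : ℝ} (hq : 2 ≤ q) {d : ℕ} (hd : 0 < d) (n : ℕ) {S : ℝ} (h0 : 0 ≤ S) (h1 : S ≤ d) :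
    |1 - aK (Kn q d n) (S / d)| ≤ 2 * min (kap q d n ^ q) (kap q d n ^ 2) * S := by
  have h : (0 : ℝ) < d := by exact_mod_cast hd
  have ht := one_le_tau hq hd n
  refine (aK_near (Kn_pos hq hd n) (by positivity) ((div_le_one h).2 h1)).trans ?_
  set τ := min (kap q d n ^ q) (kap q d n ^ 2) with hτ
  have hK : (Kn q d n : ℝ) ≤ 2 * (d * τ) := by
    have := Nat.ceil_lt_add_one (a := d * τ) (by linarith)
    unfold Kn; rw [← hτ]; linarith
  calc (Kn q d n : ℝ) * (S / d) ≤ 2 * (d * τ) * (S / d) := by gcongr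
    _ = _ := by field_simp

lemma aKn_far {q : ℝ} (hq : 2 ≤ q) {d : ℕ} (hd : 0 < d) (n : ℕ) {S : ℝ} (h0 : 0 < S) (h1 : S ≤ d) :
    |aK (Kn q d n) (S / d)| ≤ 1 / (min (kap q d n ^ q) (kap q d n ^ 2) * S) := by
  have h : (0 : ℝ) < d := by exact_mod_cast hd
  have ht := one_le_tau hq hd n
  rw [abs_of_nonneg (aK_nonneg ((div_le_one h).2 h1))]
  refine (aK_far (Kn_pos hq hd n) (by positivity) ((div_le_one h).2 h1)).trans ?_
  set τ := min (kap q d n ^ q) (kap q d n ^ 2) with hτ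
  have hτ0 : 0 < τ := by
    by_contra hh
    push Not at hh
    nlinarith
  have hK : d * τ ≤ (Kn q d n : ℝ) := Nat.le_ceil _
  apply one_div_le_one_div_of_le (by positivity)
  calc τ * S = (d * τ) * (S / d) := by field_simp
    _ ≤ _ := by gcongr

lemma Em_le3 {q : ℝ} (hq : 2 ≤ q) {d : ℕ} (hd : 0 < d) (n : ℕ) (φ : Fin d → ℝ) : |Em q d n φ| ≤ 3 := by
  have h : (0 : ℝ) < d := by exact_mod_cast hd
  have hS := SS_sum φ
  have hS0 : 0 ≤ ∑ j, Real.sin (φ j / 2) ^ 2 := Finset.sum_nonneg (fun _ _ => sq_nonneg _)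
  have hS0' : 0 ≤ ∑ j, Real.cos (φ j / 2) ^ 2 := Finset.sum_nonneg (fun _ _ => sq_nonneg _)
  unfold Em
  set S := ∑ j, Real.sin (φ j / 2) ^ 2
  set S' := ∑ j, Real.cos (φ j / 2) ^ 2
  have a1 := mc_le_one hq (N := (2 ^ n) ^ q) (by positivity) φ
  have a2 : |aK (Kn q d n) (S / d)| ≤ 1 := by
    rw [abs_of_nonneg (aK_nonneg ((div_le_one h).2 (by linarith)))]
    exact aK_le_one (by positivity) ((div_le_one h).2 (by linarith))
  have a3 : |aK (Kn q d n) (S' / d)| ≤ 1 := by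
    rw [abs_of_nonneg (aK_nonneg ((div_le_one h).2 (by linarith)))]
    exact aK_le_one (by positivity) ((div_le_one h).2 (by linarith))
  have a4 : |alp q d n * aK (Kn q d n) (S' / d)| ≤ 1 := by
    rw [abs_mul]; exact mul_le_one₀ (alph_le hq) (abs_nonneg _) a3
  rw [abs_le] at *
  constructor <;> linarith [a1.1, a1.2, a2.1, a2.2, a4.1, a4.2]

lemma Em_small {q : ℝ} (hq : 2 ≤ q) : ∃ C : ℝ, 0 ≤ C ∧ ∀ (d : ℕ), 0 < d → ∀ n, 1 ≤ n → kap q d n ^ q ≤ 1 / 2 → ∀ φ : Fin d → ℝ,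
    |Em q d n φ| ≤ C * kap q d n ^ q + 2 / (2 ^ n) ^ q + 593 * Psi (kap q d n ^ q * min (∑ j, Real.sin (φ j / 2) ^ 2) (∑ j, Real.cos (φ j / 2) ^ 2)) := by
  obtain ⟨C, hC, hmc⟩ := mc_small hq
  refine ⟨C, hC, fun d hd n hn hu φ => ?_⟩
  have h : (0 : ℝ) < d := by exact_mod_cast hd
  have hS := SS_sum φ
  have hS0 : 0 ≤ ∑ j, Real.sin (φ j / 2) ^ 2 := Finset.sum_nonneg (fun _ _ => sq_nonneg _)
  have hS0' : 0 ≤ ∑ j, Real.cos (φ j / 2) ^ 2 := Finset.sum_nonneg (fun _ _ => sq_nonneg _)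
  have hκ := kap_pos q hd n
  have hκ1 : kap q d n ≤ 1 := by
    by_contra hh
    push Not at hh
    have := Real.one_le_rpow hh.le (by linarith : 0 ≤ q)
    linarith
  have hτ : min (kap q d n ^ q) (kap q d n ^ 2) = kap q d n ^ q := by
    apply min_eq_left
    rw [← Real.rpow_natCast]
    exact Real.rpow_le_rpow_of_exponent_ge hκ hκ1 (by exact_mod_cast hq)
  have hN := kap_q hq hd n
  have b1 := mc_near_one hq (d := d) hκ φ
  have b2 := mc_near_alph hq (d := d) hκ φ
  have b3 := hmc d ((2 ^ n) ^ q) (by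
    calc (4 : ℝ) = (2 : ℝ) ^ (2 : ℝ) := by norm_num
      _ ≤ (2 : ℝ) ^ q := Real.rpow_le_rpow_of_exponent_le (by norm_num) hq
      _ ≤ _ := Real.rpow_le_rpow (by norm_num) (by simpa using pow_le_pow_right₀ (a := (2 : ℝ)) (by norm_num) hn) (by linarith)) (by rw [← hN]; nlinarith) φ
  have hal : alp q d n = alph q d ((2 ^ n) ^ q) := if_pos hu
  have hal1 := alph_le hq (d := d) (n := n)
  unfold Em
  have ud : (2 ^ n) ^ q / (d : ℝ) = kap q d n ^ q := by rw [← hN]; field_simp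
  rw [ud] at b3
  rw [hN, hτ] at b1 b2
  rw [← hal] at b2
  set u := kap q d n ^ q with hudef
  have hu0 : 0 < u := by positivity
  set m := mc q d ((2 ^ n) ^ q) φ
  set S := ∑ j, Real.sin (φ j / 2) ^ 2
  set S' := ∑ j, Real.cos (φ j / 2) ^ 2
  set a := aK (Kn q d n) (S / d)
  set a' := aK (Kn q d n) (S' / d)
  set al := alp q d n
  have far : ∀ T : ℝ, d / 2 ≤ T → T ≤ d → |aK (Kn q d n) (T / d)| ≤ 2 / (2 ^ n) ^ q := by
    intro T h1 h2
    refine (aKn_far hq hd n (by linarith) h2).trans ?_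
    rw [hτ, ← hN, div_le_div_iff₀ (mul_pos hu0 (by linarith)) (by positivity)]
    nlinarith
  have hPsi : ∀ z X Y : ℝ, 0 ≤ z → 0 ≤ Y → X ≤ 6 * z + Y → (0 < z → X ≤ C * u + 593 / z + Y) → X ≤ C * u + Y + 593 * Psi z := by
    intro z X Y hz hY h1 h2
    have hCu : 0 ≤ C * u := by positivity
    have : X - (C * u + Y) ≤ 593 * Psi z := by
      apply le_Psi
      · intro _; linarith
      · intro hz1
        have := h2 (by linarith)
        have h4 := inv_le_rpow_sixth hz1.le
        have h5 : 593 / z = 593 * (1 / z) := by ring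
        linarith
    linarith
  have hY : 0 ≤ 2 / ((2 : ℝ) ^ n) ^ q := by positivity
  rcases le_total S S' with hSS | hSS
  · rw [min_eq_left hSS] at b3 ⊢
    have c1 := aKn_near hq hd n hS0 (by linarith)
    have c2 := far S' (by linarith) (by linarith)
    rw [hτ] at c1
    have c3 : |al * a'| ≤ 2 / (2 ^ n) ^ q := by
      rw [abs_mul]
      exact (mul_le_of_le_one_left (abs_nonneg _) hal1).trans c2
    apply hPsi _ _ _ (by positivity) hY
    · have e : m - a - al * a' = (m - 1) + (1 - a) - al * a' := by ring
      rw [e]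
      have := abs_sub_le_add ((m - 1) + (1 - a)) (al * a')
      have := abs_add_le (m - 1) (1 - a)
      linarith
    · intro hz
      have hSpos : 0 < S := pos_of_mul_pos_right hz hu0.le
      have c4 := b3 hSpos
      have c5 := aKn_far hq hd n hSpos (by linarith)
      rw [hτ] at c5
      have := abs_sub_le_add (m - a) (al * a')
      have := abs_sub_le_add m a
      have e2 : 593 / (u * S) = 592 / (u * S) + 1 / (u * S) := by ring
      linarith
  · rw [min_eq_right hSS] at b3 ⊢
    have c1 := aKn_near hq hd n hS0' (by linarith)
    have c2 := far S (by linarith) (by linarith)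
    rw [hτ] at c1
    have c3 : |al * (1 - a')| ≤ 2 * u * S' := by
      rw [abs_mul]
      exact (mul_le_of_le_one_left (abs_nonneg _) hal1).trans c1
    apply hPsi _ _ _ (by positivity) hY
    · have e : m - a - al * a' = (m - al) + al * (1 - a') - a := by ring
      rw [e]
      have := abs_sub_le_add ((m - al) + al * (1 - a')) a
      have := abs_add_le (m - al) (al * (1 - a'))
      linarith
    · intro hz
      have hSpos : 0 < S' := pos_of_mul_pos_right hz hu0.le
      have c4 := b3 hSpos
      have c5 := aKn_far hq hd n hSpos (by linarith)
      rw [hτ] at c5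
      have c6 : |al * a'| ≤ 1 / (u * S') := by
        rw [abs_mul]
        exact (mul_le_of_le_one_left (abs_nonneg _) hal1).trans c5
      have := abs_sub_le_add (m - a) (al * a')
      have := abs_sub_le_add m a
      have e2 : 593 / (u * S') = 592 / (u * S') + 1 / (u * S') := by ring
      linarith

lemma Em_large {q : ℝ} (hq : 2 ≤ q) {d : ℕ} (hd : 0 < d) (n : ℕ) (hκ : 10000 ≤ kap q d n) (φ : Fin d → ℝ) (hφ : ∀ i, |φ i| ≤ Real.pi) :
    |Em q d n φ| ≤ 12000100 * kap q d n ^ (-(2/5 : ℝ)) + 12000101 * Psi (kap q d n ^ 2 * ∑ j, Real.sin (φ j / 2) ^ 2) := by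
  have h : (0 : ℝ) < d := by exact_mod_cast hd
  have hS := SS_sum φ
  have hS0 : 0 ≤ ∑ j, Real.sin (φ j / 2) ^ 2 := Finset.sum_nonneg (fun _ _ => sq_nonneg _)
  have hS0' : 0 ≤ ∑ j, Real.cos (φ j / 2) ^ 2 := Finset.sum_nonneg (fun _ _ => sq_nonneg _)
  have hκ0 := kap_pos q hd n
  have hτ : min (kap q d n ^ q) (kap q d n ^ 2) = kap q d n ^ 2 := by
    apply min_eq_right
    rw [← Real.rpow_natCast]
    exact Real.rpow_le_rpow_of_exponent_le (by linarith) (by exact_mod_cast hq)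
  have hal : alp q d n = 0 := by
    apply if_neg
    have := Real.one_le_rpow (by linarith : 1 ≤ kap q d n) (by linarith : 0 ≤ q)
    linarith
  have b1 := mc_near_one hq (d := d) hκ0 φ
  have b2 := fun L hL hL5 hS => mc_large hq (L := L) hκ hL hL5 φ hφ hS
  have c1 := aKn_near hq hd n hS0 (by linarith)
  rw [hτ] at b1 c1
  rw [kap_q hq hd] at b1 b2
  unfold Em
  rw [hal, zero_mul, sub_zero]
  set κ := kap q d n with hκdef
  set m := mc q d ((2 ^ n) ^ q) φ
  set S := ∑ j, Real.sin (φ j / 2) ^ 2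
  set a := aK (Kn q d n) (S / d)
  have hk0 : 0 ≤ κ ^ (-(2/5 : ℝ)) := by positivity
  have : |m - a| - 12000100 * κ ^ (-(2/5 : ℝ)) ≤ 12000101 * Psi (κ ^ 2 * S) := by
    apply le_Psi
    · intro _
      have := abs_sub_le m 1 a
      have : 0 ≤ κ ^ 2 * S := by positivity
      linarith
    · intro hz
      have hSpos : 0 < S := by
        by_contra hh
        push Not at hh
        nlinarith [sq_nonneg κ]
      have c5 := aKn_far hq hd n hSpos (by linarith)
      rw [hτ] at c5
      have c6 := inv_le_rpow_sixth hz.le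
      set z := κ ^ 2 * S with hzdef
      have hz0 : 0 < z := by linarith
      set L := min (κ ^ (1/5 : ℝ)) (z ^ (1/12 : ℝ)) with hL
      have hL1 : 1 ≤ L := le_min (Real.one_le_rpow (by linarith) (by norm_num)) (Real.one_le_rpow hz.le (by norm_num))
      have e1 : (κ ^ (1/5 : ℝ)) ^ 5 = κ := by
        rw [← Real.rpow_natCast, ← Real.rpow_mul hκ0.le]; norm_num
      have e2 : (z ^ (1/12 : ℝ)) ^ 12 = z := by
        rw [← Real.rpow_natCast, ← Real.rpow_mul hz0.le]; norm_num
      have e3 : 1 / (κ ^ (1/5 : ℝ)) ^ 2 = κ ^ (-(2/5 : ℝ)) := by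
        rw [← Real.rpow_natCast, ← Real.rpow_mul hκ0.le, one_div, ← Real.rpow_neg hκ0.le]; norm_num
      have e4 : 1 / (z ^ (1/12 : ℝ)) ^ 2 = z ^ (-(1/6 : ℝ)) := by
        rw [← Real.rpow_natCast, ← Real.rpow_mul hz0.le, one_div, ← Real.rpow_neg hz0.le]; norm_num
      have b3 := b2 L hL1 (by
        calc L ^ 5 ≤ (κ ^ (1/5 : ℝ)) ^ 5 := by gcongr; exact min_le_left _ _
          _ = κ := e1) (by
        calc L ^ 12 ≤ (z ^ (1/12 : ℝ)) ^ 12 := by gcongr; exact min_le_right _ _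
          _ = z := e2)
      have hz6 : 0 ≤ z ^ (-(1/6 : ℝ)) := by positivity
      have hLL : 1 / L ^ 2 ≤ κ ^ (-(2/5 : ℝ)) + z ^ (-(1/6 : ℝ)) := by
        rcases min_choice (κ ^ (1/5 : ℝ)) (z ^ (1/12 : ℝ)) with hh | hh
        · rw [hL, hh, e3]; linarith
        · rw [hL, hh, e4]; linarith
      have e5 : 12000100 / L ^ 2 = 12000100 * (1 / L ^ 2) := by ring
      have := abs_sub_le_add m a
      linarith
  linarith

lemma mult_sum {q : ℝ} (hq : 2 ≤ q) : ∃ C : ℝ, 0 ≤ C ∧ ∀ d : ℕ, 0 < d → ∀ φ : Fin d → ℝ, (∀ i, |φ i| ≤ Real.pi) →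
    ∀ m : ℕ, ∑ n ∈ range m, Em q d n φ ^ 2 ≤ C := by
  obtain ⟨C0, hC0, hsm⟩ := Em_small hq
  have h2q : (4 : ℝ) ≤ 2 ^ q := by
    calc (4 : ℝ) = (2 : ℝ) ^ (2 : ℝ) := by norm_num
      _ ≤ (2 : ℝ) ^ q := Real.rpow_le_rpow_of_exponent_le (by norm_num) hq
  obtain ⟨C1, hC1, hs1⟩ := Psi_sum (ρ := 2 ^ q) (by linarith)
  obtain ⟨C2, hC2, hs2⟩ := Psi_sum (ρ := 4) (by norm_num)
  obtain ⟨C3, hC3, hs3⟩ := geo_sum3 (ρ := 2) (s := 2/5) (by norm_num) (by norm_num)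
  obtain ⟨C4, hC4, hs4⟩ := geo_sum3 (ρ := 2 ^ q) (s := 1) (by linarith) (by norm_num)
  set U : ℝ := 10000 ^ q with hU
  have hU0 : 0 ≤ U := by positivity
  have hU1 : 1 ≤ U := Real.one_le_rpow (by norm_num) (by linarith)
  set D : ℝ := 3 * ((C0 + 6) * (2 * U) + 3 * C4 + 593 * C1 + 12000101 * C2 + 12000100 * C3) with hD
  refine ⟨D, by positivity, fun d hd φ hφ m => ?_⟩
  have hd0 : (0 : ℝ) < d := by exact_mod_cast hd
  have hS0 : 0 ≤ ∑ j, Real.sin (φ j / 2) ^ 2 := Finset.sum_nonneg (fun _ _ => sq_nonneg _)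
  have hS0' : 0 ≤ ∑ j, Real.cos (φ j / 2) ^ 2 := Finset.sum_nonneg (fun _ _ => sq_nonneg _)
  set S := ∑ j, Real.sin (φ j / 2) ^ 2 with hS
  set S' := ∑ j, Real.cos (φ j / 2) ^ 2 with hS'
  set mn := min S S' with hmn
  have hmn0 : 0 ≤ mn := le_min hS0 hS0'
  set δ : ℝ := (d : ℝ) ^ (-(1 / q)) with hδ
  have hδ0 : 0 < δ := by positivity
  have eN : ∀ n : ℕ, ((2 : ℝ) ^ n) ^ q = (2 ^ q) ^ n := by
    intro n
    rw [← Real.rpow_natCast, ← Real.rpow_natCast, ← Real.rpow_mul (by norm_num), ← Real.rpow_mul (by norm_num), mul_comm]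
  have eu : ∀ n : ℕ, kap q d n ^ q = 1 / d * (2 ^ q) ^ n := by
    intro n
    have := kap_q hq hd n
    rw [eN] at this
    rw [← this]; field_simp
  have ek : ∀ n : ℕ, kap q d n = δ * 2 ^ n := fun n => by unfold kap; ring
  have ek2 : ∀ n : ℕ, kap q d n ^ 2 = δ ^ 2 * 4 ^ n := fun n => by
    rw [ek, mul_pow, ← pow_mul, mul_comm n 2, pow_mul]; norm_num
  set f1 : ℕ → ℝ := fun n => if 1 / d * (2 ^ q) ^ n ≤ U then 1 / d * ((2 : ℝ) ^ q) ^ n else 0 with hf1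
  set f4 : ℕ → ℝ := fun n => if 1 ≤ 1 * ((2 : ℝ) ^ q) ^ n then (1 * ((2 : ℝ) ^ q) ^ n) ^ (-(1:ℝ)) else 0 with hf4
  set g1 : ℕ → ℝ := fun n => Psi ((1 / d * mn) * (2 ^ q) ^ n)
  set g2 : ℕ → ℝ := fun n => Psi ((δ ^ 2 * S) * 4 ^ n)
  set g3 : ℕ → ℝ := fun n => if 1 ≤ δ * 2 ^ n then (δ * 2 ^ n) ^ (-(2/5:ℝ)) else 0 with hg3
  have hf1n : ∀ n, 0 ≤ f1 n := fun n => by simp only [hf1]; split_ifs <;> positivity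
  have hg1n : ∀ n, 0 ≤ g1 n := fun n => Psi_nonneg (by positivity)
  have hg2n : ∀ n, 0 ≤ g2 n := fun n => Psi_nonneg (by positivity)
  have hg3n : ∀ n, 0 ≤ g3 n := fun n => by simp only [hg3]; split_ifs <;> positivity
  have hf4e : ∀ n, f4 n = 1 / (2 ^ n) ^ q := by
    intro n
    simp only [hf4]
    rw [one_mul, if_pos (one_le_pow₀ (by linarith)), eN, Real.rpow_neg_one, one_div]
  have hf4n : ∀ n, 0 ≤ f4 n := fun n => by rw [hf4e]; positivity
  have hb : ∀ n, |Em q d n φ| ≤ (C0 + 6) * f1 n + 3 * f4 n + 593 * g1 n + 12000101 * g2 n + 12000100 * g3 n := by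
    intro n
    have p0 := mul_nonneg hC0 (hf1n n)
    have p1 := hf1n n
    have p2 := hg1n n
    have p3 := hg2n n
    have p4 := hg3n n
    have p5 := hf4n n
    rcases Nat.eq_zero_or_pos n with hn | hn
    · have : f4 n = 1 := by rw [hf4e, hn]; simp
      have := Em_le3 hq hd n φ
      linarith
    by_cases hu : kap q d n ^ q ≤ 1 / 2
    · have e1 := hsm d hd n hn hu φ
      have e2 : f1 n = kap q d n ^ q := by
        simp only [hf1]; rw [← eu, if_pos (by linarith)]
      have e3 : g1 n = Psi (kap q d n ^ q * mn) := by
        simp only [g1]; rw [eu]; congr 1; ring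
      rw [← e2, ← hS, ← hS', ← hmn, e2, ← e3, ← e2] at e1
      have : 2 / ((2:ℝ) ^ n) ^ q = 2 * f4 n := by rw [hf4e]; ring
      linarith
    by_cases hk : 10000 ≤ kap q d n
    · have e1 := Em_large hq hd n hk φ hφ
      have e2 : g3 n = kap q d n ^ (-(2/5 : ℝ)) := by
        simp only [hg3]; rw [← ek, if_pos (by linarith)]
      have e3 : g2 n = Psi (kap q d n ^ 2 * S) := by
        simp only [g2]; rw [ek2]; congr 1; ring
      rw [← hS, ← e2, ← e3] at e1
      linarith
    · push Not at hu hk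
      have : f1 n = kap q d n ^ q := by
        simp only [hf1]; rw [← eu, if_pos]
        exact Real.rpow_le_rpow (kap_pos q hd n).le hk.le (by linarith)
      have := Em_le3 hq hd n φ
      linarith
  calc ∑ n ∈ range m, Em q d n φ ^ 2 ≤ ∑ n ∈ range m, 3 * ((C0 + 6) * f1 n + 3 * f4 n + 593 * g1 n + 12000101 * g2 n + 12000100 * g3 n) := by
        apply Finset.sum_le_sum
        intro n _
        have := Em_le3 hq hd n φ
        have := hb n
        rw [← sq_abs]
        nlinarith [abs_nonneg (Em q d n φ)]
    _ = 3 * ((C0 + 6) * ∑ n ∈ range m, f1 n + 3 * ∑ n ∈ range m, f4 n + 593 * ∑ n ∈ range m, g1 n + 12000101 * ∑ n ∈ range m, g2 n + 12000100 * ∑ n ∈ range m, g3 n) := by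
        simp only [Finset.mul_sum, mul_add, Finset.sum_add_distrib]
    _ ≤ D := by
        rw [hD]
        gcongr
        · exact geo_sum1 (by linarith) (by positivity) hU0 m
        · exact hs4 1 zero_le_one m
        · exact hs1 _ (by positivity) m
        · exact hs2 _ (by positivity) m
        · exact hs3 _ hδ0.le m


noncomputable def ech {d : ℕ} (φ : Fin d → ℝ) (x : Fin d → ℤ) : ℂ := ∏ j, Complex.exp (Complex.I * (x j * φ j))

lemma ech_zero {d : ℕ} (φ : Fin d → ℝ) : ech φ 0 = 1 := by simp [ech]

lemma ech_add {d : ℕ} (φ : Fin d → ℝ) (x y : Fin d → ℤ) : ech φ (x + y) = ech φ x * ech φ y := by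
  unfold ech
  rw [← Finset.prod_mul_distrib]
  apply Finset.prod_congr rfl
  intro j _
  rw [← Complex.exp_add]
  congr 1
  simp only [Pi.add_apply]; push_cast; ring

lemma ech_neg {d : ℕ} (φ : Fin d → ℝ) (x : Fin d → ℤ) : ech φ (-x) = (starRingEnd ℂ) (ech φ x) := by
  unfold ech
  rw [map_prod]
  apply Finset.prod_congr rfl
  intro j _
  rw [← Complex.exp_conj]
  congr 1
  simp

noncomputable def echHom {d : ℕ} (φ : Fin d → ℝ) : Multiplicative (Fin d → ℤ) →* ℂ where
  toFun x := ech φ x.toAdd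
  map_one' := ech_zero φ
  map_mul' _ _ := ech_add φ _ _

noncomputable def hatf {d : ℕ} (φ : Fin d → ℝ) : AddMonoidAlgebra ℝ (Fin d → ℤ) →ₐ[ℝ] ℂ :=
  AddMonoidAlgebra.lift ℝ ℂ (Fin d → ℤ) (echHom φ)

lemma hatf_single {d : ℕ} (φ : Fin d → ℝ) (x : Fin d → ℤ) (r : ℝ) :
    hatf φ (AddMonoidAlgebra.single x r) = r * ech φ x := by
  unfold hatf
  rw [AddMonoidAlgebra.lift_single]
  simp [echHom]

lemma hatf_eq {d : ℕ} (φ : Fin d → ℝ) (g : AddMonoidAlgebra ℝ (Fin d → ℤ)) (s : Finset (Fin d → ℤ)) (hs : g.coeff.support ⊆ s) :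
    hatf φ g = ∑ x ∈ s, (g.coeff x : ℂ) * ech φ x := by
  unfold hatf
  rw [AddMonoidAlgebra.lift_apply]
  rw [Finsupp.sum_of_support_subset _ hs]
  · simp [echHom]
  · simp

noncomputable def phiM (M : ℕ) {d : ℕ} (θ : Fin d → Fin (2 * M)) : Fin d → ℝ := fun j => Real.pi * (((θ j : ℕ) : ℝ) - M) / M

lemma phiM_le {M : ℕ} (hM : 0 < M) {d : ℕ} (θ : Fin d → Fin (2 * M)) (j : Fin d) : |phiM M θ j| ≤ Real.pi := by
  have hM' : (0 : ℝ) < M := by exact_mod_cast hM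
  unfold phiM
  rw [abs_div, abs_mul, abs_of_pos Real.pi_pos, abs_of_pos hM', div_le_iff₀ hM']
  apply mul_le_mul_of_nonneg_left _ Real.pi_pos.le
  have h1 : ((θ j : ℕ) : ℝ) ≤ 2 * M := by exact_mod_cast (θ j).2.le
  have h0 : (0 : ℝ) ≤ ((θ j : ℕ) : ℝ) := Nat.cast_nonneg _
  rw [abs_le]; constructor <;> linarith

lemma e_sum {M : ℕ} (hM : 0 < M) {k : ℤ} (hk : |k| < 2 * M) (hk0 : k ≠ 0) :
    ∑ t : Fin (2 * M), Complex.exp (Complex.I * (k * ((Real.pi * (((t : ℕ) : ℝ) - M) / M : ℝ) : ℂ))) = 0 := by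
  have hM' : (M : ℂ) ≠ 0 := by exact_mod_cast hM.ne'
  rw [Fin.sum_univ_eq_sum_range (fun t : ℕ => Complex.exp (Complex.I * (k * ((Real.pi * ((t : ℝ) - M) / M : ℝ) : ℂ))))]
  set w := Complex.exp (Complex.I * (k * Real.pi / M)) with hw
  have e : ∀ t : ℕ, Complex.exp (Complex.I * (k * ((Real.pi * ((t : ℝ) - M) / M : ℝ) : ℂ))) = Complex.exp (-(Complex.I * (k * Real.pi))) * w ^ t := by
    intro t
    rw [hw, ← Complex.exp_nat_mul, ← Complex.exp_add]
    congr 1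
    push_cast
    field_simp
    ring
  simp only [e]
  rw [← Finset.mul_sum]
  have hw1 : w ≠ 1 := by
    intro h
    rw [hw, Complex.exp_eq_one_iff] at h
    obtain ⟨n, hn⟩ := h
    have hpi : (Real.pi : ℂ) ≠ 0 := by exact_mod_cast Real.pi_ne_zero
    have h1 : (k : ℂ) = n * (2 * M) := by
      have h2 : Complex.I * Real.pi * (k : ℂ) = Complex.I * Real.pi * (n * (2 * M)) := by
        field_simp at hn
        linear_combination (Complex.I * Real.pi) * hn
      exact mul_left_cancel₀ (mul_ne_zero Complex.I_ne_zero hpi) h2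
    have h3 : k = n * (2 * M) := by exact_mod_cast h1
    have hn0 : n ≠ 0 := by rintro rfl; simp at h3; exact hk0 h3
    have : (1 : ℤ) ≤ |n| := Int.one_le_abs hn0
    rw [h3, abs_mul, abs_of_nonneg (by positivity : (0 : ℤ) ≤ 2 * M)] at hk
    nlinarith
  have hwM : w ^ (2 * M) = 1 := by
    rw [hw, ← Complex.exp_nat_mul, Complex.exp_eq_one_iff]
    refine ⟨k, ?_⟩
    push_cast
    field_simp
  rw [geom_sum_eq hw1, hwM]; simp

lemma e_sum_pi {M : ℕ} (hM : 0 < M) {d : ℕ} (x : Fin d → ℤ) (hx : ∀ j, |x j| < 2 * M) :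
    ∑ θ : Fin d → Fin (2 * M), ech (phiM M θ) x = if x = 0 then ((2 * M : ℂ)) ^ d else 0 := by
  classical
  have h : ∑ θ : Fin d → Fin (2 * M), ech (phiM M θ) x = ∏ j, ∑ t : Fin (2 * M), Complex.exp (Complex.I * (x j * ((Real.pi * (((t : ℕ) : ℝ) - M) / M : ℝ) : ℂ))) := by
    rw [Finset.prod_univ_sum, Fintype.piFinset_univ]
    rfl
  rw [h]
  split_ifs with h0
  · subst h0
    simp
  · have : ∃ j, x j ≠ 0 := by
      by_contra hh
      push Not at hh
      exact h0 (funext hh)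
    obtain ⟨j, hj⟩ := this
    exact Finset.prod_eq_zero (mem_univ j) (e_sum hM (hx j) hj)

lemma planch {M : ℕ} (hM : 0 < M) {d : ℕ} (s : Finset (Fin d → ℤ)) (hs : ∀ x ∈ s, ∀ j, |x j| < M) (g : (Fin d → ℤ) → ℝ) :
    ∑ θ : Fin d → Fin (2 * M), ‖∑ x ∈ s, (g x : ℂ) * ech (phiM M θ) x‖ ^ 2 = (2 * M : ℝ) ^ d * ∑ x ∈ s, g x ^ 2 := by
  classical
  apply Complex.ofReal_injective
  push_cast
  have h : ∀ θ : Fin d → Fin (2 * M), ((‖∑ x ∈ s, (g x : ℂ) * ech (phiM M θ) x‖ : ℝ) : ℂ) ^ 2 =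
      ∑ x ∈ s, ∑ y ∈ s, (g x : ℂ) * g y * ech (phiM M θ) (x - y) := by
    intro θ
    rw [← Complex.mul_conj', map_sum, Finset.sum_mul_sum]
    apply Finset.sum_congr rfl; intro x _
    apply Finset.sum_congr rfl; intro y _
    rw [map_mul, Complex.conj_ofReal, ← ech_neg, sub_eq_add_neg, ech_add]; ring
  simp only [h]
  rw [Finset.sum_comm]
  rw [Finset.mul_sum]
  apply Finset.sum_congr rfl; intro x hx
  rw [Finset.sum_comm]
  have h2 : ∀ y ∈ s, ∑ θ : Fin d → Fin (2 * M), (g x : ℂ) * g y * ech (phiM M θ) (x - y) = if x = y then (2 * M : ℂ) ^ d * (g x : ℂ) ^ 2 else 0 := by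
    intro y hy
    rw [← Finset.mul_sum, e_sum_pi hM]
    · by_cases hxy : x = y
      · subst hxy; simp; ring
      · rw [if_neg (by rw [sub_eq_zero]; exact hxy), if_neg hxy, mul_zero]
    · intro j
      have h1 := abs_lt.1 (hs x hx j)
      have h2 := abs_lt.1 (hs y hy j)
      rw [Pi.sub_apply, abs_lt]; constructor <;> linarith [h1.1, h1.2, h2.1, h2.2]
  rw [Finset.sum_congr rfl h2]
  simp [hx]

lemma exists_M {d : ℕ} (s : Finset (Fin d → ℤ)) : ∃ M : ℕ, 0 < M ∧ ∀ x ∈ s, ∀ j, |x j| < M := by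
  refine ⟨∑ x ∈ s, ∑ j, (x j).natAbs + 1, by omega, fun x hx j => ?_⟩
  have h1 : (x j).natAbs ≤ ∑ j, (x j).natAbs := Finset.single_le_sum (f := fun j => (x j).natAbs) (fun _ _ => Nat.zero_le _) (mem_univ j)
  have h2 : ∑ j, (x j).natAbs ≤ ∑ x ∈ s, ∑ j, (x j).natAbs := Finset.single_le_sum (f := fun x : Fin d → ℤ => ∑ j, (x j).natAbs) (fun _ _ => Nat.zero_le _) hx
  rw [Int.abs_eq_natAbs]
  omega

/-- square function estimate from multiplier bound -/
lemma square_fn {d : ℕ} (m : ℕ) (E : ℕ → AddMonoidAlgebra ℝ (Fin d → ℤ)) (C : ℝ)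
    (hE : ∀ φ : Fin d → ℝ, (∀ i, |φ i| ≤ Real.pi) → ∑ n ∈ range m, ‖hatf φ (E n)‖ ^ 2 ≤ C)
    (f : AddMonoidAlgebra ℝ (Fin d → ℤ)) (s0 : Finset (Fin d → ℤ)) (hf : f.coeff.support ⊆ s0) (s1 : Finset (Fin d → ℤ)) :
    ∑ n ∈ range m, ∑ x ∈ s1, (E n * f).coeff x ^ 2 ≤ C * ∑ x ∈ s0, f.coeff x ^ 2 := by
  classical
  set s := s0 ∪ s1 ∪ (range m).biUnion (fun n => (E n * f).coeff.support) with hs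
  obtain ⟨M, hM, hsM⟩ := exists_M s
  have hM' : (0 : ℝ) < (2 * M : ℝ) ^ d := by have : (0 : ℝ) < M := by exact_mod_cast hM
                                             positivity
  have hf0 : (2 * M : ℝ) ^ d * ∑ x ∈ s0, f.coeff x ^ 2 = ∑ θ : Fin d → Fin (2 * M), ‖hatf (phiM M θ) f‖ ^ 2 := by
    rw [← planch hM s0 (fun x hx => hsM x (by simp [hs, hx]))]
    simp only [hatf_eq _ f s0 hf]
  have hEn : ∀ n ∈ range m, (2 * M : ℝ) ^ d * ∑ x ∈ s1, (E n * f).coeff x ^ 2 ≤ ∑ θ : Fin d → Fin (2 * M), ‖hatf (phiM M θ) (E n)‖ ^ 2 * ‖hatf (phiM M θ) f‖ ^ 2 := by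
    intro n hn
    have h1 : (E n * f).coeff.support ⊆ s := by
      intro x hx
      rw [hs, mem_union]
      exact Or.inr (mem_biUnion.2 ⟨n, hn, hx⟩)
    calc (2 * M : ℝ) ^ d * ∑ x ∈ s1, (E n * f).coeff x ^ 2 ≤ (2 * M : ℝ) ^ d * ∑ x ∈ s, (E n * f).coeff x ^ 2 := by
          apply mul_le_mul_of_nonneg_left _ hM'.le
          apply Finset.sum_le_sum_of_subset_of_nonneg
          · intro x hx; simp [hs, hx]
          · intro x _ _; exact sq_nonneg _
      _ = ∑ θ : Fin d → Fin (2 * M), ‖hatf (phiM M θ) (E n * f)‖ ^ 2 := by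
          rw [← planch hM s hsM]
          simp only [hatf_eq _ (E n * f) s h1]
      _ = _ := by
          apply Finset.sum_congr rfl; intro θ _
          rw [map_mul, norm_mul, mul_pow]
      _ ≤ _ := le_rfl
  have : (2 * M : ℝ) ^ d * ∑ n ∈ range m, ∑ x ∈ s1, (E n * f).coeff x ^ 2 ≤ (2 * M : ℝ) ^ d * (C * ∑ x ∈ s0, f.coeff x ^ 2) := by
    rw [Finset.mul_sum]
    refine (Finset.sum_le_sum hEn).trans ?_
    rw [Finset.sum_comm]
    have e : (2 * M : ℝ) ^ d * (C * ∑ x ∈ s0, f.coeff x ^ 2) = C * ((2 * M : ℝ) ^ d * ∑ x ∈ s0, f.coeff x ^ 2) := by ring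
    rw [e, hf0, Finset.mul_sum]
    apply Finset.sum_le_sum
    intro θ _
    rw [← Finset.sum_mul]
    exact mul_le_mul_of_nonneg_right (hE _ (phiM_le hM θ)) (sq_nonneg _)
  exact le_of_mul_le_mul_left this hM'


abbrev Alg (d : ℕ) := AddMonoidAlgebra ℝ (Fin d → ℤ)

noncomputable def Pw (d : ℕ) (ε : ℝ) : Alg d :=
  AddMonoidAlgebra.single 0 (1/2 : ℝ) + ∑ i : Fin d, (AddMonoidAlgebra.single (Pi.single i 1) (ε / (4 * d)) + AddMonoidAlgebra.single (-Pi.single i 1) (ε / (4 * d)))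

noncomputable def AK (d : ℕ) (ε : ℝ) (K : ℕ) : Alg d := (1 / (K : ℝ)) • ∑ k ∈ range K, Pw d ε ^ k

noncomputable def Mn (q : ℝ) (d : ℕ) (N : ℝ) : Alg d := ∑ y ∈ Bl q d N, AddMonoidAlgebra.single y (1 / ((Bl q d N).card : ℝ))

noncomputable def En (q : ℝ) (d n : ℕ) : Alg d := Mn q d ((2 ^ n) ^ q) - AK d 1 (Kn q d n) - alp q d n • AK d (-1) (Kn q d n)

lemma ech_single {d : ℕ} (φ : Fin d → ℝ) (i : Fin d) : ech φ (Pi.single i 1) = Complex.exp (Complex.I * φ i) := by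
  unfold ech
  rw [Finset.prod_eq_single i]
  · simp
  · intro j _ hj; simp [Pi.single_eq_of_ne hj]
  · simp

lemma hatf_Pw {d : ℕ} (ε : ℝ) (φ : Fin d → ℝ) : hatf φ (Pw d ε) = ((1/2 + ε * (∑ i, Real.cos (φ i)) / (2 * d) : ℝ) : ℂ) := by
  unfold Pw
  rw [map_add, map_sum, hatf_single, ech_zero]
  have : ∀ i : Fin d, hatf φ (AddMonoidAlgebra.single (Pi.single i 1) (ε / (4 * d)) + AddMonoidAlgebra.single (-Pi.single i 1) (ε / (4 * d))) = ((ε / (2 * d) * Real.cos (φ i) : ℝ) : ℂ) := by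
    intro i
    rw [map_add, hatf_single, hatf_single, ech_neg, ← mul_add, Complex.add_conj, ech_single, mul_comm Complex.I, Complex.exp_ofReal_mul_I_re]
    push_cast
    ring
  rw [Finset.sum_congr rfl (fun i _ => this i), ← Complex.ofReal_sum, mul_one, ← Complex.ofReal_add]
  congr 1
  rw [← Finset.mul_sum]
  ring

lemma hatf_P1 {d : ℕ} (hd : 0 < d) (φ : Fin d → ℝ) : hatf φ (Pw d 1) = ((1 - (∑ j, Real.sin (φ j / 2) ^ 2) / d : ℝ) : ℂ) := by
  rw [hatf_Pw]
  congr 1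
  have h : (0 : ℝ) < d := by exact_mod_cast hd
  have e : ∑ i, Real.cos (φ i) = d - 2 * ∑ j, Real.sin (φ j / 2) ^ 2 := by
    have : ∀ i, Real.cos (φ i) = 1 - 2 * Real.sin (φ i / 2) ^ 2 := by
      intro i
      have := Real.cos_two_mul (φ i / 2)
      rw [mul_div_cancel₀ _ (two_ne_zero), Real.cos_sq'] at this
      linarith
    simp only [this, Finset.sum_sub_distrib, ← Finset.mul_sum]
    simp
  rw [e]; field_simp; ring

lemma hatf_P2 {d : ℕ} (hd : 0 < d) (φ : Fin d → ℝ) : hatf φ (Pw d (-1)) = ((1 - (∑ j, Real.cos (φ j / 2) ^ 2) / d : ℝ) : ℂ) := by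
  rw [hatf_Pw]
  congr 1
  have h : (0 : ℝ) < d := by exact_mod_cast hd
  have e : ∑ i, Real.cos (φ i) = 2 * ∑ j, Real.cos (φ j / 2) ^ 2 - d := by
    have : ∀ i, Real.cos (φ i) = 2 * Real.cos (φ i / 2) ^ 2 - 1 := by
      intro i
      have := Real.cos_two_mul (φ i / 2)
      rw [mul_div_cancel₀ _ (two_ne_zero)] at this
      linarith
    simp only [this, Finset.sum_sub_distrib, ← Finset.mul_sum]
    simp
  rw [e]; field_simp; ring

lemma hatf_AK {d : ℕ} (ε : ℝ) (K : ℕ) (φ : Fin d → ℝ) (s : ℝ) (h : hatf φ (Pw d ε) = ((1 - s : ℝ) : ℂ)) :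
    hatf φ (AK d ε K) = (aK K s : ℂ) := by
  unfold AK aK
  rw [map_smul, map_sum]
  simp only [map_pow, h]
  rw [Complex.real_smul]
  push_cast
  ring

lemma hatf_Mn {q : ℝ} (hq : 2 ≤ q) {d : ℕ} (N : ℝ) (φ : Fin d → ℝ) : hatf φ (Mn q d N) = (mc q d N φ : ℂ) := by
  unfold Mn mc
  rw [map_sum]
  simp only [hatf_single]
  rw [← Finset.mul_sum]
  unfold ech
  rw [mc_exp hq]
  push_cast
  ring

lemma hatf_En {q : ℝ} (hq : 2 ≤ q) {d : ℕ} (hd : 0 < d) (n : ℕ) (φ : Fin d → ℝ) : hatf φ (En q d n) = (Em q d n φ : ℂ) := by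
  unfold En Em
  rw [map_sub, map_sub, map_smul, hatf_Mn hq, hatf_AK 1 _ φ _ (hatf_P1 hd φ), hatf_AK (-1) _ φ _ (hatf_P2 hd φ), Complex.real_smul]
  push_cast
  ring

lemma En_square {q : ℝ} (hq : 2 ≤ q) : ∃ C : ℝ, 0 ≤ C ∧ ∀ d : ℕ, 0 < d → ∀ (m : ℕ) (f : Alg d) (s0 : Finset (Fin d → ℤ)), f.coeff.support ⊆ s0 → ∀ s1 : Finset (Fin d → ℤ),
    ∑ n ∈ range m, ∑ x ∈ s1, (En q d n * f).coeff x ^ 2 ≤ C * ∑ x ∈ s0, f.coeff x ^ 2 := by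
  obtain ⟨C, hC, h⟩ := mult_sum hq
  refine ⟨C, hC, fun d hd m f s0 hf s1 => square_fn m (En q d) C (fun φ hφ => ?_) f s0 hf s1⟩
  refine le_trans (le_of_eq ?_) (h d hd φ hφ m)
  apply Finset.sum_congr rfl
  intro n _
  rw [hatf_En hq hd, Complex.norm_real, Real.norm_eq_abs, sq_abs]

/-- the lazy random walk on functions -/
noncomputable def Tw (d : ℕ) (ε : ℝ) (h : (Fin d → ℤ) → ℝ) (x : Fin d → ℤ) : ℝ :=
  1/2 * h x + ∑ i : Fin d, (ε / (4 * d) * h (x - Pi.single i 1) + ε / (4 * d) * h (x + Pi.single i 1))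

lemma Pw_mul {d : ℕ} (ε : ℝ) (f : Alg d) (x : Fin d → ℤ) : (Pw d ε * f).coeff x = Tw d ε f.coeff x := by
  unfold Pw Tw
  rw [add_mul, Finset.sum_mul, AddMonoidAlgebra.coeff_add, Finsupp.add_apply, AddMonoidAlgebra.coeff_sum, Finsupp.finsetSum_apply]
  congr 1
  · rw [AddMonoidAlgebra.coeff_single_mul_apply]; simp
  · apply Finset.sum_congr rfl
    intro i _
    rw [add_mul, AddMonoidAlgebra.coeff_add, Finsupp.add_apply, AddMonoidAlgebra.coeff_single_mul_apply, AddMonoidAlgebra.coeff_single_mul_apply, neg_neg, neg_add_eq_sub, add_comm x]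

lemma Pw_pow {d : ℕ} (ε : ℝ) (f : Alg d) (k : ℕ) : ∀ x, (Pw d ε ^ k * f).coeff x = (Tw d ε)^[k] f.coeff x := by
  induction k with
  | zero => intro x; simp
  | succ k ih =>
    intro x
    rw [pow_succ', mul_assoc, Pw_mul, Function.iterate_succ_apply']
    congr 1
    funext y; exact ih y

lemma AK_mul {d : ℕ} (ε : ℝ) (K : ℕ) (f : Alg d) (x : Fin d → ℤ) :
    (AK d ε K * f).coeff x = (∑ k ∈ range K, (Tw d ε)^[k] f.coeff x) / K := by
  unfold AK
  rw [smul_mul_assoc, AddMonoidAlgebra.coeff_smul, Finsupp.smul_apply, Finset.sum_mul, AddMonoidAlgebra.coeff_sum, Finsupp.finsetSum_apply]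
  simp only [Pw_pow]
  rw [smul_eq_mul]; ring

lemma Mn_mul {q : ℝ} {d : ℕ} (N : ℝ) (f : Alg d) (x : Fin d → ℤ) :
    (Mn q d N * f).coeff x = (∑ y ∈ Bl q d N, f.coeff (x - y)) / (Bl q d N).card := by
  unfold Mn
  rw [Finset.sum_mul, AddMonoidAlgebra.coeff_sum, Finsupp.finsetSum_apply, Finset.sum_div]
  apply Finset.sum_congr rfl
  intro y _
  rw [AddMonoidAlgebra.coeff_single_mul_apply, neg_add_eq_sub]; ring

lemma Tw_mono {d : ℕ} {g h : (Fin d → ℤ) → ℝ} (hgh : ∀ x, g x ≤ h x) (x : Fin d → ℤ) : Tw d 1 g x ≤ Tw d 1 h x := by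
  unfold Tw
  have : (0 : ℝ) ≤ 1 / (4 * d) := by positivity
  gcongr <;> exact hgh _

lemma Tw_add_const {d : ℕ} (hd : 0 < d) (g : (Fin d → ℤ) → ℝ) (c : ℝ) (x : Fin d → ℤ) : Tw d 1 (fun y => g y + c) x = Tw d 1 g x + c := by
  unfold Tw
  have h : (d : ℝ) ≠ 0 := by exact_mod_cast hd.ne'
  have : ∀ i : Fin d, (1 / (4 * d) * (g (x - Pi.single i 1) + c) + 1 / (4 * d) * (g (x + Pi.single i 1) + c) : ℝ) = (1 / (4 * d) * g (x - Pi.single i 1) + 1 / (4 * d) * g (x + Pi.single i 1)) + c / (2 * d) := by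
    intro i; ring
  simp only [this]
  rw [Finset.sum_add_distrib, Finset.sum_const, nsmul_eq_mul, card_univ, Fintype.card_fin]
  field_simp; ring

lemma Tw_abs {d : ℕ} {ε : ℝ} (hε : |ε| = 1) (g : (Fin d → ℤ) → ℝ) (x : Fin d → ℤ) : |Tw d ε g x| ≤ Tw d 1 (fun y => |g y|) x := by
  unfold Tw
  refine (abs_add_le _ _).trans (add_le_add ?_ ?_)
  · rw [abs_mul]; norm_num
  · refine (Finset.abs_sum_le_sum_abs _ _).trans (Finset.sum_le_sum (fun i _ => ?_))
    have : |ε / (4 * d)| = 1 / (4 * d) := by rw [abs_div, hε]; congr 1; exact abs_of_nonneg (by positivity)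
    refine (abs_add_le _ _).trans (le_of_eq ?_)
    rw [abs_mul, abs_mul, this]

lemma Tw_iter_abs {d : ℕ} {ε : ℝ} (hε : |ε| = 1) (g : (Fin d → ℤ) → ℝ) (k : ℕ) : ∀ x, |(Tw d ε)^[k] g x| ≤ (Tw d 1)^[k] (fun y => |g y|) x := by
  induction k with
  | zero => intro x; simp
  | succ k ih =>
    intro x
    rw [Function.iterate_succ_apply', Function.iterate_succ_apply']
    exact (Tw_abs hε _ x).trans (Tw_mono ih x)

lemma Tw_tsum {d : ℕ} (hd : 0 < d) (g : (Fin d → ℤ) → ℝ) (hg : g.support.Finite) : ∑' x, Tw d 1 g x = ∑' x, g x := by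
  have hs : Summable g := summable_of_hasFiniteSupport hg
  have h : (d : ℝ) ≠ 0 := by exact_mod_cast hd.ne'
  obtain ⟨S, hS⟩ := hs
  rw [hS.tsum_eq]
  have s0 : ∀ e : Fin d → ℤ, HasSum (fun x : Fin d → ℤ => g (x + e)) S := by
    intro e
    have := (Equiv.hasSum_iff (f := g) (a := S) (Equiv.addRight e)).2 hS
    exact this
  have s1 : ∀ i : Fin d, HasSum (fun x : Fin d → ℤ => g (x - Pi.single i 1)) S := by
    intro i
    have := s0 (-Pi.single i 1)
    simpa only [← sub_eq_add_neg] using this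
  have s2 : ∀ i : Fin d, HasSum (fun x : Fin d → ℤ => g (x + Pi.single i 1)) S := fun i => s0 _
  have t : ∀ i ∈ (univ : Finset (Fin d)), HasSum (fun x => (1 / (4 * d) * g (x - Pi.single i 1) + 1 / (4 * d) * g (x + Pi.single i 1) : ℝ)) (1 / (4 * d) * S + 1 / (4 * d) * S : ℝ) :=
    fun i _ => ((s1 i).mul_left _).add ((s2 i).mul_left _)
  have t2 : HasSum (Tw d 1 g) (1 / 2 * S + ∑ i : Fin d, (1 / (4 * d) * S + 1 / (4 * d) * S : ℝ)) := (hS.mul_left _).add (hasSum_sum t)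
  rw [t2.tsum_eq, Finset.sum_const, nsmul_eq_mul, card_univ, Fintype.card_fin]
  field_simp; ring

lemma Tw_supp {d : ℕ} (ε : ℝ) (g : (Fin d → ℤ) → ℝ) (hg : g.support.Finite) : (Tw d ε g).support.Finite := by
  set f : Alg d := AddMonoidAlgebra.ofCoeff (Finsupp.ofSupportFinite g hg)
  have : Tw d ε g = (Pw d ε * f).coeff := by
    funext x; rw [Pw_mul]; rfl
  rw [this]
  exact Finsupp.hasFiniteSupport _


lemma layer_cake {X : Type*} (s : Finset X) (f F : X → ℝ) (hf : ∀ x, 0 ≤ f x) (hF : ∀ x, 0 ≤ F x)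
    (h : ∀ l : ℝ, 0 < l → ∑ x ∈ s, (if l < F x then l else 0) ≤ ∑ x ∈ s, (if l < F x then f x else 0)) :
    ∑ x ∈ s, F x ^ 2 ≤ 4 * ∑ x ∈ s, f x ^ 2 := by
  set Λ := ∑ x ∈ s, F x with hΛ
  have hFΛ : ∀ x ∈ s, F x ≤ Λ := fun x hx => Finset.single_le_sum (fun y _ => hF y) hx
  have hset : ∀ x ∈ s, Set.Ioc 0 Λ ∩ Set.Iio (F x) = Set.Ioo 0 (F x) := by
    intro x hx
    ext l
    simp only [Set.mem_inter_iff, Set.mem_Ioc, Set.mem_Iio, Set.mem_Ioo]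
    constructor
    · rintro ⟨⟨a, b⟩, c⟩; exact ⟨a, c⟩
    · rintro ⟨a, c⟩; exact ⟨⟨a, c.le.trans (hFΛ x hx)⟩, c⟩
  have i1 : ∀ x ∈ s, ∫ l in Set.Ioc 0 Λ, (Set.Iio (F x)).indicator (fun l => l) l = F x ^ 2 / 2 := by
    intro x hx
    rw [MeasureTheory.setIntegral_indicator measurableSet_Iio, hset x hx, ← MeasureTheory.integral_Ioc_eq_integral_Ioo, ← intervalIntegral.integral_of_le (hF x), integral_id]
    ring
  have i2 : ∀ x ∈ s, ∫ l in Set.Ioc 0 Λ, (Set.Iio (F x)).indicator (fun _ => f x) l = f x * F x := by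
    intro x hx
    rw [MeasureTheory.setIntegral_indicator measurableSet_Iio, hset x hx, ← MeasureTheory.integral_Ioc_eq_integral_Ioo, ← intervalIntegral.integral_of_le (hF x), intervalIntegral.integral_const]
    simp [mul_comm]
  have int1 : ∀ x ∈ s, MeasureTheory.IntegrableOn ((Set.Iio (F x)).indicator (fun l : ℝ => l)) (Set.Ioc 0 Λ) := by
    intro x _
    apply MeasureTheory.IntegrableOn.indicator _ measurableSet_Iio
    exact (continuous_id.integrableOn_Icc).mono_set Set.Ioc_subset_Icc_self
  have int2 : ∀ x ∈ s, MeasureTheory.IntegrableOn ((Set.Iio (F x)).indicator (fun _ : ℝ => f x)) (Set.Ioc 0 Λ) := by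
    intro x _
    apply MeasureTheory.IntegrableOn.indicator _ measurableSet_Iio
    exact (continuous_const.integrableOn_Icc).mono_set Set.Ioc_subset_Icc_self
  have key : ∑ x ∈ s, F x ^ 2 / 2 ≤ ∑ x ∈ s, f x * F x := by
    rw [← Finset.sum_congr rfl i1, ← Finset.sum_congr rfl i2, ← MeasureTheory.integral_finsetSum s int1, ← MeasureTheory.integral_finsetSum s int2]
    apply MeasureTheory.setIntegral_mono_on
    · exact MeasureTheory.integrable_finsetSum s int1
    · exact MeasureTheory.integrable_finsetSum s int2
    · exact measurableSet_Ioc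
    · intro l hl
      have := h l hl.1
      simpa only [Set.indicator_apply, Set.mem_Iio] using this
  have h3 : ∑ x ∈ s, f x * F x ≤ ∑ x ∈ s, (f x ^ 2 + F x ^ 2 / 4) := by
    apply Finset.sum_le_sum
    intro x _
    nlinarith [sq_nonneg (f x - F x / 2)]
  rw [Finset.sum_add_distrib, ← Finset.sum_div] at h3
  rw [← Finset.sum_div] at key
  linarith

noncomputable def SK (d : ℕ) (f : (Fin d → ℤ) → ℝ) (K : ℕ) (x : Fin d → ℤ) : ℝ := ∑ k ∈ range K, (Tw d 1)^[k] f x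

lemma SK_succ {d : ℕ} (f : (Fin d → ℤ) → ℝ) (K : ℕ) (x : Fin d → ℤ) : SK d f (K + 1) x = f x + Tw d 1 (SK d f K) x := by
  unfold SK
  rw [Finset.sum_range_succ', add_comm]
  congr 1
  simp only [Function.iterate_succ_apply']
  unfold Tw
  simp only [Finset.mul_sum, Finset.sum_add_distrib]
  congr 1
  congr 1 <;> rw [Finset.sum_comm]

lemma Tw_iter_nonneg {d : ℕ} (f : (Fin d → ℤ) → ℝ) (hf : ∀ x, 0 ≤ f x) (k : ℕ) : ∀ x, 0 ≤ (Tw d 1)^[k] f x := by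
  induction k with
  | zero => exact hf
  | succ k ih =>
    intro x
    rw [Function.iterate_succ_apply']
    unfold Tw
    have := ih
    apply add_nonneg
    · have := ih x; positivity
    · apply Finset.sum_nonneg; intro i _
      have h1 := ih (x - Pi.single i 1)
      have h2 := ih (x + Pi.single i 1)
      positivity

lemma SK_supp {d : ℕ} (f : (Fin d → ℤ) → ℝ) (hf : f.support.Finite) (K : ℕ) : (SK d f K).support.Finite := by
  induction K with
  | zero => unfold SK; simp [Function.support]
  | succ K ih =>
    have : SK d f (K + 1) = fun x => f x + Tw d 1 (SK d f K) x := by funext x; exact SK_succ f K x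
    rw [this]
    exact (hf.union (Tw_supp 1 _ ih)).subset (Function.support_add _ _)

lemma garsia {d : ℕ} (hd : 0 < d) (f : (Fin d → ℤ) → ℝ) (hf : ∀ x, 0 ≤ f x) (K0 : ℕ) (s : Finset (Fin d → ℤ))
    (hs : ∀ K ≤ K0, ∀ x, x ∉ s → SK d f K x = 0) (l : ℝ) (hl : 0 < l) :
    ∑ x ∈ s, (if ∃ K ≤ K0, K * l < SK d f K x then l else 0) ≤ ∑ x ∈ s, (if ∃ K ≤ K0, K * l < SK d f K x then f x else 0) := by
  classical
  have hne : (range (K0 + 1)).Nonempty := ⟨0, by simp⟩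
  set H : (Fin d → ℤ) → ℝ := fun x => (range (K0 + 1)).sup' hne (fun K => SK d f K x - K * l) with hH
  have hle : ∀ K ≤ K0, ∀ x, SK d f K x - K * l ≤ H x := fun K hK x => Finset.le_sup' (fun K : ℕ => SK d f K x - K * l) (mem_range.2 (by omega))
  have hH0 : ∀ x, 0 ≤ H x := fun x => by
    have := hle 0 (Nat.zero_le _) x
    simpa [SK] using this
  have hex : ∀ x, ∃ K ≤ K0, H x = SK d f K x - K * l := by
    intro x
    obtain ⟨K, hK, h⟩ := Finset.exists_mem_eq_sup' hne (fun K : ℕ => SK d f K x - K * l)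
    exact ⟨K, by have := mem_range.1 hK; omega, h⟩
  have hnot : ∀ x, (¬ ∃ K ≤ K0, K * l < SK d f K x) → H x = 0 := by
    intro x hx
    obtain ⟨K, hK, h⟩ := hex x
    push Not at hx
    have := hx K hK
    exact le_antisymm (by linarith) (hH0 x)
  have hout : ∀ x, x ∉ s → ¬ ∃ K ≤ K0, K * l < SK d f K x := by
    rintro x hx ⟨K, hK, h⟩
    rw [hs K hK x hx] at h
    have : 0 ≤ K * l := by positivity
    linarith
  have hHs : H.support.Finite := by
    apply s.finite_toSet.subset
    intro x hx
    by_contra hxs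
    exact hx (hnot x (hout x hxs))
  set G : (Fin d → ℤ) → ℝ := fun x => if ∃ K ≤ K0, K * l < SK d f K x then f x - l else 0 with hG
  have hpt : ∀ x, H x ≤ G x + Tw d 1 H x := by
    intro x
    by_cases hx : ∃ K ≤ K0, K * l < SK d f K x
    · simp only [hG]
      rw [if_pos hx]
      obtain ⟨K, hK, h⟩ := hex x
      have hpos : 0 < H x := by
        obtain ⟨K', hK', h'⟩ := hx
        have := hle K' hK' x
        linarith
      rcases Nat.eq_zero_or_pos K with h0 | h0
      · subst h0; simp [SK] at h; linarith
      obtain ⟨K', rfl⟩ : ∃ K', K = K' + 1 := ⟨K - 1, by omega⟩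
      rw [h, SK_succ]
      have h1 : Tw d 1 (SK d f K') x ≤ Tw d 1 (fun y => H y + K' * l) x := by
        apply Tw_mono
        intro y
        have := hle K' (by omega) y
        linarith
      rw [Tw_add_const hd] at h1
      push_cast
      linarith
    · rw [hnot x hx]
      simp only [hG]
      rw [if_neg hx, zero_add]
      have := Tw_mono (g := fun _ => 0) hH0 x
      simpa [Tw] using this
  have hGs : ∀ x, x ∉ s → G x = 0 := fun x hx => if_neg (hout x hx)
  have hGsum : Summable G := summable_of_ne_finset_zero (s := s) hGs
  have hTs : Summable (Tw d 1 H) := summable_of_hasFiniteSupport (Tw_supp 1 H hHs)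
  have hts : ∑' x, H x ≤ ∑' x, (G x + Tw d 1 H x) := Summable.tsum_le_tsum hpt (summable_of_hasFiniteSupport hHs) (hGsum.add hTs)
  rw [Summable.tsum_add hGsum hTs, Tw_tsum hd H hHs, tsum_eq_sum (s := s) (fun x hx => hGs x hx)] at hts
  have : ∑ x ∈ s, G x = ∑ x ∈ s, (if ∃ K ≤ K0, K * l < SK d f K x then f x else 0) - ∑ x ∈ s, (if ∃ K ≤ K0, K * l < SK d f K x then l else 0) := by
    rw [← Finset.sum_sub_distrib]
    apply Finset.sum_congr rfl
    intro x _
    simp only [hG]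
    split_ifs <;> ring
  linarith

lemma maximal_erg {d : ℕ} (hd : 0 < d) (f : (Fin d → ℤ) → ℝ) (hf : ∀ x, 0 ≤ f x) (s0 : Finset (Fin d → ℤ)) (hs0 : ∀ x, x ∉ s0 → f x = 0) (K0 : ℕ) (s1 : Finset (Fin d → ℤ)) 
    (F : (Fin d → ℤ) → ℝ) (hF0 : ∀ x, 0 ≤ F x) (hF : ∀ x, ∃ K ≤ K0, F x = SK d f K x / K) (hF2 : ∀ x, ∀ K ≤ K0, SK d f K x / K ≤ F x) :
    ∑ x ∈ s1, F x ^ 2 ≤ 4 * ∑ x ∈ s0, f x ^ 2 := by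
  classical
  have hfs : f.support.Finite := s0.finite_toSet.subset (fun x hx => by by_contra h; exact hx (hs0 x h))
  set s := s1 ∪ s0 ∪ (range (K0 + 1)).biUnion (fun K => (SK_supp f hfs K).toFinset) with hs
  have h1 : ∑ x ∈ s, F x ^ 2 ≤ 4 * ∑ x ∈ s, f x ^ 2 := by
    apply layer_cake s f F hf hF0
    intro l hl
    have := garsia hd f hf K0 s (by
      intro K hK x hx
      by_contra h
      apply hx
      rw [hs, mem_union, mem_biUnion]
      exact Or.inr ⟨K, mem_range.2 (by omega), by simpa using h⟩) l hl
    have e : ∀ x, (∃ K ≤ K0, K * l < SK d f K x) ↔ l < F x := by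
      intro x
      constructor
      · rintro ⟨K, hK, h⟩
        refine lt_of_lt_of_le ?_ (hF2 x K hK)
        rcases Nat.eq_zero_or_pos K with h0 | h0
        · subst h0; simp [SK] at h
        · have : (0 : ℝ) < K := by exact_mod_cast h0
          rw [lt_div_iff₀ this]; linarith
      · intro h
        obtain ⟨K, hK, h2⟩ := hF x
        refine ⟨K, hK, ?_⟩
        rcases Nat.eq_zero_or_pos K with h0 | h0
        · subst h0; simp at h2; linarith
        · have : (0 : ℝ) < K := by exact_mod_cast h0
          rw [h2, lt_div_iff₀ this] at h; linarith
    simp only [e] at this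
    exact this
  have h2 : ∑ x ∈ s1, F x ^ 2 ≤ ∑ x ∈ s, F x ^ 2 := by
    apply Finset.sum_le_sum_of_subset_of_nonneg
    · intro x hx; simp [hs, hx]
    · intro x _ _; exact sq_nonneg _
  have h3 : ∑ x ∈ s0, f x ^ 2 = ∑ x ∈ s, f x ^ 2 := by
    apply Finset.sum_subset
    · intro x hx; simp [hs, hx]
    · intro x _ hx; rw [hs0 x hx]; simp
  linarith

/-- The key ℓ² estimate for finitely supported functions. -/
lemma ell2_fin {q : ℝ} (hq : 2 ≤ q) : ∃ C : ℝ, 0 ≤ C ∧ ∀ d : ℕ, 0 < d → ∀ (m : ℕ) (f : (Fin d → ℤ) → ℝ), (∀ x, 0 ≤ f x) → ∀ (s0 : Finset (Fin d → ℤ)), (∀ x, x ∉ s0 → f x = 0) → ∀ s1 : Finset (Fin d → ℤ),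
    ∀ ν : (Fin d → ℤ) → ℕ, (∀ x, ν x < m) →
    ∑ x ∈ s1, ((∑ y ∈ Bl q d ((2 ^ ν x) ^ q), f (x - y)) / (Bl q d ((2 ^ ν x) ^ q)).card) ^ 2 ≤ C * ∑ x ∈ s0, f x ^ 2 := by
  obtain ⟨C, hC, hsq⟩ := En_square hq
  refine ⟨2 * C + 32, by linarith, fun d hd m f hf s0 hs0 s1 ν hν => ?_⟩
  classical
  have hfs : f.support.Finite := s0.finite_toSet.subset (fun x hx => by by_contra h; exact hx (hs0 x h))
  set fa : Alg d := AddMonoidAlgebra.ofCoeff (Finsupp.ofSupportFinite f hfs) with hfa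
  have hfc : ∀ x, fa.coeff x = f x := fun x => rfl
  have hfc' : (fa.coeff : (Fin d → ℤ) → ℝ) = f := rfl
  have h1 := hsq d hd m fa s0 (by
    intro x hx
    by_contra h
    rw [Finsupp.mem_support_iff] at hx
    exact hx (hs0 x h)) s1
  simp only [hfc] at h1
  set K0 := ∑ n ∈ range m, Kn q d n with hK0
  have hne : (range (K0 + 1)).Nonempty := ⟨0, by simp⟩
  set F : (Fin d → ℤ) → ℝ := fun x => (range (K0 + 1)).sup' hne (fun K => SK d f K x / K) with hFdef
  have hle : ∀ x, ∀ K ≤ K0, SK d f K x / K ≤ F x := fun x K hK => Finset.le_sup' (fun K : ℕ => SK d f K x / K) (mem_range.2 (by omega))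
  have hF0 : ∀ x, 0 ≤ F x := fun x => by
    have := hle x 0 (Nat.zero_le _)
    simpa using this
  have hex : ∀ x, ∃ K ≤ K0, F x = SK d f K x / K := by
    intro x
    obtain ⟨K, hK, h⟩ := Finset.exists_mem_eq_sup' hne (fun K : ℕ => SK d f K x / K)
    exact ⟨K, by have := mem_range.1 hK; omega, h⟩
  have h2 := maximal_erg hd f hf s0 hs0 K0 s1 F hF0 hex hle
  have hpt : ∀ x, ((∑ y ∈ Bl q d ((2 ^ ν x) ^ q), f (x - y)) / (Bl q d ((2 ^ ν x) ^ q)).card) ^ 2 ≤ 2 * ∑ n ∈ range m, (En q d n * fa).coeff x ^ 2 + 8 * F x ^ 2 := by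
    intro x
    set n := ν x
    have e1 : (∑ y ∈ Bl q d ((2 ^ n) ^ q), f (x - y)) / (Bl q d ((2 ^ n) ^ q)).card = (Mn q d ((2 ^ n) ^ q) * fa).coeff x := (Mn_mul _ fa x).symm
    have hKn : Kn q d n ≤ K0 := Finset.single_le_sum (f := fun n => Kn q d n) (fun _ _ => Nat.zero_le _) (mem_range.2 (hν x))
    have e2 : (Mn q d ((2 ^ n) ^ q) * fa).coeff x = (En q d n * fa).coeff x + (AK d 1 (Kn q d n) * fa).coeff x + alp q d n * (AK d (-1) (Kn q d n) * fa).coeff x := by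
      have : Mn q d ((2 ^ n) ^ q) * fa = En q d n * fa + AK d 1 (Kn q d n) * fa + alp q d n • (AK d (-1) (Kn q d n) * fa) := by
        unfold En
        rw [← smul_mul_assoc, ← add_mul, ← add_mul]
        congr 1
        abel
      rw [this]
      rfl
    have b1 : |(AK d 1 (Kn q d n) * fa).coeff x| ≤ F x := by
      rw [AK_mul, hfc', abs_of_nonneg]
      · exact hle x _ hKn
      · have := fun k => Tw_iter_nonneg f hf k x
        exact div_nonneg (Finset.sum_nonneg (fun k _ => this k)) (Nat.cast_nonneg _)
    have b2 : |(AK d (-1) (Kn q d n) * fa).coeff x| ≤ F x := by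
      rw [AK_mul, hfc', abs_div, Nat.abs_cast]
      refine le_trans ?_ (hle x _ hKn)
      apply div_le_div_of_nonneg_right _ (Nat.cast_nonneg _)
      refine (Finset.abs_sum_le_sum_abs _ _).trans (Finset.sum_le_sum (fun k _ => ?_))
      have := Tw_iter_abs (ε := -1) (by simp) f k x
      have e : (fun y => |f y|) = f := by funext y; exact abs_of_nonneg (hf y)
      rwa [e] at this
    have b3 : |alp q d n * (AK d (-1) (Kn q d n) * fa).coeff x| ≤ F x := by
      rw [abs_mul]
      exact (mul_le_of_le_one_left (abs_nonneg _) (alph_le hq)).trans b2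
    have b4 : (En q d n * fa).coeff x ^ 2 ≤ ∑ n ∈ range m, (En q d n * fa).coeff x ^ 2 :=
      Finset.single_le_sum (f := fun n => (En q d n * fa).coeff x ^ 2) (fun _ _ => sq_nonneg _) (mem_range.2 (hν x))
    rw [e1, e2]
    set a := (En q d n * fa).coeff x
    set b := (AK d 1 (Kn q d n) * fa).coeff x
    set c := alp q d n * (AK d (-1) (Kn q d n) * fa).coeff x
    have b5 : |b + c| ≤ 2 * F x := (abs_add_le _ _).trans (by linarith)
    have b6 : (b + c) ^ 2 ≤ (2 * F x) ^ 2 := by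
      rw [← sq_abs]; gcongr
    nlinarith [sq_nonneg (a - (b + c))]
  calc _ ≤ ∑ x ∈ s1, (2 * ∑ n ∈ range m, (En q d n * fa).coeff x ^ 2 + 8 * F x ^ 2) := Finset.sum_le_sum (fun x _ => hpt x)
    _ = 2 * ∑ n ∈ range m, ∑ x ∈ s1, (En q d n * fa).coeff x ^ 2 + 8 * ∑ x ∈ s1, F x ^ 2 := by
        rw [Finset.sum_add_distrib, ← Finset.mul_sum, ← Finset.mul_sum, Finset.sum_comm]
    _ ≤ _ := by linarith


lemma latticeBall_eq {q : ℝ} (hq : 2 ≤ q) (d : ℕ) (n : ℕ) :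
    latticeBall q d ((2 : ℝ) ^ n) = Bl q d (((2 : ℝ) ^ n) ^ q) := by
  classical
  ext x
  rw [mem_Bl hq]
  unfold latticeBall
  rw [Finset.mem_filter, and_iff_right_iff_imp]
  intro h
  have hb : ∀ i, |(x i : ℝ)| ≤ (2 : ℝ) ^ n := by
    intro i
    have h1 : |(x i : ℝ)| ^ q ≤ ((2 : ℝ) ^ n) ^ q :=
      (Finset.single_le_sum (f := fun i => |(x i : ℝ)| ^ q)
        (fun j _ => rpow_q_nonneg q (x j)) (Finset.mem_univ i)).trans h
    exact (Real.rpow_le_rpow_iff (abs_nonneg _) (by positivity) (by linarith)).1 h1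
  have hb2 : ∀ i, |x i| ≤ (⌈(2 : ℝ) ^ n⌉₊ : ℤ) := by
    intro i
    have := (hb i).trans (Nat.le_ceil _)
    exact_mod_cast this
  rw [Finset.mem_Icc]
  exact ⟨fun i => (abs_le.1 (hb2 i)).1, fun i => (abs_le.1 (hb2 i)).2⟩

lemma norm_avgOp_le {q : ℝ} (hq : 2 ≤ q) (d n : ℕ) (f : (Fin d → ℤ) → ℂ) (x : Fin d → ℤ) :
    ‖avgOp q d ((2 : ℝ) ^ n) f x‖ ≤
      (∑ y ∈ Bl q d ((2 ^ n) ^ q), ‖f (x - y)‖) / (Bl q d ((2 ^ n) ^ q)).card := by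
  unfold avgOp
  rw [latticeBall_eq hq, norm_mul, norm_inv, Complex.norm_natCast, div_eq_inv_mul]
  exact mul_le_mul_of_nonneg_left (norm_sum_le _ _) (by positivity)

lemma norm_avgOp_rpow_le {q : ℝ} (hq : 2 ≤ q) (d n : ℕ) (f : (Fin d → ℤ) → ℂ) (x : Fin d → ℤ)
    {r : ℝ} (hr : 2 ≤ r) :
    ‖avgOp q d ((2 : ℝ) ^ n) f x‖ ^ r ≤
      ((∑ y ∈ Bl q d ((2 ^ n) ^ q), ‖f (x - y)‖ ^ (r / 2)) / (Bl q d ((2 ^ n) ^ q)).card) ^ 2 := by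
  have hc : (0 : ℝ) < (Bl q d (((2 : ℝ) ^ n) ^ q)).card := by
    exact_mod_cast Bl_card_pos hq (by positivity)
  have hJ := Real.rpow_arith_mean_le_arith_mean_rpow (Bl q d (((2 : ℝ) ^ n) ^ q))
    (fun _ => ((Bl q d (((2 : ℝ) ^ n) ^ q)).card : ℝ)⁻¹) (fun y => ‖f (x - y)‖)
    (fun _ _ => by positivity) (by rw [Finset.sum_const, nsmul_eq_mul, mul_inv_cancel₀ hc.ne'])
    (fun _ _ => norm_nonneg _) (p := r / 2) (by linarith)
  rw [← Finset.mul_sum, ← Finset.mul_sum, ← div_eq_inv_mul, ← div_eq_inv_mul] at hJ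
  have h1 : ‖avgOp q d ((2 : ℝ) ^ n) f x‖ ^ r = (‖avgOp q d ((2 : ℝ) ^ n) f x‖ ^ (r / 2)) ^ 2 := by
    generalize avgOp q d ((2 : ℝ) ^ n) f x = z
    rw [← Real.rpow_natCast, ← Real.rpow_mul (norm_nonneg _)]
    congr 1; push_cast; ring
  rw [h1]
  refine pow_le_pow_left₀ (by positivity) (le_trans ?_ hJ) 2
  exact Real.rpow_le_rpow (norm_nonneg _) (norm_avgOp_le hq d n f x) (by linarith)

lemma sum_iSup_le {X : Type*} (b : ℕ → X → ENNReal) (K : ENNReal) (s : Finset X) :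
    ∀ c : ENNReal, (∀ ν : X → ℕ, c + ∑ x ∈ s, b (ν x) x ≤ K) → c + ∑ x ∈ s, ⨆ n, b n x ≤ K := by
  classical
  induction s using Finset.induction_on with
  | empty => intro c h; simpa using h (fun _ => 0)
  | insert a s ha ih =>
    intro c h
    rw [Finset.sum_insert ha, add_left_comm, ENNReal.iSup_add]
    refine iSup_le fun n => ?_
    rw [← add_assoc]
    refine ih _ fun ν => ?_
    have := h (Function.update ν a n)
    rw [Finset.sum_insert ha, Function.update_self, add_left_comm, ← add_assoc] at this
    refine le_trans (le_of_eq ?_) this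
    congr 1
    refine Finset.sum_congr rfl fun x hx => ?_
    rw [Function.update_of_ne]
    rintro rfl; exact ha hx

lemma coe_nnnorm_rpow (z : ℂ) {r : ℝ} (hr : 0 ≤ r) :
    ((‖z‖₊ : ENNReal)) ^ r = ENNReal.ofReal (‖z‖ ^ r) := by
  rw [← ENNReal.ofReal_rpow_of_nonneg (norm_nonneg _) hr, ofReal_norm]; rfl

lemma ellr_main {q : ℝ} (hq : 2 ≤ q) : ∃ C : ℝ, 0 ≤ C ∧ ∀ r : ℝ, 2 ≤ r → ∀ d : ℕ, 0 < d →
    ∀ f : (Fin d → ℤ) → ℂ,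
    ∑' x, (⨆ n : ℕ, (‖avgOp q d ((2 : ℝ) ^ n) f x‖₊ : ENNReal)) ^ r ≤
      ENNReal.ofReal C * ∑' x, (‖f x‖₊ : ENNReal) ^ r := by
  classical
  obtain ⟨C, hC, h⟩ := ell2_fin hq
  refine ⟨C, hC, fun r hr d hd f => ?_⟩
  have hr0 : 0 < r := by linarith
  have hsup : ∀ x, (⨆ n : ℕ, (‖avgOp q d ((2 : ℝ) ^ n) f x‖₊ : ENNReal)) ^ r =
      ⨆ n : ℕ, (‖avgOp q d ((2 : ℝ) ^ n) f x‖₊ : ENNReal) ^ r := fun x =>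
    (ENNReal.orderIsoRpow r hr0).map_iSup _
  simp_rw [hsup]
  rw [ENNReal.tsum_eq_iSup_sum]
  refine iSup_le fun s1 => ?_
  have key := sum_iSup_le (fun n x => (‖avgOp q d ((2 : ℝ) ^ n) f x‖₊ : ENNReal) ^ r)
    (ENNReal.ofReal C * ∑' x, (‖f x‖₊ : ENNReal) ^ r) s1 0
  rw [zero_add] at key
  refine key fun ν0 => ?_
  rw [zero_add]
  set ν : (Fin d → ℤ) → ℕ := fun x => if x ∈ s1 then ν0 x else 0 with hν
  set m := s1.sup ν0 + 1 with hm
  have hνm : ∀ x, ν x < m := by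
    intro x
    simp only [hν, hm]
    split_ifs with hx
    · exact Nat.lt_succ_of_le (Finset.le_sup hx)
    · omega
  set s0 : Finset (Fin d → ℤ) := s1.biUnion fun x => (Bl q d (((2 : ℝ) ^ ν x) ^ q)).image fun y => x - y with hs0
  set g : (Fin d → ℤ) → ℝ := fun x => if x ∈ s0 then ‖f x‖ ^ (r / 2) else 0 with hg
  have hg0 : ∀ x, 0 ≤ g x := by
    intro x; simp only [hg]; split_ifs <;> positivity
  have hmain := h d hd m g hg0 s0 (fun x hx => by simp [hg, hx]) s1 ν hνm
  have hR : ∑ x ∈ s1, ‖avgOp q d ((2 : ℝ) ^ ν0 x) f x‖ ^ r ≤ C * ∑ x ∈ s0, ‖f x‖ ^ r := by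
    have e : ∑ x ∈ s0, g x ^ 2 = ∑ x ∈ s0, ‖f x‖ ^ r := by
      refine Finset.sum_congr rfl fun x hx => ?_
      simp only [hg, if_pos hx]
      rw [← Real.rpow_natCast, ← Real.rpow_mul (norm_nonneg _)]
      congr 1; push_cast; ring
    rw [← e]
    refine le_trans (Finset.sum_le_sum fun x hx => ?_) hmain
    have e1 : ν x = ν0 x := by simp [hν, hx]
    refine (norm_avgOp_rpow_le hq d (ν0 x) f x hr).trans (le_of_eq ?_)
    rw [← e1]
    congr 2
    refine Finset.sum_congr rfl fun y hy => ?_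
    have : x - y ∈ s0 := by
      rw [hs0, Finset.mem_biUnion]
      exact ⟨x, hx, Finset.mem_image_of_mem _ hy⟩
    simp only [hg, if_pos this]
  calc ∑ x ∈ s1, (‖avgOp q d ((2 : ℝ) ^ ν0 x) f x‖₊ : ENNReal) ^ r
      = ENNReal.ofReal (∑ x ∈ s1, ‖avgOp q d ((2 : ℝ) ^ ν0 x) f x‖ ^ r) := by
        rw [ENNReal.ofReal_sum_of_nonneg (fun _ _ => by positivity)]
        exact Finset.sum_congr rfl fun x _ => coe_nnnorm_rpow _ hr0.le
    _ ≤ ENNReal.ofReal (C * ∑ x ∈ s0, ‖f x‖ ^ r) := ENNReal.ofReal_le_ofReal hR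
    _ = ENNReal.ofReal C * ∑ x ∈ s0, (‖f x‖₊ : ENNReal) ^ r := by
        rw [ENNReal.ofReal_mul hC, ENNReal.ofReal_sum_of_nonneg (fun _ _ => by positivity)]
        congr 1
        exact Finset.sum_congr rfl fun x _ => (coe_nnnorm_rpow _ hr0.le).symm
    _ ≤ _ := by gcongr; exact ENNReal.sum_le_tsum _

lemma sup_main {q : ℝ} (hq : 2 ≤ q) (d : ℕ) (f : (Fin d → ℤ) → ℂ) (n : ℕ) (x : Fin d → ℤ) :
    (‖avgOp q d ((2 : ℝ) ^ n) f x‖₊ : ENNReal) ≤ ⨆ x, (‖f x‖₊ : ENNReal) := by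
  by_cases htop : (⨆ x, (‖f x‖₊ : ENNReal)) = ⊤
  · rw [htop]; exact le_top
  have hle : ∀ z, ‖f z‖ ≤ (⨆ x, (‖f x‖₊ : ENNReal)).toReal := by
    intro z
    have := ENNReal.toReal_mono htop (le_iSup (fun x => (‖f x‖₊ : ENNReal)) z)
    simpa using this
  have hc : (0 : ℝ) < (Bl q d (((2 : ℝ) ^ n) ^ q)).card := by
    exact_mod_cast Bl_card_pos hq (by positivity)
  have h2 : ‖avgOp q d ((2 : ℝ) ^ n) f x‖ ≤ (⨆ x, (‖f x‖₊ : ENNReal)).toReal := by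
    refine (norm_avgOp_le hq d n f x).trans ?_
    rw [div_le_iff₀ hc, mul_comm, ← nsmul_eq_mul]
    exact Finset.sum_le_card_nsmul _ _ _ fun y _ => hle _
  rw [← ENNReal.ofReal_toReal htop]
  calc (‖avgOp q d ((2 : ℝ) ^ n) f x‖₊ : ENNReal) = ENNReal.ofReal ‖avgOp q d ((2 : ℝ) ^ n) f x‖ := by
        rw [ofReal_norm]; rfl
    _ ≤ _ := ENNReal.ofReal_le_ofReal h2


end Aux

theorem stmt1 (q : ℝ) (hq : 2 ≤ q) :
    ∃ C : ℝ≥0, 0 < C ∧ ∀ p : ℝ≥0∞, 2 ≤ p →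
      ∀ d : ℕ, 0 < d → ∀ f : (Fin d → ℤ) → ℂ,
      lpNorm p (fun x => ⨆ n : ℕ, (‖avgOp q d ((2 : ℝ) ^ n) f x‖₊ : ℝ≥0∞))
        ≤ (C : ℝ≥0∞) * lpNorm p (fun x => (‖f x‖₊ : ℝ≥0∞)) := by
  obtain ⟨C, hC, h⟩ := ellr_main hq
  refine ⟨max 1 C.toNNReal, lt_of_lt_of_le one_pos (le_max_left _ _), fun p hp d hd f => ?_⟩
  have h1C : (1 : ℝ≥0∞) ≤ ((max 1 C.toNNReal : ℝ≥0) : ℝ≥0∞) := by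
    exact_mod_cast le_max_left (1 : ℝ≥0) C.toNNReal
  unfold lpNorm
  split_ifs with hpt
  · refine iSup_le fun x => iSup_le fun n => (sup_main hq d f n x).trans ?_
    exact le_mul_of_one_le_left zero_le h1C
  · have hr : 2 ≤ p.toReal := by
      have := ENNReal.toReal_mono hpt hp
      simpa using this
    have hr0 : 0 < p.toReal := by linarith
    have hi : 0 ≤ 1 / p.toReal := by positivity
    refine (ENNReal.rpow_le_rpow (h p.toReal hr d hd f) hi).trans ?_
    rw [ENNReal.mul_rpow_of_nonneg _ _ hi]
    refine mul_le_mul_left ?_ _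
    have h2 : ENNReal.ofReal C ≤ ((max 1 C.toNNReal : ℝ≥0) : ℝ≥0∞) := by
      unfold ENNReal.ofReal
      exact_mod_cast le_max_right (1 : ℝ≥0) C.toNNReal
    refine (ENNReal.rpow_le_rpow h2 hi).trans ?_
    have h3 : 1 / p.toReal ≤ 1 := by
      rw [div_le_one hr0]; linarith
    exact (ENNReal.rpow_le_rpow_of_exponent_le h1C h3).trans (by rw [ENNReal.rpow_one])
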